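/- arXiv:1309.6506 — 7 statements merged into one kernel-verified Lean document; each statement's English description precedes it below -/
import Mathlib

section
/- For all fixed integers r ≥ 2, q ≥ −r+1 and k ≥ r+q+1, one has ex(n, H^{(r)}(k,q)) = Ω(n^{r−1+(q+r)/(k−1)}); precisely, there exist a real constant c > 0 and an integer n₀ such that for every integer n ≥ n₀ there exists an H^{(r)}(k,q)-free r-uniform hypergraph on n vertices with at least c·n^{r−1+(q+r)/(k−1)} edges. -/
/-- weight identity -/
lemma weight_superset {α : Type*} [DecidableEq α] (X T : Finset α) (hT : T ⊆ X) (p : ℝ) :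
    ∑ S ∈ X.powerset, (p ^ S.card * (1 - p) ^ (X \ S).card) * (if T ⊆ S then 1 else 0)
      = p ^ T.card := by
  have h := Finset.prod_add (fun _ : α => p) (fun a => if a ∈ T then 0 else 1 - p) X
  have h1 : ∏ a ∈ X, (p + if a ∈ T then 0 else 1 - p) = p ^ T.card := by
    have : ∀ a ∈ X, (p + if a ∈ T then 0 else 1 - p) = if a ∈ T then p else 1 := by
      intro a _
      split_ifs <;> ring
    rw [Finset.prod_congr rfl this, Finset.prod_ite, Finset.prod_const, Finset.prod_const_one,
      mul_one, Finset.filter_mem_eq_inter, Finset.inter_eq_right.2 hT]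
  rw [← h1, h]
  refine Finset.sum_congr rfl fun S hS => ?_
  rw [Finset.prod_const, mul_assoc]
  congr 1
  split_ifs with hTS
  · rw [mul_one, ← Finset.prod_const]
    refine Finset.prod_congr rfl fun a ha => ?_
    rw [if_neg]
    intro haT
    exact (Finset.mem_sdiff.1 ha).2 (hTS haT)
  · rw [mul_zero]
    obtain ⟨a, haT, haS⟩ := Finset.not_subset.1 hTS
    refine (Finset.prod_eq_zero (i := a) (Finset.mem_sdiff.2 ⟨hT haT, haS⟩) ?_).symm
    rw [if_pos haT]

lemma exists_good {α : Type*} [DecidableEq α] (X : Finset α) (B : Finset (Finset α))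
    (hB : ∀ T ∈ B, T ⊆ X) (p : ℝ) (hp0 : 0 ≤ p) (hp1 : p ≤ 1) :
    ∃ S ⊆ X, p * X.card - ∑ T ∈ B, p ^ T.card ≤
      (S.card : ℝ) - ((B.filter (fun T => T ⊆ S)).card : ℝ) := by
  set w : Finset α → ℝ := fun S => p ^ S.card * (1 - p) ^ (X \ S).card with hw
  have hw0 : ∀ S, 0 ≤ w S := fun S =>
    mul_nonneg (pow_nonneg hp0 _) (pow_nonneg (by linarith) _)
  have hsum1 : ∑ S ∈ X.powerset, w S = 1 := by
    have := weight_superset X ∅ (Finset.empty_subset _) p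
    simpa using this
  have hcard : ∑ S ∈ X.powerset, w S * (S.card : ℝ) = p * X.card := by
    have : ∀ S ∈ X.powerset, w S * (S.card : ℝ) =
        ∑ a ∈ X, w S * (if {a} ⊆ S then 1 else 0) := by
      intro S hS
      rw [← Finset.mul_sum]
      congr 1
      simp only [Finset.singleton_subset_iff]
      rw [Finset.sum_boole, Finset.filter_mem_eq_inter,
        Finset.inter_eq_right.2 (Finset.mem_powerset.1 hS)]
    rw [Finset.sum_congr rfl this, Finset.sum_comm]
    rw [Finset.sum_congr rfl (fun a ha =>
      weight_superset X {a} (Finset.singleton_subset_iff.2 ha) p)]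
    simp [mul_comm]
  have hbad : ∑ S ∈ X.powerset, w S * ((B.filter (fun T => T ⊆ S)).card : ℝ)
      = ∑ T ∈ B, p ^ T.card := by
    have : ∀ S ∈ X.powerset, w S * ((B.filter (fun T => T ⊆ S)).card : ℝ) =
        ∑ T ∈ B, w S * (if T ⊆ S then 1 else 0) := by
      intro S hS
      rw [← Finset.mul_sum, Finset.sum_boole]
    rw [Finset.sum_congr rfl this, Finset.sum_comm]
    exact Finset.sum_congr rfl (fun T hT => weight_superset X T (hB T hT) p)
  by_contra! hcon
  set A := p * X.card - ∑ T ∈ B, p ^ T.card with hA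
  have hz : ∑ S ∈ X.powerset, w S *
      (A - ((S.card : ℝ) - ((B.filter (fun T => T ⊆ S)).card : ℝ))) = 0 := by
    simp only [mul_sub, Finset.sum_sub_distrib, hcard, hbad, ← Finset.sum_mul, hsum1]
    rw [hA]; ring
  have hz' := (Finset.sum_eq_zero_iff_of_nonneg (fun S hS => mul_nonneg (hw0 S)
    (by have := hcon S (Finset.mem_powerset.1 hS); linarith))).1 hz
  have : ∑ S ∈ X.powerset, w S = 0 := by
    refine Finset.sum_eq_zero fun S hS => ?_
    rcases mul_eq_zero.1 (hz' S hS) with h | h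
    · exact h
    · have := hcon S (Finset.mem_powerset.1 hS)
      linarith
  linarith

lemma deletion {α : Type*} [DecidableEq α] [Nonempty α] (X : Finset α) (B : Finset (Finset α))
    (hB : ∀ T ∈ B, T ⊆ X) (hne : ∀ T ∈ B, T.Nonempty) (p : ℝ) (hp0 : 0 ≤ p) (hp1 : p ≤ 1) :
    ∃ E ⊆ X, (∀ T ∈ B, ¬ T ⊆ E) ∧ p * X.card - ∑ T ∈ B, p ^ T.card ≤ (E.card : ℝ) := by
  obtain ⟨S, hSX, hS⟩ := exists_good X B hB p hp0 hp1
  have : ∀ T : Finset α, ∃ a, T ∈ B → a ∈ T := by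
    intro T
    by_cases h : T ∈ B
    · obtain ⟨a, ha⟩ := hne T h
      exact ⟨a, fun _ => ha⟩
    · exact ⟨Classical.arbitrary α, fun h' => absurd h' h⟩
  choose g hg using this
  set R := (B.filter (fun T => T ⊆ S)).image g
  refine ⟨S \ R, Finset.sdiff_subset.trans hSX, ?_, ?_⟩
  · intro T hT hTE
    have h1 := hTE (hg T hT)
    have h2 : g T ∈ R := Finset.mem_image_of_mem _
      (Finset.mem_filter.2 ⟨hT, hTE.trans Finset.sdiff_subset⟩)
    exact (Finset.mem_sdiff.1 h1).2 h2
  · have h1 : R.card ≤ (B.filter (fun T => T ⊆ S)).card := Finset.card_image_le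
    have h2 : S.card ≤ R.card + (S \ R).card := by
      have := Finset.le_card_sdiff R S
      omega
    have h1' : (R.card : ℝ) ≤ ((B.filter (fun T => T ⊆ S)).card : ℝ) := by exact_mod_cast h1
    have h2' : (S.card : ℝ) ≤ R.card + ((S \ R).card : ℝ) := by exact_mod_cast h2
    linarith

lemma count_bad (n m : ℕ) (B : Finset (Finset (Finset (Fin n))))
    (hB : ∀ T ∈ B, (T.biUnion id).Nonempty ∧ (T.biUnion id).card ≤ m) :
    B.card ≤ n ^ m * 2 ^ (2 ^ m) := by
  have hsub : B ⊆ (Finset.univ : Finset (Fin m → Fin n)).biUnion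
      (fun f => (Finset.univ.image f).powerset.powerset) := by
    intro T hT
    obtain ⟨⟨w, hw⟩, hc⟩ := hB T hT
    set W := T.biUnion id with hW
    let e := W.equivFin.symm
    let f : Fin m → Fin n := fun j => if h : j.1 < W.card then (e ⟨j.1, h⟩).1 else w
    refine Finset.mem_biUnion.2 ⟨f, Finset.mem_univ _, ?_⟩
    rw [Finset.mem_powerset]
    intro t ht
    rw [Finset.mem_powerset]
    intro a ha
    have haW : a ∈ W := Finset.mem_biUnion.2 ⟨t, ht, ha⟩
    let j := W.equivFin ⟨a, haW⟩
    refine Finset.mem_image.2 ⟨⟨j.1, lt_of_lt_of_le j.2 hc⟩, Finset.mem_univ _, ?_⟩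
    simp [f, j, e]
  refine (Finset.card_le_card hsub).trans ?_
  refine (Finset.card_biUnion_le_card_mul _ _ (2 ^ (2 ^ m)) ?_).trans ?_
  · intro f _
    rw [Finset.card_powerset, Finset.card_powerset]
    have : (Finset.univ.image f).card ≤ m := by
      refine Finset.card_image_le.trans ?_
      simp
    gcongr <;> norm_num
  · simp

lemma choose_lower (n r : ℕ) (h : 2 * r ≤ n) :
    (n : ℝ) ^ r / (2 ^ r * (r.factorial : ℝ)) ≤ (n.choose r : ℝ) := by
  refine le_trans ?_ (Nat.pow_le_choose (α := ℝ) r n)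
  rw [← div_div, ← div_pow]
  gcongr
  rw [div_le_iff₀ (by norm_num)]
  have : n ≤ (n + 1 - r) * 2 := by omega
  exact_mod_cast this

lemma sum_bad (r k s n : ℕ) (hsk : s + 1 ≤ k) (B : Finset (Finset (Finset (Fin n)))) (p M : ℝ)
    (hp0 : 0 ≤ p)
    (hB : ∀ T ∈ B, s + 1 ≤ T.card ∧ T.card ≤ k ∧ (T.biUnion id).Nonempty ∧
      (T.biUnion id).card + s + 1 ≤ T.card + r)
    (hM : ∀ i, s + 1 ≤ i → i ≤ k → (n : ℝ) ^ (i + r - s - 1) * p ^ i ≤ M) :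
    ∑ T ∈ B, p ^ T.card ≤ k * (2 ^ (2 ^ (k + r)) * M) := by
  have hmaps : ∀ T ∈ B, T.card ∈ Finset.Icc (s + 1) k := fun T hT =>
    Finset.mem_Icc.2 ⟨(hB T hT).1, (hB T hT).2.1⟩
  rw [← Finset.sum_fiberwise_of_maps_to hmaps]
  have hM0 : 0 ≤ M := le_trans (by positivity) (hM k hsk le_rfl)
  have hstep : ∀ i ∈ Finset.Icc (s + 1) k, ∑ T ∈ B.filter (fun T => T.card = i), p ^ T.card
      ≤ 2 ^ (2 ^ (k + r)) * M := by
    intro i hi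
    obtain ⟨hi1, hi2⟩ := Finset.mem_Icc.1 hi
    have h1 : ∑ T ∈ B.filter (fun T => T.card = i), p ^ T.card
        = ((B.filter (fun T => T.card = i)).card : ℝ) * p ^ i := by
      rw [Finset.sum_congr rfl (fun T hT => by rw [(Finset.mem_filter.1 hT).2] :
        ∀ T ∈ B.filter (fun T => T.card = i), p ^ T.card = p ^ i)]
      simp
    rw [h1]
    have h2 : (B.filter (fun T => T.card = i)).card ≤
        n ^ (i + r - s - 1) * 2 ^ (2 ^ (i + r - s - 1)) := by
      refine count_bad n _ _ ?_
      intro T hT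
      obtain ⟨hT1, hT2⟩ := Finset.mem_filter.1 hT
      obtain ⟨_, _, h3, h4⟩ := hB T hT1
      exact ⟨h3, by omega⟩
    have h3 : n ^ (i + r - s - 1) * 2 ^ (2 ^ (i + r - s - 1)) ≤
        n ^ (i + r - s - 1) * 2 ^ (2 ^ (k + r)) := by
      gcongr
      · norm_num
      · norm_num
      · omega
    have h4 : ((B.filter (fun T => T.card = i)).card : ℝ) ≤
        (n : ℝ) ^ (i + r - s - 1) * 2 ^ (2 ^ (k + r)) := by exact_mod_cast h2.trans h3
    calc _ ≤ ((n : ℝ) ^ (i + r - s - 1) * 2 ^ (2 ^ (k + r))) * p ^ i := by gcongr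
      _ = 2 ^ (2 ^ (k + r)) * ((n : ℝ) ^ (i + r - s - 1) * p ^ i) := by ring
      _ ≤ _ := by gcongr; exact hM i hi1 hi2
  refine (Finset.sum_le_card_nsmul _ _ _ hstep).trans ?_
  rw [nsmul_eq_mul]
  gcongr
  simp

lemma power_bound (r k s i n : ℕ) (hn : 1 ≤ n) (hr : 1 ≤ r) (hs : 1 ≤ s) (hsk : s + 1 ≤ k)
    (hi1 : s + 1 ≤ i) (hi2 : i ≤ k) (c : ℝ) (hc0 : 0 < c) (hc1 : c ≤ 1) :
    (n : ℝ) ^ (i + r - s - 1) * (c * (n : ℝ) ^ (-1 + (s : ℝ) / ((k : ℝ) - 1))) ^ i ≤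
      c ^ 2 * (n : ℝ) ^ ((r : ℝ) - 1 + (s : ℝ) / ((k : ℝ) - 1)) := by
  have hn0 : (0 : ℝ) < n := by exact_mod_cast hn
  have hn1 : (1 : ℝ) ≤ n := by exact_mod_cast hn
  have hk1 : (0 : ℝ) < (k : ℝ) - 1 := by
    have : (2 : ℝ) ≤ k := by exact_mod_cast (by omega : 2 ≤ k)
    linarith
  rw [mul_pow, mul_left_comm, ← Real.rpow_natCast (n : ℝ) (i + r - s - 1),
    ← Real.rpow_natCast ((n : ℝ) ^ (_ : ℝ)) i, ← Real.rpow_mul hn0.le, ← Real.rpow_add hn0]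
  have hcast : ((i + r - s - 1 : ℕ) : ℝ) = (i : ℝ) + r - s - 1 := by
    have : ((i + r - s - 1 : ℕ) : ℝ) + s + 1 = (i : ℝ) + r := by
      exact_mod_cast (by omega : i + r - s - 1 + s + 1 = i + r)
    linarith
  rw [hcast]
  refine mul_le_mul (pow_le_pow_of_le_one hc0.le hc1 (by omega)) ?_ (by positivity)
    (by positivity)
  refine Real.rpow_le_rpow_of_exponent_le hn1 ?_
  have hik : (i : ℝ) ≤ k := by exact_mod_cast hi2
  set t := (s : ℝ) / ((k : ℝ) - 1) with ht
  have ht0 : 0 ≤ t := by positivity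
  have hst : (s : ℝ) = t * (k - 1) := by rw [ht]; field_simp
  rw [hst]
  nlinarith

/-- An edge set `E` (of an `r`-uniform hypergraph) is `H^{(r)}(k,q)`-free if for every
integer `i` with `q + r + 1 ≤ i ≤ k`, every `i` pairwise distinct edges together cover
at least `i - q` vertices. -/
def HFree {V : Type*} [DecidableEq V] (r k : ℕ) (q : ℤ) (E : Finset (Finset V)) : Prop :=
  ∀ i : ℕ, q + r + 1 ≤ (i : ℤ) → i ≤ k → ∀ E' ⊆ E, E'.card = i →
    (i : ℤ) - q ≤ ((E'.biUnion id).card : ℤ)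

/-- ex(n, H^{(r)}(k,q)) = Ω(n^{r-1+(q+r)/(k-1)}): there are a constant `c > 0` and `n₀`
such that for every `n ≥ n₀` there is an `H^{(r)}(k,q)`-free `r`-uniform hypergraph on
`n` vertices with at least `c · n^{r-1+(q+r)/(k-1)}` edges. -/
theorem statement0 (r k : ℕ) (q : ℤ) (hr : 2 ≤ r) (hq : -(r : ℤ) + 1 ≤ q)
    (hk : (r : ℤ) + q + 1 ≤ (k : ℤ)) :
    ∃ c : ℝ, 0 < c ∧ ∃ n₀ : ℕ, ∀ n : ℕ, n₀ ≤ n →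
      ∃ E : Finset (Finset (Fin n)), (∀ e ∈ E, e.card = r) ∧ HFree r k q E ∧
        c * (n : ℝ) ^ ((r : ℝ) - 1 + ((q : ℝ) + (r : ℝ)) / ((k : ℝ) - 1)) ≤ (E.card : ℝ) := by
  obtain ⟨s, hs⟩ : ∃ s : ℕ, (s : ℤ) = q + r := ⟨(q + r).toNat, by omega⟩
  have hs1 : 1 ≤ s := by omega
  have hsk : s + 1 ≤ k := by omega
  have hsR : (q : ℝ) + (r : ℝ) = s := by exact_mod_cast hs.symm
  rw [hsR]
  set D : ℝ := 2 ^ r * (r.factorial : ℝ) with hD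
  have hD1 : 1 ≤ D := by
    have : 1 ≤ 2 ^ r * r.factorial := Nat.mul_pos (by positivity) (Nat.factorial_pos r)
    rw [hD]; exact_mod_cast this
  set C : ℝ := k * 2 ^ (2 ^ (k + r)) with hC
  have hC1 : 1 ≤ C := by
    have : 1 ≤ k * 2 ^ (2 ^ (k + r)) := Nat.mul_pos (by omega) (by positivity)
    rw [hC]; exact_mod_cast this
  set c : ℝ := 1 / (2 * D * C) with hc
  have hDC : 1 ≤ D * C := by nlinarith
  have hc0 : 0 < c := by positivity
  have hc1 : c ≤ 1 := by
    rw [hc, div_le_one (by positivity)]; nlinarith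
  refine ⟨c / (2 * D), by positivity, 2 * r, fun n hn => ?_⟩
  have hn1 : 1 ≤ n := by omega
  have hn0 : (0 : ℝ) < n := by exact_mod_cast hn1
  have hk1 : (0 : ℝ) < (k : ℝ) - 1 := by
    have : (2 : ℝ) ≤ k := by exact_mod_cast (by omega : 2 ≤ k)
    linarith
  set p : ℝ := c * (n : ℝ) ^ (-1 + (s : ℝ) / ((k : ℝ) - 1)) with hp
  have hp0 : 0 ≤ p := by positivity
  have hp1 : p ≤ 1 := by
    refine mul_le_one₀ hc1 (by positivity) ?_
    refine Real.rpow_le_one_of_one_le_of_nonpos (by exact_mod_cast hn1) ?_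
    have : (s : ℝ) / ((k : ℝ) - 1) ≤ 1 := by
      rw [div_le_one hk1]
      have : (s : ℝ) + 1 ≤ k := by exact_mod_cast hsk
      linarith
    linarith
  set N : ℝ := (n : ℝ) ^ ((r : ℝ) - 1 + (s : ℝ) / ((k : ℝ) - 1)) with hN
  have hN0 : 0 ≤ N := by positivity
  set X : Finset (Finset (Fin n)) := Finset.powersetCard r Finset.univ with hX
  set B := X.powerset.filter (fun T => s + 1 ≤ T.card ∧ T.card ≤ k ∧
    (T.biUnion id).card + s + 1 ≤ T.card + r) with hB
  have hBmem : ∀ T ∈ B, T ⊆ X ∧ s + 1 ≤ T.card ∧ T.card ≤ k ∧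
      (T.biUnion id).card + s + 1 ≤ T.card + r := by
    intro T hT
    obtain ⟨h1, h2⟩ := Finset.mem_filter.1 hT
    exact ⟨Finset.mem_powerset.1 h1, h2⟩
  have hBne : ∀ T ∈ B, T.Nonempty := fun T hT =>
    Finset.card_pos.1 (by have := (hBmem T hT).2.1; omega)
  obtain ⟨E, hEX, hEB, hE⟩ := deletion X B (fun T hT => (hBmem T hT).1) hBne p hp0 hp1
  refine ⟨E, fun e he => (Finset.mem_powersetCard.1 (hEX he)).2, ?_, ?_⟩
  · intro i hi1 hi2 E' hE' hcard
    by_contra! hlt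
    refine hEB E' ?_ hE'
    refine Finset.mem_filter.2 ⟨Finset.mem_powerset.2 (hE'.trans hEX), ?_, ?_, ?_⟩ <;> omega
  · have hsum : ∑ T ∈ B, p ^ T.card ≤ k * (2 ^ (2 ^ (k + r)) * (c ^ 2 * N)) := by
      refine sum_bad r k s n hsk B p _ hp0 ?_ ?_
      · intro T hT
        obtain ⟨h1, h2, h3, h4⟩ := hBmem T hT
        refine ⟨h2, h3, ?_, h4⟩
        obtain ⟨t, ht⟩ := hBne T hT
        have htc := (Finset.mem_powersetCard.1 (h1 ht)).2
        obtain ⟨a, ha⟩ := Finset.card_pos.1 (by omega : 0 < t.card)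
        exact ⟨a, Finset.mem_biUnion.2 ⟨t, ht, ha⟩⟩
      · intro i hi1 hi2
        exact power_bound r k s i n hn1 (by omega) hs1 hsk hi1 hi2 c hc0 hc1
    have hXc : (n : ℝ) ^ r / D ≤ (X.card : ℝ) := by
      rw [hX, Finset.card_powersetCard, Finset.card_univ, Fintype.card_fin]
      exact choose_lower n r hn
    have hpn : p * (n : ℝ) ^ r = c * N := by
      rw [hp, hN, mul_assoc, ← Real.rpow_natCast (n : ℝ) r, ← Real.rpow_add hn0]
      congr 2
      ring
    have h1 : c * N / D ≤ p * X.card := by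
      rw [← hpn, mul_div_assoc]
      gcongr
    have h2 : (k : ℝ) * (2 ^ (2 ^ (k + r)) * (c ^ 2 * N)) = c * N / (2 * D) := by
      have : (k : ℝ) * (2 ^ (2 ^ (k + r)) * (c ^ 2 * N)) = (C * c) * (c * N) := by
        rw [hC]; ring
      rw [this]
      have : C * c = 1 / (2 * D) := by rw [hc]; field_simp
      rw [this]; ring
    have h3 : c * N / D = 2 * (c * N / (2 * D)) := by field_simp
    have h4 : c / (2 * D) * N = c * N / (2 * D) := by ring
    linarith
end

section
/- Let q ≥ −1, k ≥ 2q+6 and n ≥ k be integers, let h = ⌊k/(q+3)⌋ and C = (q+2)^{1/h} (a real number). Then every H^{(2)}(k,q)-free simple graph on n vertices has fewer than C·n^{1+1/h} + (q+2)·n edges; that is, ex(n, H^{(2)}(k,q)) < C·n^{1+1/h} + (q+2)·n. -/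
structure LS {V : Type*} (A : V → V → Prop) (r : V) where
  R : V → Prop
  lev : V → ℕ
  par : V → V
  symm : ∀ u v, A u v → A v u
  irr : ∀ u, ¬ A u u
  Rr : R r
  levr : lev r = 0
  parr : par r = r
  zero : ∀ v, R v → lev v = 0 → v = r
  hpar : ∀ v, R v → v ≠ r → A v (par v) ∧ R (par v) ∧ lev (par v) + 1 = lev v
  step : ∀ u v, R u → A u v → R v ∧ lev v ≤ lev u + 1

theorem LS.exists_of {V : Type*} (G : SimpleGraph V) (r : V) : Nonempty (LS G.Adj r) := by
  classical
  have key : ∀ v, ∃ p, (v = r → p = r) ∧ (G.Reachable r v → v ≠ r →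
      G.Adj v p ∧ G.Reachable r p ∧ G.dist r p + 1 = G.dist r v) := by
    intro v
    by_cases hv : G.Reachable r v ∧ v ≠ r
    · obtain ⟨h1, h2⟩ := hv
      obtain ⟨w, hw⟩ := h1.exists_walk_length_eq_dist
      obtain ⟨p, w', hp, e⟩ : ∃ p, ∃ w' : G.Walk r p, G.Adj p v ∧ w'.length + 1 = w.length := by
        cases hr : w.reverse with
        | nil => exact absurd rfl h2
        | cons ha w2 =>
          refine ⟨_, w2.reverse, ha.symm, ?_⟩
          have := congrArg SimpleGraph.Walk.length hr
          simp at this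
          simp [this]
      refine ⟨p, fun h => absurd h h2, fun _ _ => ⟨hp.symm, ⟨w'⟩, ?_⟩⟩
      have a1 := SimpleGraph.dist_le w'
      obtain ⟨w3, hw3⟩ := (SimpleGraph.Walk.reachable w').exists_walk_length_eq_dist
      have a2 := SimpleGraph.dist_le (w3.concat hp)
      rw [SimpleGraph.Walk.length_concat] at a2
      omega
    · exact ⟨r, fun _ => rfl, fun a b => absurd ⟨a, b⟩ hv⟩
  choose p hp1 hp2 using key
  refine ⟨⟨G.Reachable r, G.dist r, p, fun _ _ h => h.symm, fun u => G.loopless.irrefl u, ?_, ?_, ?_, ?_, ?_, ?_⟩⟩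
  · exact SimpleGraph.Reachable.refl _
  · simp
  · exact hp1 r rfl
  · intro v hv h0
    exact ((hv.dist_eq_zero_iff).1 h0).symm
  · exact hp2
  · intro u v hu ha
    obtain ⟨w3, hw3⟩ := hu.exists_walk_length_eq_dist
    have a2 := SimpleGraph.dist_le (w3.concat ha)
    rw [SimpleGraph.Walk.length_concat] at a2
    exact ⟨hu.trans ha.reachable, by omega⟩

theorem LS.anc {V : Type*} [DecidableEq V] {A : V → V → Prop} {r : V} (L : LS A r) :
    ∀ m v, L.R v → L.lev v = m → ∃ S : Finset V, S.card ≤ m ∧ (v = r ∨ v ∈ S) ∧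
      ∀ u ∈ S, L.R u ∧ u ≠ r ∧ (L.par u = r ∨ L.par u ∈ S) := by
  intro m
  induction m with
  | zero =>
    intro v hv h0
    exact ⟨∅, by simp, Or.inl (L.zero v hv h0), by simp⟩
  | succ m ih =>
    intro v hv h0
    have hr : v ≠ r := by
      rintro rfl
      have := L.levr
      omega
    obtain ⟨h1, h2, h3⟩ := L.hpar v hv hr
    obtain ⟨S, s1, s2, s3⟩ := ih (L.par v) h2 (by omega)
    refine ⟨insert v S, (Finset.card_insert_le _ _).trans (by omega), Or.inr (by simp), ?_⟩
    intro u hu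
    rcases Finset.mem_insert.1 hu with rfl | hu
    · refine ⟨hv, hr, ?_⟩
      rcases s2 with s2 | s2
      · exact Or.inl s2
      · exact Or.inr (by simp [s2])
    · obtain ⟨a, b, c⟩ := s3 u hu
      refine ⟨a, b, ?_⟩
      rcases c with c | c
      · exact Or.inl c
      · exact Or.inr (by simp [c])

theorem LS.nontree {V : Type*} [DecidableEq V] {A : V → V → Prop} {r : V} (L : LS A r)
    {k t : ℕ} (ht : 1 ≤ t) (E : Finset (Finset V)) (hE : HFree 2 k ((t : ℤ) - 2) E)
    (hA : ∀ u v, A u v → ({u, v} : Finset V) ∈ E) (x : V) (hx : L.R x) (m : ℕ)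
    (hk : L.lev x + t * (m + 1) ≤ k) (F : Finset V)
    (hF : ∀ y ∈ F, A x y ∧ L.lev y ≤ m ∧ y ≠ L.par x ∧ x ≠ L.par y) : F.card + 1 ≤ t := by
  classical
  by_contra hcon
  obtain ⟨F', hF', hc⟩ := Finset.exists_subset_card_eq (s := F) (n := t) (by omega)
  replace hF : ∀ y ∈ F', A x y ∧ L.lev y ≤ m ∧ y ≠ L.par x ∧ x ≠ L.par y :=
    fun y hy => hF y (hF' hy)
  clear hF' hcon F
  obtain ⟨S0, s1, s2, s3⟩ := L.anc _ x hx rfl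
  have : ∀ y, ∃ S : Finset V, y ∈ F' → S.card ≤ m ∧ (y = r ∨ y ∈ S) ∧
      ∀ u ∈ S, L.R u ∧ u ≠ r ∧ (L.par u = r ∨ L.par u ∈ S) := by
    intro y
    by_cases hy : y ∈ F'
    · obtain ⟨h1, h2, -⟩ := hF y hy
      obtain ⟨S, a, b, c⟩ := L.anc _ y (L.step x y hx h1).1 rfl
      exact ⟨S, fun _ => ⟨a.trans h2, b, c⟩⟩
    · exact ⟨∅, fun h => absurd h hy⟩
  choose T hT using this
  obtain ⟨S, hS⟩ : ∃ S, S = S0 ∪ F'.biUnion T := ⟨_, rfl⟩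
  have hScard : S.card ≤ L.lev x + t * m := by
    rw [hS]
    refine (Finset.card_union_le _ _).trans (Nat.add_le_add s1 ?_)
    rw [← hc]
    exact Finset.card_biUnion_le_card_mul _ _ _ (fun y hy => (hT y hy).1)
  have hxS : x = r ∨ x ∈ S := by
    rcases s2 with h | h
    · exact Or.inl h
    · exact Or.inr (by rw [hS]; simp [h])
  have hyS : ∀ y ∈ F', y = r ∨ y ∈ S := by
    intro y hy
    rcases (hT y hy).2.1 with h | h
    · exact Or.inl h
    · exact Or.inr (by rw [hS]; exact Finset.mem_union_right _ (Finset.mem_biUnion.2 ⟨y, hy, h⟩))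
  have hSp : ∀ u ∈ S, L.R u ∧ u ≠ r ∧ (L.par u = r ∨ L.par u ∈ S) := by
    intro u hu
    rw [hS] at hu
    rcases Finset.mem_union.1 hu with h | h
    · obtain ⟨a, b, c⟩ := s3 u h
      refine ⟨a, b, c.imp id fun c => ?_⟩
      rw [hS]; exact Finset.mem_union_left _ c
    · obtain ⟨y, hy, h⟩ := Finset.mem_biUnion.1 h
      obtain ⟨a, b, c⟩ := (hT y hy).2.2 u h
      refine ⟨a, b, c.imp id fun c => ?_⟩
      rw [hS]; exact Finset.mem_union_right _ (Finset.mem_biUnion.2 ⟨y, hy, c⟩)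
  have hSne : 1 ≤ S.card := by
    obtain ⟨y, hy⟩ : F'.Nonempty := Finset.card_pos.1 (by omega)
    rw [Nat.one_le_iff_ne_zero, Ne, Finset.card_eq_zero]
    intro h0
    have h1 := hyS y hy
    rw [h0] at h1 hxS
    simp at h1 hxS
    have := (hF y hy).1
    rw [h1, hxS] at this
    exact L.irr _ this
  have pairEq : ∀ a b c d : V, ({a, b} : Finset V) = {c, d} → (a = c ∧ b = d) ∨ (a = d ∧ b = c) := by
    intro a b c d h
    have := congrArg (fun s : Finset V => (s : Set V)) h
    simp only [Finset.coe_insert, Finset.coe_singleton] at this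
    exact Set.pair_eq_pair_iff.1 this
  let A1 := S.image (fun u => ({u, L.par u} : Finset V))
  let B1 := F'.image (fun y => ({x, y} : Finset V))
  have cA : A1.card = S.card := by
    apply Finset.card_image_of_injOn
    intro u hu v hv h
    rcases pairEq _ _ _ _ h with h | h
    · exact h.1
    · have h1 := (L.hpar u (hSp u hu).1 (hSp u hu).2.1).2.2
      have h2 := (L.hpar v (hSp v hv).1 (hSp v hv).2.1).2.2
      rw [h.2] at h1
      rw [← h.1] at h2
      omega
  have cB : B1.card = t := by
    rw [← hc]
    apply Finset.card_image_of_injOn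
    intro u hu v hv h
    rcases pairEq _ _ _ _ h with h | h
    · exact h.2
    · exact h.2.trans h.1
  have dis : Disjoint A1 B1 := by
    rw [Finset.disjoint_left]
    intro e h1 h2
    obtain ⟨u, hu, rfl⟩ := Finset.mem_image.1 h1
    obtain ⟨y, hy, h⟩ := Finset.mem_image.1 h2
    obtain ⟨-, -, g1, g2⟩ := hF y hy
    rcases pairEq _ _ _ _ h with ⟨h, h'⟩ | ⟨h, h'⟩
    · exact g1 (by rw [h', h])
    · exact g2 (by rw [h', h])
  have cAB : (A1 ∪ B1).card = S.card + t := by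
    rw [Finset.card_union_of_disjoint dis, cA, cB]
  have sub : A1 ∪ B1 ⊆ E := by
    intro e he
    rcases Finset.mem_union.1 he with he | he
    · obtain ⟨u, hu, rfl⟩ := Finset.mem_image.1 he
      exact hA _ _ (L.hpar u (hSp u hu).1 (hSp u hu).2.1).1
    · obtain ⟨y, hy, rfl⟩ := Finset.mem_image.1 he
      exact hA _ _ (hF y hy).1
  have cov : ((A1 ∪ B1).biUnion id) ⊆ insert r S := by
    intro v hv
    obtain ⟨e, he, hve⟩ := Finset.mem_biUnion.1 hv
    rw [Finset.mem_insert]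
    rcases Finset.mem_union.1 he with he | he
    · obtain ⟨u, hu, rfl⟩ := Finset.mem_image.1 he
      simp at hve
      rcases hve with rfl | rfl
      · exact Or.inr hu
      · exact (hSp u hu).2.2
    · obtain ⟨y, hy, rfl⟩ := Finset.mem_image.1 he
      simp at hve
      rcases hve with rfl | rfl
      · exact hxS
      · exact hyS _ hy
  have c1 := (Finset.card_le_card cov).trans (Finset.card_insert_le _ _)
  have hk' : S.card + t ≤ k := by
    have : t * (m + 1) = t * m + t := by ring
    omega
  have := hE (S.card + t) (by push_cast; omega) hk' _ sub cAB
  push_cast at this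
  omega

theorem LS.core {V : Type*} [Fintype V] [DecidableEq V] (G : SimpleGraph V) [DecidableRel G.Adj]
    {r : V} (L : LS G.Adj r) {k t h : ℕ} (ht : 1 ≤ t) (hh : 2 ≤ h) (hhk : h * (t + 1) ≤ k)
    (E : Finset (Finset V)) (hE : HFree 2 k ((t : ℤ) - 2) E)
    (hA : ∀ u v, G.Adj u v → ({u, v} : Finset V) ∈ E) (a : ℝ) (ha : 0 ≤ a)
    (hdeg : ∀ v, L.R v → a + t ≤ (Finset.univ.filter (G.Adj v)).card) :
    a ^ h < t * (Fintype.card V : ℝ) := by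
  classical
  let Lv : ℕ → Finset V := fun j => Finset.univ.filter (fun v => L.R v ∧ L.lev v = j)
  have memLv : ∀ j v, v ∈ Lv j ↔ L.R v ∧ L.lev v = j := by intro j v; simp [Lv]
  have levpar : ∀ v, L.R v → L.lev (L.par v) ≤ L.lev v := by
    intro v hv
    by_cases h : v = r
    · subst h; rw [L.parr]
    · have := (L.hpar v hv h).2.2; omega
  have levpar' : ∀ v, L.R v → v ≠ L.par v → L.lev (L.par v) + 1 = L.lev v := by
    intro v hv h1
    by_cases h : v = r
    · subst h; rw [L.parr] at h1; exact absurd rfl h1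
    · exact (L.hpar v hv h).2.2
  -- growth in the lower levels
  have grow : ∀ j, j + 2 ≤ h → a * (Lv j).card ≤ (Lv (j+1)).card := by
    intro j hj
    let ch : V → Finset V := fun x => (Lv (j+1)).filter (fun y => L.par y = x)
    have hsum : ∑ x ∈ Lv j, (ch x).card ≤ (Lv (j+1)).card := by
      rw [← Finset.card_biUnion]
      · apply Finset.card_le_card
        intro y hy
        obtain ⟨x, _, hy⟩ := Finset.mem_biUnion.1 hy
        exact (Finset.mem_filter.1 hy).1
      · intro x _ y _ hxy
        rw [Function.onFun, Finset.disjoint_left]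
        intro z h1 h2
        exact hxy ((Finset.mem_filter.1 h1).2.symm.trans (Finset.mem_filter.1 h2).2)
    have hone : ∀ x ∈ Lv j, a ≤ (ch x).card := by
      intro x hx
      obtain ⟨hR, hl⟩ := (memLv _ _).1 hx
      let F := Finset.univ.filter (fun y => G.Adj x y ∧ y ≠ L.par x ∧ x ≠ L.par y)
      have hF : F.card + 1 ≤ t := by
        refine L.nontree ht E hE hA x hR (j+1) ?_ F ?_
        · rw [hl]; nlinarith
        · intro y hy
          obtain ⟨-, h1, h2, h3⟩ := Finset.mem_filter.1 hy
          exact ⟨h1, by have := (L.step x y hR h1).2; omega, h2, h3⟩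
      have hsub : Finset.univ.filter (G.Adj x) ⊆ insert (L.par x) (F ∪ ch x) := by
        intro y hy
        have hy := (Finset.mem_filter.1 hy).2
        rw [Finset.mem_insert, Finset.mem_union]
        by_cases h1 : y = L.par x
        · exact Or.inl h1
        · by_cases h2 : x = L.par y
          · have hRy := (L.step x y hR hy).1
            have hne : y ≠ L.par y := by rw [← h2]; exact hy.ne'
            have := levpar' y hRy hne
            rw [← h2] at this
            exact Or.inr (Or.inr (Finset.mem_filter.2 ⟨(memLv _ _).2 ⟨hRy, by omega⟩, h2.symm⟩))
          · exact Or.inr (Or.inl (Finset.mem_filter.2 ⟨Finset.mem_univ _, hy, h1, h2⟩))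
      have c1 := (Finset.card_le_card hsub).trans (Finset.card_insert_le _ _)
      have c2 := Finset.card_union_le F (ch x)
      have c3 : (Finset.univ.filter (G.Adj x)).card ≤ t + (ch x).card := by omega
      have c4 := hdeg x hR
      have c5 : ((Finset.univ.filter (G.Adj x)).card : ℝ) ≤ t + (ch x).card := by exact_mod_cast c3
      linarith
    calc a * (Lv j).card = ∑ x ∈ Lv j, a := by rw [Finset.sum_const, nsmul_eq_mul, mul_comm]
      _ ≤ ∑ x ∈ Lv j, ((ch x).card : ℝ) := Finset.sum_le_sum hone
      _ ≤ (Lv (j+1)).card := by exact_mod_cast hsum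
  have pw : ∀ j, j + 1 ≤ h → a ^ j ≤ (Lv j).card := by
    intro j
    induction j with
    | zero =>
      intro _
      have : r ∈ Lv 0 := (memLv _ _).2 ⟨L.Rr, L.levr⟩
      have : 1 ≤ (Lv 0).card := Finset.card_pos.2 ⟨r, this⟩
      simpa using this
    | succ j ih =>
      intro hj
      have h1 := ih (by omega)
      have h2 := grow j (by omega)
      calc a ^ (j+1) = a * a ^ j := by ring
        _ ≤ a * (Lv j).card := by gcongr
        _ ≤ _ := h2
  obtain ⟨g, rfl⟩ : ∃ g, h = g + 1 := ⟨h - 1, by omega⟩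
  have last : a * (Lv g).card ≤ t * (Lv (g+1)).card := by
    have hone : ∀ x ∈ Lv g, a ≤ (Finset.bipartiteAbove G.Adj (Lv (g+1)) x).card := by
      intro x hx
      obtain ⟨hR, hl⟩ := (memLv _ _).1 hx
      let F := Finset.univ.filter (fun y => G.Adj x y ∧ L.lev y ≤ g ∧ y ≠ L.par x ∧ x ≠ L.par y)
      have hF : F.card + 1 ≤ t := by
        refine L.nontree ht E hE hA x hR g ?_ F ?_
        · rw [hl]; nlinarith
        · intro y hy
          obtain ⟨-, h1, h2, h3⟩ := Finset.mem_filter.1 hy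
          exact ⟨h1, h2, h3⟩
      have hsub : Finset.univ.filter (G.Adj x) ⊆
          insert (L.par x) (F ∪ Finset.bipartiteAbove G.Adj (Lv (g+1)) x) := by
        intro y hy
        have hy := (Finset.mem_filter.1 hy).2
        rw [Finset.mem_insert, Finset.mem_union]
        obtain ⟨hRy, hly⟩ := L.step x y hR hy
        by_cases h1 : y = L.par x
        · exact Or.inl h1
        · by_cases h2 : L.lev y ≤ g
          · refine Or.inr (Or.inl (Finset.mem_filter.2 ⟨Finset.mem_univ _, hy, h2, h1, ?_⟩))
            intro h3
            have hne : y ≠ L.par y := by rw [← h3]; exact hy.ne'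
            have := levpar' y hRy hne
            rw [← h3] at this
            omega
          · exact Or.inr (Or.inr (Finset.mem_filter.2 ⟨(memLv _ _).2 ⟨hRy, by omega⟩, hy⟩))
      have c1 := (Finset.card_le_card hsub).trans (Finset.card_insert_le _ _)
      have c2 := Finset.card_union_le F (Finset.bipartiteAbove G.Adj (Lv (g+1)) x)
      have c3 : (Finset.univ.filter (G.Adj x)).card ≤
        t + (Finset.bipartiteAbove G.Adj (Lv (g+1)) x).card := by omega
      have c4 := hdeg x hR
      have c5 : ((Finset.univ.filter (G.Adj x)).card : ℝ) ≤
        t + (Finset.bipartiteAbove G.Adj (Lv (g+1)) x).card := by exact_mod_cast c3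
      linarith
    have htwo : ∀ y ∈ Lv (g+1), (Finset.bipartiteBelow G.Adj (Lv g) y).card ≤ t := by
      intro y hy
      obtain ⟨hR, hl⟩ := (memLv _ _).1 hy
      let F := (Finset.bipartiteBelow G.Adj (Lv g) y).erase (L.par y)
      have hF : F.card + 1 ≤ t := by
        refine L.nontree ht E hE hA y hR g ?_ F ?_
        · rw [hl]; nlinarith
        · intro x hx
          obtain ⟨h1, h2⟩ := Finset.mem_erase.1 hx
          obtain ⟨h3, h4⟩ := Finset.mem_filter.1 h2
          obtain ⟨h5, h6⟩ := (memLv _ _).1 h3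
          refine ⟨h4.symm, by omega, h1, ?_⟩
          intro h7
          have := levpar x h5
          rw [← h7] at this
          omega
      have := Finset.pred_card_le_card_erase (s := Finset.bipartiteBelow G.Adj (Lv g) y)
        (a := L.par y)
      change _ ≤ F.card at this
      omega
    calc a * (Lv g).card = ∑ x ∈ Lv g, a := by rw [Finset.sum_const, nsmul_eq_mul, mul_comm]
      _ ≤ ∑ x ∈ Lv g, ((Finset.bipartiteAbove G.Adj (Lv (g+1)) x).card : ℝ) :=
        Finset.sum_le_sum hone
      _ = ((∑ x ∈ Lv g, (Finset.bipartiteAbove G.Adj (Lv (g+1)) x).card : ℕ) : ℝ) := by push_cast; rfl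
      _ = ((∑ y ∈ Lv (g+1), (Finset.bipartiteBelow G.Adj (Lv g) y).card : ℕ) : ℝ) := by
        rw [Finset.sum_card_bipartiteAbove_eq_sum_card_bipartiteBelow]
      _ ≤ ((∑ y ∈ Lv (g+1), t : ℕ) : ℝ) := by exact_mod_cast Finset.sum_le_sum htwo
      _ = _ := by rw [Finset.sum_const, smul_eq_mul]; push_cast; ring
  have hlt : (Lv (g+1)).card < Fintype.card V := by
    rw [← Finset.card_univ]
    apply Finset.card_lt_card
    rw [Finset.ssubset_univ_iff]
    intro h0
    have : r ∈ Lv (g+1) := by rw [h0]; simp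
    have := ((memLv _ _).1 this).2
    rw [L.levr] at this
    omega
  have hlt' : ((Lv (g+1)).card : ℝ) < Fintype.card V := by exact_mod_cast hlt
  have ht' : (0 : ℝ) < t := by exact_mod_cast ht
  calc a ^ (g+1) = a * a ^ g := by ring
    _ ≤ a * (Lv g).card := by gcongr; exact pw g le_rfl
    _ ≤ t * (Lv (g+1)).card := last
    _ < _ := by gcongr

theorem exists_dense {V : Type*} [Fintype V] [DecidableEq V] [Nonempty V]
    (E : Finset (Finset V)) (hunif : ∀ e ∈ E, e.card = 2) (D : ℝ) (hD : 0 < D)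
    (hE : D * Fintype.card V ≤ E.card) :
    ∃ U : Finset V, U.Nonempty ∧ ∀ v ∈ U, D ≤
      (Finset.univ.filter (fun y => v ≠ y ∧ ({v, y} : Finset V) ∈ E ∧ v ∈ U ∧ y ∈ U)).card := by
  classical
  let P : ℕ → Prop := fun m => ∃ U : Finset V, U.Nonempty ∧ U.card = m ∧
    D * U.card ≤ (E.filter (fun e => e ⊆ U)).card
  have hP : ∃ m, P m := ⟨_, Finset.univ, Finset.univ_nonempty, rfl, by simpa using hE⟩
  obtain ⟨U, hU, hm, hd⟩ := Nat.find_spec hP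
  refine ⟨U, hU, fun v hv => ?_⟩
  have hmin := Nat.find_min hP (m := (U.erase v).card)
    (by rw [← hm]; exact Finset.card_erase_lt_of_mem hv)
  have h1 : ((E.filter (fun e => e ⊆ U.erase v)).card : ℝ) ≤ D * (U.erase v).card := by
    by_cases hne : (U.erase v).Nonempty
    · by_contra hcon
      exact hmin ⟨_, hne, rfl, by linarith⟩
    · rw [Finset.not_nonempty_iff_eq_empty] at hne
      rw [hne]
      have : E.filter (fun e => e ⊆ ∅) = ∅ := by
        rw [Finset.filter_eq_empty_iff]
        intro e he h
        have := hunif e he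
        rw [Finset.subset_empty.1 h] at this
        simp at this
      rw [this]; simp
  set N := Finset.univ.filter (fun y => v ≠ y ∧ ({v, y} : Finset V) ∈ E ∧ v ∈ U ∧ y ∈ U) with hN
  have hsub : E.filter (fun e => e ⊆ U) ⊆
      E.filter (fun e => e ⊆ U.erase v) ∪ N.image (fun y => ({v, y} : Finset V)) := by
    intro e he
    obtain ⟨he, heU⟩ := Finset.mem_filter.1 he
    rw [Finset.mem_union]
    by_cases hve : v ∈ e
    · right
      obtain ⟨x, y, hxy, rfl⟩ := Finset.card_eq_two.1 (hunif e he)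
      rw [Finset.mem_image]
      have hx : x ∈ U := heU (by simp)
      have hy : y ∈ U := heU (by simp)
      simp at hve
      rcases hve with rfl | rfl
      · exact ⟨y, by simp [hN, hxy, he, hx, hy], rfl⟩
      · refine ⟨x, ?_, Finset.pair_comm _ _⟩
        rw [Finset.pair_comm] at he
        simp [hN, hxy.symm, he, hx, hy]
    · left
      exact Finset.mem_filter.2 ⟨he, fun z hz => Finset.mem_erase.2
        ⟨fun h => hve (h ▸ hz), heU hz⟩⟩
  have c1 := (Finset.card_le_card hsub).trans ((Finset.card_union_le _ _).trans
    (Nat.add_le_add_left Finset.card_image_le _))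
  have c2 : ((E.filter (fun e => e ⊆ U)).card : ℝ) ≤
    (E.filter (fun e => e ⊆ U.erase v)).card + N.card := by exact_mod_cast c1
  have c3 : ((U.erase v).card : ℝ) + 1 = U.card := by
    exact_mod_cast Finset.card_erase_add_one hv
  rw [← c3] at hd
  linarith

/-- For `q ≥ -1`, `k ≥ 2q+6`, `n ≥ k`, `h = ⌊k/(q+3)⌋` and `C = (q+2)^{1/h}`, every
`H^{(2)}(k,q)`-free simple graph on `n` vertices has fewer than
`C·n^{1+1/h} + (q+2)·n` edges. -/
theorem statement1 (k n : ℕ) (q h : ℤ) (C : ℝ)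
    (hq : -1 ≤ q) (hk : 2 * q + 6 ≤ (k : ℤ)) (hn : k ≤ n)
    (hh : h = (k : ℤ) / (q + 3))
    (hC : C = ((q : ℝ) + 2) ^ ((1 : ℝ) / (h : ℝ)))
    (E : Finset (Finset (Fin n))) (hunif : ∀ e ∈ E, e.card = 2)
    (hfree : HFree 2 k q E) :
    (E.card : ℝ) < C * (n : ℝ) ^ ((1 : ℝ) + 1 / (h : ℝ)) + ((q : ℝ) + 2) * (n : ℝ) := by
  classical
  obtain ⟨t, ht⟩ : ∃ t : ℕ, q = (t : ℤ) - 2 := ⟨(q + 2).toNat, by omega⟩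
  subst ht
  have ht : 1 ≤ t := by omega
  have h2 : 2 ≤ h := by
    rw [hh, Int.le_ediv_iff_mul_le (by omega)]; omega
  have hmul : h * ((t : ℤ) + 1) ≤ k := by
    have := Int.ediv_mul_le (k : ℤ) (b := (t : ℤ) - 2 + 3) (by omega)
    rw [← hh] at this
    calc h * ((t : ℤ) + 1) = h * ((t : ℤ) - 2 + 3) := by ring
      _ ≤ k := this
  obtain ⟨m, rfl⟩ : ∃ m : ℕ, h = m := ⟨h.toNat, by omega⟩
  clear hh
  have hn0 : 0 < n := by omega
  have hnR : (0 : ℝ) < n := by exact_mod_cast hn0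
  have htR : (0 : ℝ) < t := by exact_mod_cast ht
  have e1 : (((t : ℤ) - 2 : ℤ) : ℝ) + 2 = t := by push_cast; ring
  have e2 : (((m : ℤ)) : ℝ) = (m : ℝ) := by norm_cast
  rw [e1, e2] at hC
  rw [e1, e2]
  by_contra hcon
  push Not at hcon
  set a : ℝ := ((t : ℝ) * n) ^ ((1 : ℝ) / m) with hadef
  have ha : 0 ≤ a := by positivity
  have hm0 : m ≠ 0 := by omega
  have hapow : a ^ m = t * n := by
    rw [hadef, one_div, Real.rpow_inv_natCast_pow (by positivity) hm0]
  have hmain : C * (n : ℝ) ^ ((1 : ℝ) + 1 / (m : ℝ)) = a * n := by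
    rw [hC, hadef, Real.mul_rpow htR.le hnR.le, Real.rpow_add hnR, Real.rpow_one]; ring
  rw [hmain] at hcon
  haveI : Nonempty (Fin n) := ⟨⟨0, hn0⟩⟩
  obtain ⟨U, ⟨r, hr⟩, hU⟩ := exists_dense E hunif (a + t) (by positivity)
    (by rw [Fintype.card_fin]; linarith)
  let G : SimpleGraph (Fin n) :=
    { Adj := fun v y => v ≠ y ∧ ({v, y} : Finset (Fin n)) ∈ E ∧ v ∈ U ∧ y ∈ U
      symm := ⟨fun v y ⟨h1, h2, h3, h4⟩ => ⟨h1.symm, by rwa [Finset.pair_comm], h4, h3⟩⟩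
      loopless := ⟨fun v h => h.1 rfl⟩ }
  obtain ⟨L⟩ := LS.exists_of G r
  have := L.core G ht (h := m) (by omega) (by exact_mod_cast hmul) E hfree
    (fun u v h => h.2.1) a ha (by
      intro v hv
      have hvU : v ∈ U := by
        by_cases h : v = r
        · rw [h]; exact hr
        · exact (L.hpar v hv h).1.2.2.1
      have := hU v hvU
      convert this using 3)
  rw [Fintype.card_fin, hapow] at this
  exact lt_irrefl _ this
end

section
/- Let n, k, r, q be integers with r ≥ 2, q ≥ −r+1 and n ≥ k ≥ 2q+2r+2, and let C' = (q+r)^{1/⌊k/(q+r+1)⌋} (a real number). Then every H^{(r)}(k,q)-free r-uniform hypergraph on n vertices has fewer than (2C'/r!)·n^{r−1+1/⌊k/(q+r+1)⌋} + (2(q+r)/r!)·n^{r−1} edges; that is, ex(n, H^{(r)}(k,q)) < (2C'/r!)·n^{r−1+1/⌊k/(q+r+1)⌋} + (2(q+r)/r!)·n^{r−1}. -/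
/-- Breadth-first-search style data. -/
structure BFS {V : Type*} (G : SimpleGraph V) (v : V) (R : V → Prop) (l : V → ℕ) (p : V → V) :
    Prop where
  root : R v
  lroot : l v = 0
  step : ∀ x y, R x → G.Adj x y → R y ∧ l y ≤ l x + 1
  par : ∀ x, R x → x ≠ v → G.Adj x (p x) ∧ R (p x) ∧ l (p x) + 1 = l x

/-- Sparse graph condition. -/
def Sparse {V : Type*} (G : SimpleGraph V) (s k : ℕ) : Prop :=
  ∀ (F : Finset (Sym2 V)) (W : Finset V), (∀ e ∈ F, e ∈ G.edgeSet) →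
    (∀ e ∈ F, ∀ x ∈ e, x ∈ W) → s + 1 ≤ F.card → F.card ≤ k → F.card + 2 ≤ W.card + s

theorem bfs_anc {V : Type*} [DecidableEq V] {G : SimpleGraph V} {v : V} {R : V → Prop} {l : V → ℕ}
    {p : V → V} (hB : BFS G v R l p) : ∀ (m : ℕ) (x : V), R x → l x = m →
    ∃ T : Finset V, T.card ≤ m ∧ (∀ w ∈ T, w ≠ v ∧ R w ∧ (p w = v ∨ p w ∈ T)) ∧
      (x = v ∨ x ∈ T) := by
  intro m
  induction m with
  | zero =>
    intro x hx hl
    refine ⟨∅, by simp, by simp, ?_⟩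
    left
    by_contra hne
    have := (hB.par x hx hne).2.2
    omega
  | succ m ih =>
    intro x hx hl
    have hne : x ≠ v := by
      rintro rfl
      have := hB.lroot
      omega
    obtain ⟨h1, h2, h3⟩ := hB.par x hx hne
    obtain ⟨T, hT1, hT2, hT3⟩ := ih (p x) h2 (by omega)
    refine ⟨insert x T, (Finset.card_insert_le _ _).trans (by omega), ?_, Or.inr (by simp)⟩
    intro w hw
    rcases Finset.mem_insert.1 hw with rfl | hw
    · refine ⟨hne, hx, ?_⟩
      rcases hT3 with h | h
      · exact Or.inl h
      · exact Or.inr (Finset.mem_insert_of_mem h)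
    · obtain ⟨a, b, c⟩ := hT2 w hw
      refine ⟨a, b, ?_⟩
      rcases c with h | h
      · exact Or.inl h
      · exact Or.inr (Finset.mem_insert_of_mem h)

theorem bfs_tree {V : Type*} [DecidableEq V] {G : SimpleGraph V} {v : V} {R : V → Prop} {l : V → ℕ}
    {p : V → V} (hB : BFS G v R l p) {s k : ℕ} (hs : 1 ≤ s) (hS : Sparse G s k)
    (T : Finset V) (hT : ∀ w ∈ T, w ≠ v ∧ R w ∧ (p w = v ∨ p w ∈ T))
    (N : Finset (Sym2 V)) (hN : ∀ e ∈ N, e ∈ G.edgeSet)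
    (hNT : ∀ e ∈ N, ∀ x ∈ e, x ∈ insert v T)
    (hNd : ∀ w ∈ T, s(w, p w) ∉ N) (hc : N.card = s) : k < T.card + s := by
  by_contra hk
  push Not at hk
  have hinj : Set.InjOn (fun w => s(w, p w)) (T : Set V) := by
    intro a ha b hb hab
    obtain ⟨a1, a2, a3⟩ := hT a ha
    obtain ⟨b1, b2, b3⟩ := hT b hb
    have ha' := (hB.par a a2 a1).2.2
    have hb' := (hB.par b b2 b1).2.2
    rcases Sym2.eq_iff.1 hab with h | h
    · exact h.1
    · rw [h.2] at ha'
      rw [← h.1] at hb'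
      omega
  have hdis : Disjoint N (T.image (fun w => s(w, p w))) := by
    rw [Finset.disjoint_right]
    intro e he
    obtain ⟨w, hw, rfl⟩ := Finset.mem_image.1 he
    exact hNd w hw
  have hcard : (N ∪ T.image (fun w => s(w, p w))).card = s + T.card := by
    rw [Finset.card_union_of_disjoint hdis, Finset.card_image_of_injOn hinj, hc]
  have hTne : 1 ≤ T.card := by
    by_contra h0
    have hT0 : T = ∅ := Finset.card_eq_zero.1 (by omega)
    subst hT0
    obtain ⟨e, he⟩ : N.Nonempty := Finset.card_pos.1 (by omega)
    have h1 := hN e he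
    have h2 := hNT e he
    induction e using Sym2.ind with
    | _ a b =>
      have ha := h2 a (by simp)
      have hb := h2 b (by simp)
      simp at ha hb
      subst ha
      subst hb
      simp at h1
  have := hS (N ∪ T.image (fun w => s(w, p w))) (insert v T) ?_ ?_ (by omega) (by omega)
  · have := Finset.card_insert_le v T
    omega
  · intro e he
    rcases Finset.mem_union.1 he with he | he
    · exact hN e he
    · obtain ⟨w, hw, rfl⟩ := Finset.mem_image.1 he
      exact (hB.par w (hT w hw).2.1 (hT w hw).1).1
  · intro e he
    rcases Finset.mem_union.1 he with he | he
    · exact hNT e he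
    · obtain ⟨w, hw, rfl⟩ := Finset.mem_image.1 he
      intro x hx
      rcases Sym2.mem_iff.1 hx with rfl | rfl
      · exact Finset.mem_insert_of_mem hw
      · rcases (hT w hw).2.2 with h | h
        · simp [h]
        · exact Finset.mem_insert_of_mem h

theorem bfs_star {V : Type*} [DecidableEq V] {G : SimpleGraph V} {v : V} {R : V → Prop} {l : V → ℕ}
    {p : V → V} (hB : BFS G v R l p) {s k : ℕ} (hs : 1 ≤ s) (hS : Sparse G s k)
    (x : V) (hx : R x) (A : Finset V) (hA : s ≤ A.card) (m : ℕ)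
    (e : V → Sym2 V) (he : Set.InjOn e A) (heG : ∀ y ∈ A, e y ∈ G.edgeSet)
    (hnt : ∀ y ∈ A, ∀ w, R w → w ≠ v → e y ≠ s(w, p w))
    (hg : ∀ y ∈ A, ∃ g : Finset V, g.card ≤ m ∧
      (∀ w ∈ g, w ≠ v ∧ R w ∧ (p w = v ∨ p w ∈ g ∨ p w = x)) ∧
      (∀ u ∈ e y, u = v ∨ u ∈ g ∨ u = x)) : k < l x + s * m + s := by
  obtain ⟨A', hA', hc⟩ := Finset.exists_subset_card_eq hA
  obtain ⟨T, hT1, hT2, hT3⟩ := bfs_anc hB _ x hx rfl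
  choose! g hg1 hg2 hg3 using hg
  have hxT : ∀ u, u = x → u = v ∨ u ∈ T ∪ A'.biUnion g := by
    rintro u rfl
    rcases hT3 with h | h
    · exact Or.inl h
    · exact Or.inr (Finset.mem_union_left _ h)
  have hgT : ∀ y ∈ A', ∀ u ∈ g y, u ∈ T ∪ A'.biUnion g := by
    intro y hy u hu
    exact Finset.mem_union_right _ (Finset.mem_biUnion.2 ⟨y, hy, hu⟩)
  have hcl : ∀ w ∈ T ∪ A'.biUnion g, w ≠ v ∧ R w ∧ (p w = v ∨ p w ∈ T ∪ A'.biUnion g) := by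
    intro w hw
    rcases Finset.mem_union.1 hw with hw | hw
    · obtain ⟨a, b, c⟩ := hT2 w hw
      exact ⟨a, b, c.imp id (fun h => Finset.mem_union_left _ h)⟩
    · obtain ⟨y, hy, hw⟩ := Finset.mem_biUnion.1 hw
      obtain ⟨a, b, c⟩ := hg2 y (hA' hy) w hw
      refine ⟨a, b, ?_⟩
      rcases c with c | c | c
      · exact Or.inl c
      · exact Or.inr (hgT y hy _ c)
      · exact hxT _ c
  have := bfs_tree hB hs hS (T ∪ A'.biUnion g) hcl (A'.image e) ?_ ?_ ?_ ?_
  · have h1 := Finset.card_union_le T (A'.biUnion g)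
    have h2 : (A'.biUnion g).card ≤ A'.card * m :=
      Finset.card_biUnion_le_card_mul _ _ _ (fun y hy => hg1 y (hA' hy))
    rw [hc] at h2
    omega
  · intro f hf
    obtain ⟨y, hy, rfl⟩ := Finset.mem_image.1 hf
    exact heG y (hA' hy)
  · intro f hf u hu
    obtain ⟨y, hy, rfl⟩ := Finset.mem_image.1 hf
    rw [Finset.mem_insert]
    rcases hg3 y (hA' hy) u hu with c | c | c
    · exact Or.inl c
    · exact Or.inr (hgT y hy _ c)
    · exact hxT _ c
  · intro w hw hm
    obtain ⟨y, hy, h⟩ := Finset.mem_image.1 hm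
    exact hnt y (hA' hy) w (hcl w hw).2.1 (hcl w hw).1 h
  · rw [Finset.card_image_of_injOn (he.mono (by exact_mod_cast hA')), hc]

/-- few neighbours on lower levels -/
theorem bfs_low {V : Type*} [DecidableEq V] {G : SimpleGraph V} {v : V} {R : V → Prop} {l : V → ℕ}
    {p : V → V} (hB : BFS G v R l p) {s k : ℕ} (hs : 1 ≤ s) (hS : Sparse G s k)
    (x : V) (hx : R x) (A : Finset V) (m : ℕ)
    (hA : ∀ y ∈ A, G.Adj x y ∧ l y ≤ l x ∧ l y ≤ m) (hk : l x + s * m + s ≤ k) :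
    A.card ≤ s := by
  by_contra hc
  push Not at hc
  have h1 : s ≤ (A.erase (p x)).card := by
    have := Finset.pred_card_le_card_erase (s := A) (a := p x)
    omega
  have := bfs_star hB hs hS x hx (A.erase (p x)) h1 m (fun y => s(x, y)) ?_ ?_ ?_ ?_
  · omega
  · intro a _ b _ hab
    exact Sym2.congr_right.1 hab
  · intro y hy
    exact (hA y (Finset.mem_of_mem_erase hy)).1
  · intro y hy w hw hwv h
    have hp := (hB.par w hw hwv).2.2
    have hy2 := hA y (Finset.mem_of_mem_erase hy)
    rcases Sym2.eq_iff.1 h with ⟨rfl, h⟩ | ⟨h, rfl⟩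
    · exact Finset.ne_of_mem_erase hy h
    · rw [← h] at hp
      omega
  · intro y hy
    have hy2 := hA y (Finset.mem_of_mem_erase hy)
    obtain ⟨T, hT1, hT2, hT3⟩ := bfs_anc hB _ y (hB.step x y hx hy2.1).1 rfl
    refine ⟨T, by omega, ?_, ?_⟩
    · intro w hw
      obtain ⟨a, b, c⟩ := hT2 w hw
      exact ⟨a, b, by tauto⟩
    · intro u hu
      rcases Sym2.mem_iff.1 hu with rfl | rfl <;> tauto

/-- few non-private neighbours -/
theorem bfs_priv {V : Type*} [DecidableEq V] {G : SimpleGraph V} {v : V} {R : V → Prop} {l : V → ℕ}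
    {p : V → V} (hB : BFS G v R l p) {s k : ℕ} (hs : 1 ≤ s) (hS : Sparse G s k)
    (x : V) (hx : R x) (A : Finset V)
    (hA : ∀ y ∈ A, G.Adj x y ∧ ¬ (l y = l x + 1 ∧ ∀ z, G.Adj y z → l z = l x → z = x))
    (hk : l x + s * (l x + 1) + s ≤ k) :
    A.card ≤ s := by
  by_contra hc
  push Not at hc
  have h1 : s ≤ (A.erase (p x)).card := by
    have := Finset.pred_card_le_card_erase (s := A) (a := p x)
    omega
  have key : ∀ y ∈ A.erase (p x), ∃ e : Sym2 V,
      (e = s(x, y) ∨ (l y = l x + 1 ∧ ∃ z, l z = l x ∧ z ≠ x ∧ e = s(y, z))) ∧ e ∈ G.edgeSet ∧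
      (∀ w, R w → w ≠ v → e ≠ s(w, p w)) ∧ 
      ∃ g : Finset V, g.card ≤ l x + 1 ∧
      (∀ w ∈ g, w ≠ v ∧ R w ∧ (p w = v ∨ p w ∈ g ∨ p w = x)) ∧
      (∀ u ∈ e, u = v ∨ u ∈ g ∨ u = x) := by
    intro y hy
    have hyp := Finset.ne_of_mem_erase hy
    obtain ⟨hadj, hpr⟩ := hA y (Finset.mem_of_mem_erase hy)
    obtain ⟨hRy, hly⟩ := hB.step x y hx hadj
    by_cases hl : l y = l x + 1
    · have hyv : y ≠ v := by
        rintro rfl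
        have := hB.lroot
        omega
      obtain ⟨q1, q2, q3⟩ := hB.par y hRy hyv
      by_cases hpy : p y = x
      · have : ∃ z, G.Adj y z ∧ l z = l x ∧ z ≠ x := by
          by_contra hcon
          push Not at hcon
          exact hpr ⟨hl, hcon⟩
        obtain ⟨z, hz1, hz2, hz3⟩ := this
        obtain ⟨T, hT1, hT2, hT3⟩ := bfs_anc hB _ z (hB.step y z hRy hz1).1 rfl
        refine ⟨s(y, z), Or.inr ⟨hl, z, hz2, hz3, rfl⟩, hz1, ?_, insert y T, ?_, ?_, ?_⟩
        · intro w hw hwv h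
          have hp := (hB.par w hw hwv).2.2
          rcases Sym2.eq_iff.1 h with ⟨rfl, h⟩ | ⟨h, rfl⟩
          · exact hz3 (h.trans hpy)
          · rw [← h] at hp
            omega
        · exact (Finset.card_insert_le _ _).trans (by omega)
        · intro w hw
          rcases Finset.mem_insert.1 hw with rfl | hw
          · exact ⟨hyv, hRy, by tauto⟩
          · obtain ⟨a, b, c⟩ := hT2 w hw
            exact ⟨a, b, by rw [Finset.mem_insert]; tauto⟩
        · intro u hu
          rw [Finset.mem_insert]
          rcases Sym2.mem_iff.1 hu with rfl | rfl <;> tauto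
      · obtain ⟨T, hT1, hT2, hT3⟩ := bfs_anc hB _ (p y) q2 rfl
        refine ⟨s(x, y), Or.inl rfl, hadj, ?_, insert y T, ?_, ?_, ?_⟩
        · intro w hw hwv h
          rcases Sym2.eq_iff.1 h with ⟨rfl, h⟩ | ⟨h, rfl⟩
          · exact hyp h
          · exact hpy h.symm
        · exact (Finset.card_insert_le _ _).trans (by omega)
        · intro w hw
          rcases Finset.mem_insert.1 hw with rfl | hw
          · exact ⟨hyv, hRy, by rw [Finset.mem_insert]; tauto⟩
          · obtain ⟨a, b, c⟩ := hT2 w hw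
            exact ⟨a, b, by rw [Finset.mem_insert]; tauto⟩
        · intro u hu
          rw [Finset.mem_insert]
          rcases Sym2.mem_iff.1 hu with rfl | rfl <;> tauto
    · obtain ⟨T, hT1, hT2, hT3⟩ := bfs_anc hB _ y hRy rfl
      refine ⟨s(x, y), Or.inl rfl, hadj, ?_, T, by omega, ?_, ?_⟩
      · intro w hw hwv h
        have hp := (hB.par w hw hwv).2.2
        rcases Sym2.eq_iff.1 h with ⟨rfl, h⟩ | ⟨h, rfl⟩
        · exact hyp h
        · rw [← h] at hp
          omega
      · intro w hw
        obtain ⟨a, b, c⟩ := hT2 w hw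
        exact ⟨a, b, by tauto⟩
      · intro u hu
        rcases Sym2.mem_iff.1 hu with rfl | rfl <;> tauto
  have key' : ∃ e : V → Sym2 V, ∀ y ∈ A.erase (p x), 
      (e y = s(x, y) ∨ (l y = l x + 1 ∧ ∃ z, l z = l x ∧ z ≠ x ∧ e y = s(y, z))) ∧ 
      e y ∈ G.edgeSet ∧
      (∀ w, R w → w ≠ v → e y ≠ s(w, p w)) ∧ 
      ∃ g : Finset V, g.card ≤ l x + 1 ∧
      (∀ w ∈ g, w ≠ v ∧ R w ∧ (p w = v ∨ p w ∈ g ∨ p w = x)) ∧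
      (∀ u ∈ e y, u = v ∨ u ∈ g ∨ u = x) := by
    have : Nonempty (Sym2 V) := ⟨s(x, x)⟩
    choose! e he using key
    exact ⟨e, he⟩
  obtain ⟨e, he⟩ := key'
  have := bfs_star hB hs hS x hx (A.erase (p x)) h1 (l x + 1) e ?_ (fun y hy => (he y hy).2.1)
    (fun y hy => (he y hy).2.2.1) (fun y hy => (he y hy).2.2.2)
  · omega
  · intro a ha b hb hab
    rcases (he a ha).1 with h | ⟨h1, z, h2, h3, h⟩ <;>
    rcases (he b hb).1 with h' | ⟨h1', z', h2', h3', h'⟩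
    · rw [h, h'] at hab
      exact Sym2.congr_right.1 hab
    · rw [h, h'] at hab
      rcases Sym2.eq_iff.1 hab with ⟨rfl, _⟩ | ⟨rfl, _⟩
      · omega
      · exact absurd rfl h3'
    · rw [h, h'] at hab
      rcases Sym2.eq_iff.1 hab with ⟨rfl, _⟩ | ⟨_, rfl⟩
      · omega
      · exact absurd rfl h3
    · rw [h, h'] at hab
      rcases Sym2.eq_iff.1 hab with ⟨h, _⟩ | ⟨rfl, _⟩
      · exact h
      · omega

theorem bfs_count {V : Type*} [Fintype V] [DecidableEq V] {G : SimpleGraph V} [DecidableRel G.Adj]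
    {v : V} {R : V → Prop} {l : V → ℕ}
    {p : V → V} (hB : BFS G v R l p) {s k h : ℕ} (hs : 1 ≤ s) (hS : Sparse G s k)
    (h2 : 2 ≤ h) (hk : h * (s + 1) ≤ k) (D : ℝ) (hD : 0 ≤ D)
    (hdeg : ∀ x, R x → D + s ≤ G.degree x) : D ^ h < s * Fintype.card V := by
  classical
  set L : ℕ → Finset V := fun j => Finset.univ.filter (fun x => R x ∧ l x = j) with hL
  have hmemL : ∀ j x, x ∈ L j ↔ R x ∧ l x = j := by intro j x; simp [hL]
  have split : ∀ (x : V) (P : V → Prop) [DecidablePred P], R x →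
      ((G.neighborFinset x).filter (fun y => ¬ P y)).card ≤ s → 
      D ≤ ((G.neighborFinset x).filter P).card := by
    intro x P _ hx hle
    have h1 := Finset.card_filter_add_card_filter_not (s := G.neighborFinset x) P
    rw [G.card_neighborFinset_eq_degree] at h1
    have h2 := hdeg x hx
    rw [← h1] at h2
    push_cast at h2
    have h3 : (((G.neighborFinset x).filter (fun y => ¬ P y)).card : ℝ) ≤ s := by exact_mod_cast hle
    linarith
  have grow : ∀ j, j + 2 ≤ h → D * (L j).card ≤ (L (j+1)).card := by
    intro j hj
    set Pc : V → Finset V := fun x => (G.neighborFinset x).filter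
      (fun y => l y = l x + 1 ∧ ∀ z, G.Adj y z → l z = l x → z = x) with hPc
    have h1 : ∀ x ∈ L j, D ≤ (Pc x).card := by
      intro x hx
      obtain ⟨hx, hlx⟩ := (hmemL j x).1 hx
      refine split x (fun y => l y = l x + 1 ∧ ∀ z, G.Adj y z → l z = l x → z = x) hx ?_
      refine bfs_priv hB hs hS x hx _ ?_ ?_
      · intro y hy
        rw [Finset.mem_filter, SimpleGraph.mem_neighborFinset] at hy
        exact hy
      · rw [hlx]
        refine le_trans ?_ hk
        nlinarith
    have h3 : (L j).biUnion Pc ⊆ L (j+1) := by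
      intro y hy
      obtain ⟨x, hx, hy⟩ := Finset.mem_biUnion.1 hy
      obtain ⟨hx, hlx⟩ := (hmemL j x).1 hx
      simp only [hPc, Finset.mem_filter, SimpleGraph.mem_neighborFinset] at hy
      exact (hmemL _ _).2 ⟨(hB.step x y hx hy.1).1, by omega⟩
    have h4 : ((L j).biUnion Pc).card = ∑ x ∈ L j, (Pc x).card := by
      apply Finset.card_biUnion
      intro a ha b hb hab
      change Disjoint (Pc a) (Pc b)
      rw [Finset.disjoint_left]
      intro y hya hyb
      simp only [hPc, Finset.mem_filter, SimpleGraph.mem_neighborFinset] at hya hyb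
      have ha := ((hmemL j a).1 ha).2
      have hb := ((hmemL j b).1 hb).2
      exact hab (hyb.2.2 a hya.1.symm (by omega))
    have h5 : (∑ x ∈ L j, (Pc x).card) ≤ (L (j+1)).card := h4 ▸ Finset.card_le_card h3
    calc D * (L j).card = ∑ x ∈ L j, D := by simp [mul_comm]
      _ ≤ ∑ x ∈ L j, ((Pc x).card : ℝ) := Finset.sum_le_sum h1
      _ ≤ _ := by exact_mod_cast h5
  have hpow : ∀ j, j + 1 ≤ h → D ^ j ≤ (L j).card := by
    intro j
    induction j with
    | zero =>
      intro _
      have : 0 < (L 0).card := Finset.card_pos.2 ⟨v, (hmemL _ _).2 ⟨hB.root, hB.lroot⟩⟩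
      simpa using this
    | succ j ih =>
      intro hj
      calc D ^ (j+1) = D * D ^ j := by ring
        _ ≤ D * (L j).card := mul_le_mul_of_nonneg_left (ih (by omega)) hD
        _ ≤ _ := grow j (by omega)
  obtain ⟨j, rfl⟩ : ∃ j, h = j + 1 := ⟨h - 1, by omega⟩
  have hdc := Finset.sum_card_bipartiteAbove_eq_sum_card_bipartiteBelow (s := L j) (t := L (j+1))
    (fun x y => G.Adj x y)
  have hup : ∀ x ∈ L j, D ≤ ((L (j+1)).bipartiteAbove (fun x y => G.Adj x y) x).card := by
    intro x hx
    obtain ⟨hx, hlx⟩ := (hmemL j x).1 hx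
    have := split x (fun y => l y = j + 1) hx (bfs_low hB hs hS x hx _ j ?_ ?_)
    · refine this.trans ?_
      norm_cast
      apply Finset.card_le_card
      intro y hy
      simp only [Finset.mem_filter, SimpleGraph.mem_neighborFinset] at hy
      rw [Finset.mem_bipartiteAbove]
      exact ⟨(hmemL _ _).2 ⟨(hB.step x y hx hy.1).1, hy.2⟩, hy.1⟩
    · intro y hy
      simp only [Finset.mem_filter, SimpleGraph.mem_neighborFinset] at hy
      have := (hB.step x y hx hy.1).2
      exact ⟨hy.1, by omega, by omega⟩
    · rw [hlx]
      refine le_trans ?_ hk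
      nlinarith
  have hdn : ∀ w ∈ L (j+1), ((L j).bipartiteBelow (fun x y => G.Adj x y) w).card ≤ s := by
    intro w hw
    obtain ⟨hw, hlw⟩ := (hmemL _ w).1 hw
    refine bfs_low hB hs hS w hw _ j ?_ ?_
    · intro y hy
      rw [Finset.mem_bipartiteBelow] at hy
      have := (hmemL _ _).1 hy.1
      exact ⟨hy.2.symm, by omega, by omega⟩
    · rw [hlw]
      refine le_trans ?_ hk
      nlinarith
  have hsum : D * (L j).card ≤ s * (L (j+1)).card := by
    calc D * (L j).card = ∑ x ∈ L j, D := by simp [mul_comm]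
      _ ≤ ∑ x ∈ L j, (((L (j+1)).bipartiteAbove (fun x y => G.Adj x y) x).card : ℝ) :=
          Finset.sum_le_sum hup
      _ = ∑ w ∈ L (j+1), (((L j).bipartiteBelow (fun x y => G.Adj x y) w).card : ℝ) := by
          exact_mod_cast hdc
      _ ≤ ∑ w ∈ L (j+1), (s : ℝ) := Finset.sum_le_sum (fun w hw => by exact_mod_cast hdn w hw)
      _ = _ := by simp [mul_comm]
  have hlt : (L (j+1)).card < Fintype.card V := by
    apply Finset.card_lt_univ_of_notMem (x := v)
    intro hv
    have := ((hmemL _ _).1 hv).2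
    have := hB.lroot
    omega
  have hsp : (0 : ℝ) < s := by exact_mod_cast hs
  calc D ^ (j+1) = D * D ^ j := by ring
    _ ≤ D * (L j).card := mul_le_mul_of_nonneg_left (hpow j le_rfl) hD
    _ ≤ s * (L (j+1)).card := hsum
    _ < s * Fintype.card V := by
      apply mul_lt_mul_of_pos_left _ hsp
      exact_mod_cast hlt

theorem bfs_exists {V : Type*} (G : SimpleGraph V) (v : V) :
    ∃ p, BFS G v (fun x => G.Reachable v x) (fun x => G.dist v x) p := by
  have key : ∀ x, G.Reachable v x → x ≠ v → ∃ y, G.Adj x y ∧ G.Reachable v y ∧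
      G.dist v y + 1 = G.dist v x := by
    intro x hx hne
    obtain ⟨w, hw⟩ := hx.symm.exists_walk_length_eq_dist
    cases w with
    | nil => exact absurd rfl hne
    | cons hadj w' =>
      rename_i y
      have hr : G.Reachable v y := hx.trans hadj.reachable
      refine ⟨y, hadj, hr, ?_⟩
      have h1 := G.dist_le w'
      rw [SimpleGraph.Walk.length_cons] at hw
      rw [SimpleGraph.dist_comm] at h1 hw
      obtain ⟨u, hu⟩ := hr.exists_walk_length_eq_dist
      have h2 := G.dist_le (u.concat hadj.symm)
      rw [SimpleGraph.Walk.length_concat] at h2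
      omega
  have : Nonempty V := ⟨v⟩
  choose! p hp using key
  refine ⟨p, SimpleGraph.Reachable.refl _, by simp, ?_, hp⟩
  intro x y hx hadj
  refine ⟨hx.trans hadj.reachable, ?_⟩
  obtain ⟨u, hu⟩ := hx.exists_walk_length_eq_dist
  have h2 := G.dist_le (u.concat hadj)
  rw [SimpleGraph.Walk.length_concat] at h2
  omega

/-- subgraph of large minimum degree -/
theorem min_deg {V : Type*} [Fintype V] [DecidableEq V] (t : ℝ) (ht : 0 < t) :
    ∀ (m : ℕ) (U : Finset V) (G : SimpleGraph V), U.card = m → U.Nonempty →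
    (∀ x y, G.Adj x y → x ∈ U) → t * U.card ≤ Nat.card G.edgeSet →
    ∃ (H : SimpleGraph V) (v : V), H ≤ G ∧ ∀ x, H.Reachable v x → 
      t ≤ Nat.card (H.neighborSet x) := by
  classical
  intro m
  induction m with
  | zero =>
    intro U G h0 hne
    exact absurd (Finset.card_eq_zero.1 h0) hne.ne_empty
  | succ m ih =>
    intro U G hm hne hU hc
    by_cases hall : ∀ x ∈ U, t ≤ Nat.card (G.neighborSet x)
    · obtain ⟨v, hv⟩ := hne
      refine ⟨G, v, le_rfl, ?_⟩
      intro x hx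
      apply hall
      by_cases hvx : x = v
      · exact hvx ▸ hv
      · obtain ⟨w⟩ := hx.symm
        cases w with
        | nil => exact absurd rfl hvx
        | cons hadj w' => exact hU _ _ hadj
    · push Not at hall
      obtain ⟨x, hx, hlt⟩ := hall
      have hdel : Nat.card G.edgeSet ≤
          Nat.card (G.deleteIncidenceSet x).edgeSet + Nat.card (G.neighborSet x) := by
        rw [SimpleGraph.edgeSet_deleteIncidenceSet]
        have h1 : Nat.card (G.neighborSet x) = Nat.card (G.incidenceSet x) :=
          (Nat.card_congr (G.incidenceSetEquivNeighborSet x)).symm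
        rw [h1]
        simp only [Nat.card_coe_set_eq]
        exact Set.ncard_le_ncard_sdiff_add_ncard _ _ (Set.toFinite _)
      have hdel' : (Nat.card G.edgeSet : ℝ) ≤
          Nat.card (G.deleteIncidenceSet x).edgeSet + Nat.card (G.neighborSet x) := by
        exact_mod_cast hdel
      have hcU : (U.erase x).card = m := by
        rw [Finset.card_erase_of_mem hx, hm]; rfl
      rw [hm] at hc
      push_cast at hc
      have hpos : t * m < Nat.card (G.deleteIncidenceSet x).edgeSet := by linarith
      have hsub : ∀ a b, (G.deleteIncidenceSet x).Adj a b → a ∈ U.erase x := by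
        intro a b hab
        rw [SimpleGraph.deleteIncidenceSet_adj] at hab
        exact Finset.mem_erase.2 ⟨hab.2.1, hU _ _ hab.1⟩
      have hne' : (U.erase x).Nonempty := by
        have h0 : (0:ℝ) < Nat.card (G.deleteIncidenceSet x).edgeSet := 
          lt_of_le_of_lt (by positivity) hpos
        have h0' : 0 < Nat.card (G.deleteIncidenceSet x).edgeSet := by exact_mod_cast h0
        obtain ⟨⟨e, he⟩⟩ := (Nat.card_pos_iff.1 h0').1
        induction e using Sym2.ind with
        | _ a b => exact ⟨a, hsub a b he⟩
      obtain ⟨H, v, h1, h2⟩ := ih (U.erase x) (G.deleteIncidenceSet x) hcU hne' hsub 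
        (by rw [hcU]; exact hpos.le)
      exact ⟨H, v, h1.trans (G.deleteIncidenceSet_le x), h2⟩

theorem graph_bound {V : Type*} [Fintype V] [Nonempty V] [DecidableEq V] (G : SimpleGraph V)
    {s k h : ℕ} (hs : 1 ≤ s) (hS : Sparse G s k) (h2 : 2 ≤ h) (hk : h * (s + 1) ≤ k) :
    (Nat.card G.edgeSet : ℝ) <
      (((s : ℝ) * Fintype.card V) ^ ((1:ℝ) / h) + s) * Fintype.card V := by
  classical
  by_contra hcon
  push Not at hcon
  set D : ℝ := ((s : ℝ) * Fintype.card V) ^ ((1:ℝ) / h) with hD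
  have hD0 : 0 ≤ D := by positivity
  have hsp : (0 : ℝ) < s := by exact_mod_cast hs
  obtain ⟨H, v, hHG, hH⟩ := min_deg (D + s) (by linarith) _ Finset.univ G rfl 
    Finset.univ_nonempty (by simp) (by simpa using hcon)
  obtain ⟨p, hp⟩ := bfs_exists H v
  have hSH : Sparse H s k := fun F W h1 => hS F W (fun e he => SimpleGraph.edgeSet_mono hHG (h1 e he))
  have := bfs_count hp hs hSH h2 hk D hD0 ?_
  · rw [hD, one_div, Real.rpow_inv_natCast_pow (by positivity) (by omega)] at this
    exact lt_irrefl _ this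
  · intro x hx
    have := hH x hx
    rwa [Nat.card_eq_fintype_card, SimpleGraph.card_neighborSet_eq_degree] at this

/-- link graph -/
def linkG {n : ℕ} (E : Finset (Finset (Fin n))) (S : Finset (Fin n)) : SimpleGraph (Fin n) where
  Adj x y := x ≠ y ∧ x ∉ S ∧ y ∉ S ∧ S ∪ {x, y} ∈ E
  symm := ⟨by
    rintro x y ⟨h1, h2, h3, h4⟩
    exact ⟨h1.symm, h3, h2, by rwa [Finset.pair_comm]⟩⟩
  loopless := ⟨fun x h => h.1 rfl⟩

theorem linkG_sparse {n : ℕ} (E : Finset (Finset (Fin n))) (S : Finset (Fin n)) (r k s : ℕ) (q : ℤ)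
    (hs : (s : ℤ) = q + r) (hScard : S.card + 2 = r) (hfree : HFree r k q E) :
    Sparse (linkG E S) s k := by
  intro F W hF hW h1 h2
  have hprop : ∀ e ∈ F, Disjoint S e.toFinset ∧ S ∪ e.toFinset ∈ E := by
    intro e he
    have := hF e he
    induction e using Sym2.ind with
    | _ a b =>
      obtain ⟨h1, h2, h3, h4⟩ := this
      rw [Sym2.toFinset_mk_eq]
      refine ⟨?_, h4⟩
      rw [Finset.disjoint_right]
      intro x hx
      simp at hx
      rcases hx with rfl | rfl <;> assumption
  have hinj : Set.InjOn (fun e : Sym2 (Fin n) => S ∪ e.toFinset) (F : Set (Sym2 (Fin n))) := by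
    intro a ha b hb hab
    have ha' := (hprop a ha).1
    have hb' := (hprop b hb).1
    have : a.toFinset = b.toFinset := by
      ext x
      have hab' : S ∪ a.toFinset = S ∪ b.toFinset := hab
      have := congrArg (fun t => x ∈ t) hab'
      simp only [Finset.mem_union, eq_iff_iff] at this
      have u1 := fun h => (Finset.disjoint_left.1 ha') (h : x ∈ S)
      have u2 := fun h => (Finset.disjoint_left.1 hb') (h : x ∈ S)
      tauto
    apply Sym2.ext
    intro x
    rw [← Sym2.mem_toFinset, this, Sym2.mem_toFinset]
  have hc : (F.image (fun e => S ∪ e.toFinset)).card = F.card := Finset.card_image_of_injOn hinj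
  have := hfree F.card (by omega) h2 (F.image (fun e => S ∪ e.toFinset)) ?_ hc
  · have hsub : (F.image (fun e => S ∪ e.toFinset)).biUnion id ⊆ S ∪ W := by
      intro x hx
      simp only [Finset.mem_biUnion, Finset.mem_image, id] at hx
      obtain ⟨_, ⟨e, he, rfl⟩, hx⟩ := hx
      rcases Finset.mem_union.1 hx with hx | hx
      · exact Finset.mem_union_left _ hx
      · exact Finset.mem_union_right _ (hW e he x (Sym2.mem_toFinset.1 hx))
    have h3 := Finset.card_le_card hsub
    have h4 := Finset.card_union_le S W
    omega
  · intro f hf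
    obtain ⟨e, he, rfl⟩ := Finset.mem_image.1 hf
    exact (hprop e he).2

theorem linkG_card {n : ℕ} (E : Finset (Finset (Fin n))) (S : Finset (Fin n)) (r : ℕ)
    (hScard : S.card + 2 = r) (hunif : ∀ e ∈ E, e.card = r) :
    (E.filter (fun e => S ⊆ e)).card ≤ Nat.card (linkG E S).edgeSet := by
  classical
  rw [Nat.card_eq_fintype_card, ← SimpleGraph.edgeFinset_card]
  apply Finset.card_le_card_of_surjOn (fun e => S ∪ e.toFinset)
  intro e he
  have he := Finset.mem_filter.1 (Finset.mem_coe.1 he)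
  have h1 : (e \ S).card = 2 := by
    have := Finset.card_sdiff_add_card_eq_card he.2
    have := hunif e he.1
    omega
  obtain ⟨a, b, hab, h2⟩ := Finset.card_eq_two.1 h1
  have hu : S ∪ {a, b} = e := by
    rw [← h2]
    exact Finset.union_sdiff_of_subset he.2
  have ha : a ∈ e \ S := by rw [h2]; simp
  have hb : b ∈ e \ S := by rw [h2]; simp
  refine ⟨s(a, b), ?_, ?_⟩
  · simp only [SimpleGraph.coe_edgeFinset, SimpleGraph.mem_edgeSet]
    exact ⟨hab, (Finset.mem_sdiff.1 ha).2, (Finset.mem_sdiff.1 hb).2, hu ▸ he.1⟩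
  · simp only [Sym2.toFinset_mk_eq]
    exact hu

/-- For `r ≥ 2`, `q ≥ -r+1`, `n ≥ k ≥ 2q+2r+2`, `h = ⌊k/(q+r+1)⌋` and
`C' = (q+r)^{1/h}`, every `H^{(r)}(k,q)`-free `r`-uniform hypergraph on `n` vertices has
fewer than `(2C'/r!)·n^{r-1+1/h} + (2(q+r)/r!)·n^{r-1}` edges. -/
theorem statement2 (n k r : ℕ) (q h : ℤ) (C' : ℝ)
    (hr : 2 ≤ r) (hq : -(r : ℤ) + 1 ≤ q)
    (hk : 2 * q + 2 * r + 2 ≤ (k : ℤ)) (hn : k ≤ n)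
    (hh : h = (k : ℤ) / (q + r + 1))
    (hC : C' = ((q : ℝ) + (r : ℝ)) ^ ((1 : ℝ) / (h : ℝ)))
    (E : Finset (Finset (Fin n))) (hunif : ∀ e ∈ E, e.card = r)
    (hfree : HFree r k q E) :
    (E.card : ℝ) <
      (2 * C' / (r.factorial : ℝ)) * (n : ℝ) ^ ((r : ℝ) - 1 + 1 / (h : ℝ)) +
        (2 * ((q : ℝ) + (r : ℝ)) / (r.factorial : ℝ)) * (n : ℝ) ^ ((r : ℝ) - 1) := by
  obtain ⟨s, hs⟩ : ∃ s : ℕ, (s : ℤ) = q + r := ⟨(q + r).toNat, by omega⟩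
  have hs1 : 1 ≤ s := by omega
  have hsR : (q : ℝ) + r = s := by exact_mod_cast hs.symm
  have h2' : 2 ≤ h := by
    rw [hh]
    exact (Int.le_ediv_iff_mul_le (by omega)).2 (by omega)
  have hhk' : h * (q + r + 1) ≤ k := by
    rw [hh]
    exact Int.ediv_mul_le _ (by omega)
  lift h to ℕ using by omega
  have h2 : 2 ≤ h := by omega
  have hhk : h * (s + 1) ≤ k := by
    rw [← hs] at hhk'
    exact_mod_cast hhk'
  rw [hsR] at hC ⊢
  obtain ⟨m, rfl⟩ : ∃ m, r = m + 2 := ⟨r - 2, by omega⟩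
  have hn4 : 4 ≤ n := by omega
  have hn0 : (0 : ℝ) < n := by exact_mod_cast (by omega : 0 < n)
  have hs0 : (0 : ℝ) < s := by exact_mod_cast hs1
  have : Nonempty (Fin n) := ⟨⟨0, by omega⟩⟩
  have hC0 : 0 < C' := by rw [hC]; positivity
  set X : ℝ := (((s : ℝ) * n) ^ ((1:ℝ) / h) + s) * n with hX
  have hX0 : 0 < X := by positivity
  have hfac : (0:ℝ) < ((m + 2).factorial : ℝ) := by positivity
  have hrhs : (2 * C' / ((m + 2).factorial : ℝ)) * (n : ℝ) ^ (((m + 2 : ℕ) : ℝ) - 1 + 1 / ((h : ℤ) : ℝ)) +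
        (2 * (s : ℝ) / ((m + 2).factorial : ℝ)) * (n : ℝ) ^ (((m + 2 : ℕ) : ℝ) - 1) =
        2 / ((m + 2).factorial : ℝ) * ((n : ℝ) ^ m * X) := by
    have e1 : (((m + 2 : ℕ) : ℝ) - 1) = ((m + 1 : ℕ) : ℝ) := by push_cast; ring
    rw [e1, Real.rpow_add hn0, Real.rpow_natCast, hX, hC, Real.mul_rpow hs0.le hn0.le]
    push_cast
    ring
  rw [hrhs]
  rcases Finset.eq_empty_or_nonempty E with rfl | hE
  · simp only [Finset.card_empty, Nat.cast_zero]
    positivity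
  have hmn : m + 2 ≤ n := by
    obtain ⟨e, he⟩ := hE
    have := Finset.card_le_univ e
    rw [hunif e he, Fintype.card_fin] at this
    exact this
  have hdc := Finset.sum_card_bipartiteAbove_eq_sum_card_bipartiteBelow
    (s := Finset.powersetCard m (Finset.univ : Finset (Fin n))) (t := E) (fun S e => S ⊆ e)
  have hright : ∀ e ∈ E, ((Finset.powersetCard m (Finset.univ : Finset (Fin n))).bipartiteBelow
      (fun S e => S ⊆ e) e).card = (m + 2).choose 2 := by
    intro e he
    have : (Finset.powersetCard m (Finset.univ : Finset (Fin n))).bipartiteBelow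
      (fun S e => S ⊆ e) e = Finset.powersetCard m e := by
      ext S
      simp [Finset.mem_bipartiteBelow, Finset.mem_powersetCard, and_comm]
    rw [this, Finset.card_powersetCard, hunif e he]
    exact Nat.choose_symm_add
  rw [Finset.sum_congr rfl hright, Finset.sum_const, smul_eq_mul] at hdc
  have hleft : ∀ S ∈ Finset.powersetCard m (Finset.univ : Finset (Fin n)),
      ((E.bipartiteAbove (fun S e => S ⊆ e) S).card : ℝ) < X := by
    intro S hS
    have hSc := (Finset.mem_powersetCard.1 hS).2
    have h1 := linkG_card E S (m+2) (by omega) hunif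
    have h3 := graph_bound (linkG E S) hs1 (linkG_sparse E S (m+2) k s q hs (by omega) hfree) h2 hhk
    rw [Fintype.card_fin] at h3
    refine lt_of_le_of_lt ?_ h3
    exact_mod_cast h1
  have hne : (Finset.powersetCard m (Finset.univ : Finset (Fin n))).Nonempty := by
    rw [Finset.powersetCard_nonempty, Finset.card_univ, Fintype.card_fin]
    omega
  have hsum := Finset.sum_lt_sum_of_nonempty hne hleft
  rw [Finset.sum_const, Finset.card_powersetCard, Finset.card_univ, Fintype.card_fin,
    nsmul_eq_mul] at hsum
  have hdcR : (∑ S ∈ Finset.powersetCard m (Finset.univ : Finset (Fin n)),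
      ((E.bipartiteAbove (fun S e => S ⊆ e) S).card : ℝ)) = E.card * ((m+2).choose 2 : ℕ) := by
    exact_mod_cast hdc
  rw [hdcR] at hsum
  have hch : ((n.choose m : ℕ) : ℝ) ≤ (n : ℝ) ^ m / (m.factorial : ℝ) := Nat.choose_le_pow_div m n
  have hmf : (0:ℝ) < (m.factorial : ℝ) := by positivity
  have hfe : ((m + 2).factorial : ℝ) = 2 * (((m+2).choose 2 : ℕ) : ℝ) * m.factorial := by
    have := Nat.add_choose_mul_factorial_mul_factorial m 2
    rw [← this]
    simp only [Nat.factorial_two]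
    push_cast
    ring
  have h5 : (E.card : ℝ) * ((m+2).choose 2 : ℕ) < (n : ℝ) ^ m / (m.factorial : ℝ) * X :=
    lt_of_lt_of_le hsum (mul_le_mul_of_nonneg_right hch hX0.le)
  have h6 : (E.card : ℝ) * ((m+2).choose 2 : ℕ) * m.factorial < (n : ℝ) ^ m * X := by
    have := mul_lt_mul_of_pos_right h5 hmf
    have e : (n : ℝ) ^ m / (m.factorial : ℝ) * X * m.factorial = (n : ℝ) ^ m * X := by
      field_simp
    rwa [e] at this
  rw [div_mul_eq_mul_div, lt_div_iff₀ hfac, hfe]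
  linarith
end

section
/- Let n, k, r be integers with r ≥ 2 and n ≥ k ≥ 2r+2, and let C'' = r^{1/⌊k/(r+1)⌋} (a real number). Then m(n,r,k) < (2C''/r!)·n^{r−1+1/⌊k/(r+1)⌋} + (2/(r−1)!)·n^{r−1}. -/
structure BfsTree {V ι : Type*} [DecidableEq V] (I : Finset ι) (g : ι → Finset V) (root : V)
    (R : Finset V) (lev : V → ℕ) (pe : V → ι) (par : V → V) : Prop where
  root_mem : root ∈ R
  lev_root : lev root = 0
  pe_mem : ∀ x ∈ R, x ≠ root → pe x ∈ I
  pe_eq : ∀ x ∈ R, x ≠ root → g (pe x) = {x, par x}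
  par_mem : ∀ x ∈ R, x ≠ root → par x ∈ R
  lev_par : ∀ x ∈ R, x ≠ root → lev x = lev (par x) + 1
  edge : ∀ i ∈ I, ∀ x y, x ∈ R → x ≠ y → g i = {x, y} → y ∈ R ∧ lev y ≤ lev x + 1

theorem exists_bfs {V ι : Type*} [Fintype V] [DecidableEq V] [Nonempty ι] (I : Finset ι)
    (g : ι → Finset V) (root : V) :
    ∃ R lev pe par, BfsTree I g root R lev pe par := by
  classical
  let G : SimpleGraph V :=
    { Adj := fun x y => x ≠ y ∧ ∃ i ∈ I, g i = {x, y}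
      symm := ⟨by
        rintro x y ⟨h, i, hi, e⟩
        exact ⟨h.symm, i, hi, by rw [e, Finset.pair_comm]⟩⟩
      loopless := ⟨fun x h => h.1 rfl⟩ }
  have key : ∀ x, ∃ p : ι × V, G.Reachable root x → x ≠ root →
      p.1 ∈ I ∧ g p.1 = {x, p.2} ∧ G.Reachable root p.2 ∧ G.dist root x = G.dist root p.2 + 1 := by
    intro x
    by_cases h : G.Reachable root x ∧ x ≠ root
    · obtain ⟨hx, hne⟩ := h
      obtain ⟨w, hw⟩ := hx.symm.exists_walk_length_eq_dist
      cases w with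
      | nil => exact absurd rfl hne
      | cons hadj w' =>
        rename_i y
        obtain ⟨hxy, i, hi, e⟩ := id hadj
        refine ⟨(i, y), fun _ _ => ⟨hi, e, w'.reverse.reachable, ?_⟩⟩
        simp only [SimpleGraph.Walk.length_cons] at hw
        have h1 : G.dist y root ≤ w'.length := SimpleGraph.dist_le w'
        obtain ⟨w2, hw2⟩ := w'.reachable.exists_walk_length_eq_dist
        have h2 : G.dist x root ≤ (SimpleGraph.Walk.cons hadj w2).length := SimpleGraph.dist_le _
        simp only [SimpleGraph.Walk.length_cons] at h2
        rw [SimpleGraph.dist_comm (u := root) (v := x), SimpleGraph.dist_comm (u := root) (v := y)]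
        omega
    · exact ⟨(Classical.arbitrary ι, x), fun a b => absurd ⟨a, b⟩ h⟩
  choose p hp using key
  refine ⟨Finset.univ.filter (fun x => G.Reachable root x), G.dist root, fun x => (p x).1,
    fun x => (p x).2, ?_, ?_, ?_, ?_, ?_, ?_, ?_⟩
  · simp
  · simp
  · intro x hx hne
    exact (hp x (by simpa using hx) hne).1
  · intro x hx hne
    exact (hp x (by simpa using hx) hne).2.1
  · intro x hx hne
    simpa using (hp x (by simpa using hx) hne).2.2.1
  · intro x hx hne
    exact (hp x (by simpa using hx) hne).2.2.2
  · intro i hi x y hx hne e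
    have hadj : G.Adj x y := ⟨hne, i, hi, e⟩
    have hx' : G.Reachable root x := by simpa using hx
    refine ⟨by simpa using hx'.trans hadj.reachable, ?_⟩
    obtain ⟨w2, hw2⟩ := hx'.symm.exists_walk_length_eq_dist
    have h2 : G.dist y root ≤ (SimpleGraph.Walk.cons hadj.symm w2).length := SimpleGraph.dist_le _
    simp only [SimpleGraph.Walk.length_cons] at h2
    rw [SimpleGraph.dist_comm (u := root) (v := x), SimpleGraph.dist_comm (u := root) (v := y)]
    omega

namespace BfsTree

variable {V ι : Type*} [DecidableEq V] [DecidableEq ι] {I : Finset ι} {g : ι → Finset V} {root : V}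
    {R : Finset V} {lev : V → ℕ} {pe : V → ι} {par : V → V}

theorem pe_inj (h : BfsTree I g root R lev pe par) {x y : V} (hx : x ∈ R) (hy : y ∈ R)
    (hx0 : x ≠ root) (hy0 : y ≠ root) (e : pe x = pe y) : x = y := by
  by_contra hne
  have h1 := h.pe_eq x hx hx0
  have h2 := h.pe_eq y hy hy0
  rw [e] at h1
  have e2 : ({x, par x} : Finset V) = {y, par y} := h1.symm.trans h2
  have hx1 : x ∈ ({y, par y} : Finset V) := by rw [← e2]; simp
  have hy1 : y ∈ ({x, par x} : Finset V) := by rw [e2]; simp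
  simp only [Finset.mem_insert, Finset.mem_singleton] at hx1 hy1
  have l1 := h.lev_par x hx hx0
  have l2 := h.lev_par y hy hy0
  rcases hx1 with hx1 | hx1
  · exact hne hx1
  rcases hy1 with hy1 | hy1
  · exact hne hy1.symm
  rw [← hx1] at l2
  rw [← hy1] at l1
  omega

theorem exists_anc (h : BfsTree I g root R lev pe par) : ∀ (d : ℕ) (x : V), x ∈ R → lev x = d →
    ∃ A : Finset V, A ⊆ R ∧ root ∉ A ∧ A.card ≤ d ∧ (x = root ∨ x ∈ A) ∧
      ∀ y ∈ A, par y = root ∨ par y ∈ A := by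
  intro d
  induction d with
  | zero =>
    intro x hx hl
    refine ⟨∅, by simp, by simp, by simp, Or.inl ?_, by simp⟩
    by_contra hne
    have := h.lev_par x hx hne
    omega
  | succ d ih =>
    intro x hx hl
    have hne : x ≠ root := by
      rintro rfl
      rw [h.lev_root] at hl
      omega
    obtain ⟨A, h1, h2, h3, h4, h5⟩ := ih (par x) (h.par_mem x hx hne)
      (by have := h.lev_par x hx hne; omega)
    refine ⟨insert x A, ?_, ?_, ?_, Or.inr (by simp), ?_⟩
    · intro y hy
      rcases Finset.mem_insert.1 hy with rfl | hy
      · exact hx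
      · exact h1 hy
    · simp only [Finset.mem_insert, not_or]
      exact ⟨hne.symm, h2⟩
    · exact (Finset.card_insert_le _ _).trans (by omega)
    · intro y hy
      rcases Finset.mem_insert.1 hy with rfl | hy
      · exact h4.imp id (fun h => Finset.mem_insert_of_mem h)
      · exact (h5 y hy).imp id (fun h => Finset.mem_insert_of_mem h)

theorem core (h : BfsTree I g root R lev pe par) {s K : ℕ}
    (hcode : ∀ J ⊆ I, J.Nonempty → J.card ≤ K → J.card ≤ (J.biUnion g).card + s)
    (W : Finset V) (hWR : W ⊆ R) (hW0 : root ∉ W) (hcl : ∀ y ∈ W, par y = root ∨ par y ∈ W)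
    (Q : Finset ι) (hQI : Q ⊆ I) (hQ : ∀ i ∈ Q, ∀ x ∈ R, x ≠ root → pe x ≠ i)
    (hQW : ∀ i ∈ Q, g i ⊆ insert root W) (hQc : Q.card = s + 2) (hK : W.card + (s + 2) ≤ K) :
    False := by
  have hne : ∀ y ∈ W, y ≠ root := fun y hy e => hW0 (e ▸ hy)
  have hdisj : Disjoint (W.image pe) Q := by
    rw [Finset.disjoint_left]
    intro i hi hi'
    obtain ⟨y, hy, rfl⟩ := Finset.mem_image.1 hi
    exact hQ _ hi' y (hWR hy) (hne y hy) rfl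
  have hc : (W.image pe ∪ Q).card = W.card + (s + 2) := by
    rw [Finset.card_union_of_disjoint hdisj, hQc, Finset.card_image_of_injOn]
    intro x hx y hy e
    exact h.pe_inj (hWR hx) (hWR hy) (hne x hx) (hne y hy) e
  have h1 := hcode (W.image pe ∪ Q) (by
    intro i hi
    rcases Finset.mem_union.1 hi with hi | hi
    · obtain ⟨y, hy, rfl⟩ := Finset.mem_image.1 hi
      exact h.pe_mem y (hWR hy) (hne y hy)
    · exact hQI hi) (Finset.card_pos.1 (by omega)) (by omega)
  have h2 : (W.image pe ∪ Q).biUnion g ⊆ insert root W := by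
    intro v hv
    obtain ⟨i, hi, hv⟩ := Finset.mem_biUnion.1 hv
    rcases Finset.mem_union.1 hi with hi | hi
    · obtain ⟨y, hy, rfl⟩ := Finset.mem_image.1 hi
      rw [h.pe_eq y (hWR hy) (hne y hy)] at hv
      simp only [Finset.mem_insert, Finset.mem_singleton] at hv ⊢
      rcases hv with rfl | rfl
      · exact Or.inr hy
      · exact hcl y hy
    · exact hQW i hi hv
  have h3 := Finset.card_le_card h2
  have h4 := Finset.card_insert_le root W
  omega

theorem nontree (h : BfsTree I g root R lev pe par) {s K : ℕ}
    (hcode : ∀ J ⊆ I, J.Nonempty → J.card ≤ K → J.card ≤ (J.biUnion g).card + s)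
    (u : V) (hu : u ∈ R) (l : ℕ) (hl : lev u + (s + 2) * (l + 1) ≤ K)
    (Q : Finset ι) (hQI : Q ⊆ I) (hQ : ∀ i ∈ Q, ∀ x ∈ R, x ≠ root → pe x ≠ i)
    (hQu : ∀ i ∈ Q, ∃ w ∈ R, lev w ≤ l ∧ g i = {u, w}) : Q.card ≤ s + 1 := by
  by_contra hcon
  obtain ⟨Q', hQ', hc⟩ := Finset.exists_subset_card_eq (show s + 2 ≤ Q.card by omega)
  have h1 : ∀ i, ∃ A : Finset V, i ∈ Q' → A ⊆ R ∧ root ∉ A ∧ A.card ≤ l ∧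
      (∀ y ∈ A, par y = root ∨ par y ∈ A) ∧ g i ⊆ insert u (insert root A) := by
    intro i
    by_cases hi : i ∈ Q'
    · obtain ⟨w, hw, hwl, e⟩ := hQu i (hQ' hi)
      obtain ⟨A, h1, h2, h3, h4, h5⟩ := h.exists_anc _ w hw rfl
      refine ⟨A, fun _ => ⟨h1, h2, by omega, h5, ?_⟩⟩
      rw [e]
      intro v hv
      simp only [Finset.mem_insert, Finset.mem_singleton] at hv ⊢
      rcases hv with rfl | rfl
      · exact Or.inl rfl
      · exact Or.inr h4
    · exact ⟨∅, fun a => absurd a hi⟩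
  choose A hA using h1
  obtain ⟨B, b1, b2, b3, b4, b5⟩ := h.exists_anc _ u hu rfl
  refine h.core hcode (B ∪ Q'.biUnion A) ?_ ?_ ?_ Q' (hQ'.trans hQI) (fun i hi => hQ i (hQ' hi))
    ?_ hc ?_
  · exact Finset.union_subset b1 (Finset.biUnion_subset.2 fun i hi => (hA i hi).1)
  · simp only [Finset.mem_union, Finset.mem_biUnion, not_or, not_exists, not_and]
    exact ⟨b2, fun i hi => (hA i hi).2.1⟩
  · intro y hy
    rcases Finset.mem_union.1 hy with hy | hy
    · exact (b5 y hy).imp id (fun h => Finset.mem_union_left _ h)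
    · obtain ⟨i, hi, hy⟩ := Finset.mem_biUnion.1 hy
      exact ((hA i hi).2.2.2.1 y hy).imp id
        (fun h => Finset.mem_union_right _ (Finset.mem_biUnion.2 ⟨i, hi, h⟩))
  · intro i hi v hv
    have := (hA i hi).2.2.2.2 hv
    simp only [Finset.mem_insert, Finset.mem_union, Finset.mem_biUnion] at this ⊢
    rcases this with rfl | rfl | hv
    · exact b4.imp id Or.inl
    · exact Or.inl rfl
    · exact Or.inr (Or.inr ⟨i, hi, hv⟩)
  · have e1 := Finset.card_union_le B (Q'.biUnion A)
    have e2 : (Q'.biUnion A).card ≤ Q'.card * l :=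
      Finset.card_biUnion_le_card_mul _ _ _ fun i hi => (hA i hi).2.2.1
    rw [hc] at e2
    nlinarith


theorem deg_children (h : BfsTree I g root R lev pe par) {s q : ℕ}
    (hg : ∀ i ∈ I, (g i).card = 2)
    (hcode : ∀ J ⊆ I, J.Nonempty → J.card ≤ (s + 3) * (q + 1) → J.card ≤ (J.biUnion g).card + s)
    (u : V) (hu : u ∈ R) (hl : lev u + 1 ≤ q) :
    (I.filter (fun i => u ∈ g i)).card ≤
      (R.filter (fun x => x ≠ root ∧ par x = u)).card + (s + 2) := by
  classical
  set Q := I.filter (fun i => u ∈ g i ∧ ∀ x ∈ R, x ≠ root → pe x ≠ i) with hQ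
  have hQc : Q.card ≤ s + 1 := by
    refine h.nontree hcode u hu (lev u + 1) ?_ Q (Finset.filter_subset _ _) ?_ ?_
    · nlinarith
    · intro i hi
      exact (Finset.mem_filter.1 hi).2.2
    · intro i hi
      obtain ⟨hi, hui, -⟩ := Finset.mem_filter.1 hi
      obtain ⟨a, b, hab, e⟩ := Finset.card_eq_two.1 (hg i hi)
      rw [e] at hui
      simp only [Finset.mem_insert, Finset.mem_singleton] at hui
      rcases hui with rfl | rfl
      · obtain ⟨h1, h2⟩ := h.edge i hi _ _ hu hab e
        exact ⟨b, h1, h2, e⟩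
      · rw [Finset.pair_comm] at e
        obtain ⟨h1, h2⟩ := h.edge i hi _ _ hu hab.symm e
        exact ⟨a, h1, h2, e⟩
  have hsub : I.filter (fun i => u ∈ g i) ⊆
      (R.filter (fun x => x ≠ root ∧ par x = u)).image pe ∪ ({pe u} ∪ Q) := by
    intro i hi
    obtain ⟨hi, hui⟩ := Finset.mem_filter.1 hi
    by_cases hx : ∀ x ∈ R, x ≠ root → pe x ≠ i
    · exact Finset.mem_union_right _ (Finset.mem_union_right _ (Finset.mem_filter.2 ⟨hi, hui, hx⟩))
    · push Not at hx
      obtain ⟨x, hx, hx0, rfl⟩ := hx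
      rw [h.pe_eq x hx hx0] at hui
      simp only [Finset.mem_insert, Finset.mem_singleton] at hui
      rcases hui with rfl | rfl
      · simp
      · exact Finset.mem_union_left _ (Finset.mem_image_of_mem _ (by simp [hx, hx0]))
  have e1 := Finset.card_le_card hsub
  have e2 := Finset.card_union_le ((R.filter (fun x => x ≠ root ∧ par x = u)).image pe) ({pe u} ∪ Q)
  have e3 := Finset.card_union_le ({pe u} : Finset ι) Q
  have e4 := Finset.card_image_le (s := R.filter (fun x => x ≠ root ∧ par x = u)) (f := pe)
  simp only [Finset.card_singleton] at e3
  omega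

theorem deg_last (h : BfsTree I g root R lev pe par) {s q : ℕ}
    (hg : ∀ i ∈ I, (g i).card = 2)
    (hcode : ∀ J ⊆ I, J.Nonempty → J.card ≤ (s + 3) * (q + 1) → J.card ≤ (J.biUnion g).card + s)
    (u : V) (hu : u ∈ R) (hl : lev u = q) :
    (I.filter (fun i => u ∈ g i)).card ≤
      (∑ w ∈ R.filter (fun x => lev x = q + 1), (I.filter (fun i => g i = {u, w})).card)
        + (s + 2) := by
  classical
  set Q := I.filter (fun i => (∃ w ∈ R, lev w ≤ q ∧ g i = {u, w}) ∧
    ∀ x ∈ R, x ≠ root → pe x ≠ i) with hQ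
  have hQc : Q.card ≤ s + 1 := by
    refine h.nontree hcode u hu q ?_ Q (Finset.filter_subset _ _) ?_ ?_
    · nlinarith
    · intro i hi
      exact (Finset.mem_filter.1 hi).2.2
    · intro i hi
      exact (Finset.mem_filter.1 hi).2.1
  have hsub : I.filter (fun i => u ∈ g i) ⊆
      ((R.filter (fun x => lev x = q + 1)).biUnion
        (fun w => I.filter (fun i => g i = {u, w}))) ∪ ({pe u} ∪ Q) := by
    intro i hi
    obtain ⟨hi, hui⟩ := Finset.mem_filter.1 hi
    obtain ⟨w, hne, e⟩ : ∃ w, u ≠ w ∧ g i = {u, w} := by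
      obtain ⟨a, b, hab, e⟩ := Finset.card_eq_two.1 (hg i hi)
      rw [e] at hui
      simp only [Finset.mem_insert, Finset.mem_singleton] at hui
      rcases hui with rfl | rfl
      · exact ⟨b, hab, e⟩
      · exact ⟨a, hab.symm, by rw [e, Finset.pair_comm]⟩
    obtain ⟨h1, h2⟩ := h.edge i hi _ _ hu hne e
    by_cases hw : lev w = q + 1
    · refine Finset.mem_union_left _ (Finset.mem_biUnion.2 ⟨w, ?_, ?_⟩)
      · simp [h1, hw]
      · simp [hi, e]
    refine Finset.mem_union_right _ ?_
    by_cases hx : ∀ x ∈ R, x ≠ root → pe x ≠ i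
    · exact (Finset.mem_union_right _ (Finset.mem_filter.2 ⟨hi, ⟨w, h1, by omega, e⟩, hx⟩))
    · push Not at hx
      obtain ⟨x, hx, hx0, rfl⟩ := hx
      have e' := h.pe_eq x hx hx0
      have l1 := h.lev_par x hx hx0
      rw [e'] at e hui
      simp only [Finset.mem_insert, Finset.mem_singleton] at hui
      rcases hui with rfl | rfl
      · simp
      · exfalso
        have : x ∈ ({par x, w} : Finset V) := by rw [← e]; simp
        simp only [Finset.mem_insert, Finset.mem_singleton] at this
        rcases this with h' | rfl
        · rw [← h'] at l1; omega
        · omega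
  have e1 := Finset.card_le_card hsub
  have e2 := Finset.card_union_le ((R.filter (fun x => lev x = q + 1)).biUnion
        (fun w => I.filter (fun i => g i = {u, w}))) ({pe u} ∪ Q)
  have e3 := Finset.card_union_le ({pe u} : Finset ι) Q
  have e4 := Finset.card_biUnion_le (s := R.filter (fun x => lev x = q + 1))
    (t := fun w => I.filter (fun i => g i = {u, w}))
  simp only [Finset.card_singleton] at e3
  omega

theorem deg_top (h : BfsTree I g root R lev pe par) {s q : ℕ}
    (hcode : ∀ J ⊆ I, J.Nonempty → J.card ≤ (s + 3) * (q + 1) → J.card ≤ (J.biUnion g).card + s)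
    (w : V) (hw : w ∈ R) (hl : lev w = q + 1) :
    (∑ u ∈ R.filter (fun x => lev x = q), (I.filter (fun i => g i = {u, w})).card) ≤ s + 2 := by
  classical
  rw [← Finset.card_biUnion]
  swap
  · intro a ha b hb hab
    refine Finset.disjoint_left.2 ?_
    intro i hi hi'
    have e1 := (Finset.mem_filter.1 hi).2
    have e2 := (Finset.mem_filter.1 hi').2
    have ha' := (Finset.mem_filter.1 ha).2
    have : a ∈ ({b, w} : Finset V) := by rw [← e2, e1]; simp
    simp only [Finset.mem_insert, Finset.mem_singleton] at this
    rcases this with h' | rfl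
    · exact hab h'
    · omega
  set Q := I.filter (fun i => (∃ u ∈ R, lev u ≤ q ∧ g i = {w, u}) ∧
    ∀ x ∈ R, x ≠ root → pe x ≠ i) with hQ
  have hQc : Q.card ≤ s + 1 := by
    refine h.nontree hcode w hw q ?_ Q (Finset.filter_subset _ _) ?_ ?_
    · nlinarith
    · intro i hi
      exact (Finset.mem_filter.1 hi).2.2
    · intro i hi
      exact (Finset.mem_filter.1 hi).2.1
  have hsub : (R.filter (fun x => lev x = q)).biUnion (fun u => I.filter (fun i => g i = {u, w})) ⊆
      {pe w} ∪ Q := by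
    intro i hi
    obtain ⟨u, hu, hi⟩ := Finset.mem_biUnion.1 hi
    obtain ⟨hi, e⟩ := Finset.mem_filter.1 hi
    obtain ⟨hu, hul⟩ := Finset.mem_filter.1 hu
    by_cases hx : ∀ x ∈ R, x ≠ root → pe x ≠ i
    · exact (Finset.mem_union_right _ (Finset.mem_filter.2
        ⟨hi, ⟨u, hu, by omega, by rw [e, Finset.pair_comm]⟩, hx⟩))
    · push Not at hx
      obtain ⟨x, hx, hx0, rfl⟩ := hx
      have e' := h.pe_eq x hx hx0
      have l1 := h.lev_par x hx hx0
      rw [e'] at e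
      have hwx : w ∈ ({x, par x} : Finset V) := by rw [e]; simp
      simp only [Finset.mem_insert, Finset.mem_singleton] at hwx
      rcases hwx with rfl | rfl
      · simp
      · exfalso
        have : x ∈ ({u, par x} : Finset V) := by rw [← e]; simp
        simp only [Finset.mem_insert, Finset.mem_singleton] at this
        rcases this with rfl | h'
        · omega
        · rw [← h'] at l1; omega
  have e1 := Finset.card_le_card hsub
  have e3 := Finset.card_union_le ({pe w} : Finset ι) Q
  simp only [Finset.card_singleton] at e3
  omega

theorem growth (h : BfsTree I g root R lev pe par) {s q : ℕ}
    (hg : ∀ i ∈ I, (g i).card = 2)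
    (hcode : ∀ J ⊆ I, J.Nonempty → J.card ≤ (s + 3) * (q + 1) → J.card ≤ (J.biUnion g).card + s)
    (D : ℝ) (hD : 0 ≤ D)
    (hdeg : ∀ u ∈ R, D + (s + 2) ≤ ((I.filter (fun i => u ∈ g i)).card : ℝ)) :
    ∀ j ≤ q, D ^ j ≤ ((R.filter (fun x => lev x = j)).card : ℝ) := by
  intro j
  induction j with
  | zero =>
    intro _
    have : 0 < (R.filter (fun x => lev x = 0)).card :=
      Finset.card_pos.2 ⟨root, by simp [h.root_mem, h.lev_root]⟩
    simp only [pow_zero]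
    exact_mod_cast this
  | succ j ih =>
    intro hj
    have ih := ih (by omega)
    have e := Finset.card_eq_sum_card_fiberwise (s := R.filter (fun x => lev x = j + 1))
      (t := R.filter (fun x => lev x = j)) (f := par) (by
        intro x hx
        simp only [Finset.coe_filter, Set.mem_ofPred_eq] at hx ⊢
        have hx0 : x ≠ root := by
          rintro rfl
          have := h.lev_root
          omega
        have := h.lev_par x hx.1 hx0
        exact ⟨h.par_mem x hx.1 hx0, by omega⟩)
    rw [e]
    push_cast
    calc D ^ (j + 1) = D ^ j * D := pow_succ _ _
      _ ≤ ((R.filter (fun x => lev x = j)).card : ℝ) * D := by gcongr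
      _ = ∑ u ∈ R.filter (fun x => lev x = j), D := by simp
      _ ≤ _ := by
        apply Finset.sum_le_sum
        intro u hu
        obtain ⟨hu, hul⟩ := Finset.mem_filter.1 hu
        have h1 := h.deg_children hg hcode u hu (by omega)
        have h2 := hdeg u hu
        have h3 : (R.filter (fun x => x ≠ root ∧ par x = u)).card ≤
            ((R.filter (fun x => lev x = j + 1)).filter (fun x => par x = u)).card := by
          apply Finset.card_le_card
          intro x hx
          simp only [Finset.mem_filter] at hx ⊢
          have := h.lev_par x hx.1 hx.2.1
          rw [hx.2.2] at this
          exact ⟨⟨hx.1, by omega⟩, hx.2.2⟩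
        have h4 : ((I.filter (fun i => u ∈ g i)).card : ℝ) ≤
          (((R.filter (fun x => lev x = j + 1)).filter (fun x => par x = u)).card : ℝ) + (s + 2) := by
          exact_mod_cast h1.trans (by omega)
        linarith

theorem final (h : BfsTree I g root R lev pe par) {s q : ℕ}
    (hg : ∀ i ∈ I, (g i).card = 2)
    (hcode : ∀ J ⊆ I, J.Nonempty → J.card ≤ (s + 3) * (q + 1) → J.card ≤ (J.biUnion g).card + s)
    (D : ℝ) (hD : 0 ≤ D)
    (hdeg : ∀ u ∈ R, D + (s + 2) ≤ ((I.filter (fun i => u ∈ g i)).card : ℝ)) :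
    D ^ (q + 1) ≤ (s + 2) * ((R.filter (fun x => lev x = q + 1)).card : ℝ) := by
  have h0 := h.growth hg hcode D hD hdeg q le_rfl
  calc D ^ (q + 1) = D ^ q * D := pow_succ _ _
    _ ≤ ((R.filter (fun x => lev x = q)).card : ℝ) * D := by gcongr
    _ = ∑ u ∈ R.filter (fun x => lev x = q), D := by simp
    _ ≤ ∑ u ∈ R.filter (fun x => lev x = q), ∑ w ∈ R.filter (fun x => lev x = q + 1),
          ((I.filter (fun i => g i = {u, w})).card : ℝ) := by
        apply Finset.sum_le_sum
        intro u hu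
        obtain ⟨hu, hul⟩ := Finset.mem_filter.1 hu
        have h1 := h.deg_last hg hcode u hu hul
        have h2 := hdeg u hu
        have h4 : ((I.filter (fun i => u ∈ g i)).card : ℝ) ≤
          (∑ w ∈ R.filter (fun x => lev x = q + 1),
            ((I.filter (fun i => g i = {u, w})).card : ℝ)) + (s + 2) := by
          exact_mod_cast h1
        linarith
    _ = ∑ w ∈ R.filter (fun x => lev x = q + 1), ∑ u ∈ R.filter (fun x => lev x = q),
          ((I.filter (fun i => g i = {u, w})).card : ℝ) := Finset.sum_comm
    _ ≤ ∑ w ∈ R.filter (fun x => lev x = q + 1), ((s : ℝ) + 2) := by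
        apply Finset.sum_le_sum
        intro w hw
        obtain ⟨hw, hwl⟩ := Finset.mem_filter.1 hw
        exact_mod_cast h.deg_top hcode w hw hwl
    _ = _ := by rw [Finset.sum_const, nsmul_eq_mul, mul_comm]

end BfsTree

theorem graph_bound_s3 {V ι : Type*} [Fintype V] [DecidableEq V] (I : Finset ι)
    (g : ι → Finset V) {s q : ℕ} (hg : ∀ i ∈ I, (g i).card = 2)
    (hcode : ∀ J ⊆ I, J.Nonempty → J.card ≤ (s + 3) * (q + 1) → J.card ≤ (J.biUnion g).card + s)
    (hV : 0 < Fintype.card V)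
    (D : ℝ) (hD : 0 ≤ D) (hDn : D ^ (q + 1) = (s + 2) * (Fintype.card V : ℝ)) :
    (I.card : ℝ) < Fintype.card V * (D + (s + 2)) := by
  classical
  by_contra hcon
  push Not at hcon
  
  have hex : ∃ U : Finset V, U.Nonempty ∧
      (U.card : ℝ) * (D + (s + 2)) ≤ ((I.filter (fun i => g i ⊆ U)).card : ℝ) := by
    refine ⟨Finset.univ, Finset.card_pos.1 (by simpa using hV), ?_⟩
    simpa using hcon
  obtain ⟨U, ⟨hU, hUd⟩, hmin⟩ := WellFounded.has_min (wellFounded_lt (α := Finset V))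
    {U : Finset V | U.Nonempty ∧
      (U.card : ℝ) * (D + (s + 2)) ≤ ((I.filter (fun i => g i ⊆ U)).card : ℝ)} hex
  set I' := I.filter (fun i => g i ⊆ U) with hI'
  have hdeg : ∀ u ∈ U, D + (s + 2) ≤ ((I'.filter (fun i => u ∈ g i)).card : ℝ) := by
    intro u hu
    by_contra hlt
    push Not at hlt
    have hsplit := Finset.card_filter_add_card_filter_not (s := I') (fun i => u ∈ g i)
    have hsub : I'.filter (fun i => ¬ u ∈ g i) ⊆ I.filter (fun i => g i ⊆ U.erase u) := by
      intro i hi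
      simp only [hI', Finset.mem_filter] at hi ⊢
      exact ⟨hi.1.1, Finset.subset_erase.2 ⟨hi.1.2, hi.2⟩⟩
    have hsub' := Finset.card_le_card hsub
    have hce := Finset.card_erase_add_one hu
    have r1 : ((I'.filter (fun i => u ∈ g i)).card : ℝ) +
      ((I.filter (fun i => g i ⊆ U.erase u)).card : ℝ) ≥ I'.card := by
      exact_mod_cast (by omega)
    have r2 : ((U.erase u).card : ℝ) + 1 = U.card := by exact_mod_cast hce
    have r3 : ((U.erase u).card : ℝ) * (D + (s + 2)) <
      ((I.filter (fun i => g i ⊆ U.erase u)).card : ℝ) := by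
      rw [← r2] at hUd
      linarith
    refine hmin (U.erase u) ⟨?_, r3.le⟩ (Finset.erase_ssubset hu)
    have r4 : (0 : ℝ) < ((I.filter (fun i => g i ⊆ U.erase u)).card : ℝ) :=
      lt_of_le_of_lt (by positivity) r3
    obtain ⟨i, hi⟩ := Finset.card_pos.1 (by exact_mod_cast r4 :
      0 < (I.filter (fun i => g i ⊆ U.erase u)).card)
    obtain ⟨hi, hs⟩ := Finset.mem_filter.1 hi
    exact (Finset.card_pos.1 (by rw [hg i hi]; norm_num)).mono hs
  obtain ⟨root, hroot⟩ := hU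
  have hι : Nonempty ι := by
    have h1 := hdeg root hroot
    have h2 : (0 : ℝ) < ((I'.filter (fun i => root ∈ g i)).card : ℝ) :=
      lt_of_lt_of_le (by positivity) h1
    obtain ⟨i, -⟩ := Finset.card_pos.1 (by exact_mod_cast h2 :
      0 < (I'.filter (fun i => root ∈ g i)).card)
    exact ⟨i⟩
  obtain ⟨R, lev, pe, par, h⟩ := exists_bfs I' g root
  have hRU : ∀ u ∈ R, u ∈ U := by
    intro u hu
    by_cases hu0 : u = root
    · rw [hu0]; exact hroot
    · have h1 := (Finset.mem_filter.1 (h.pe_mem u hu hu0)).2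
      apply h1
      rw [h.pe_eq u hu hu0]
      simp
  have hf := h.final (s := s) (q := q) (fun i hi => hg i (Finset.mem_filter.1 hi).1)
    (fun J hJ => hcode J (hJ.trans (Finset.filter_subset _ _))) D hD
    (fun u hu => hdeg u (hRU u hu))
  rw [hDn] at hf
  have hlt : (R.filter (fun x => lev x = q + 1)).card < Fintype.card V := by
    rw [← Finset.card_univ]
    apply Finset.card_lt_card
    rw [Finset.ssubset_univ_iff]
    intro e
    have : root ∈ R.filter (fun x => lev x = q + 1) := by rw [e]; simp
    have := (Finset.mem_filter.1 this).2
    rw [h.lev_root] at this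
    omega
  have hlt' : ((R.filter (fun x => lev x = q + 1)).card : ℝ) < Fintype.card V := by
    exact_mod_cast hlt
  have : ((s : ℝ) + 2) * ((R.filter (fun x => lev x = q + 1)).card : ℝ) <
      (s + 2) * (Fintype.card V : ℝ) := by
    apply mul_lt_mul_of_pos_left hlt' (by positivity)
  linarith

theorem family_bound {n : ℕ} {ι : Type*} [Fintype ι] (e : ι → Finset (Fin n)) {s q : ℕ}
    (hn : s + 2 ≤ n) (he : ∀ i, (e i).card = s + 2)
    (hcode : ∀ J : Finset ι, J.Nonempty → J.card ≤ (s + 3) * (q + 1) →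
      J.card ≤ (J.biUnion e).card)
    (D : ℝ) (hD : 0 ≤ D) (hDn : D ^ (q + 1) = (s + 2) * (n : ℝ)) :
    (Fintype.card ι : ℝ) * ((s + 2).choose 2 : ℝ) < (n.choose s : ℝ) * (n * (D + (s + 2))) := by
  classical
  have hT : ∀ T ∈ Finset.powersetCard s (Finset.univ : Finset (Fin n)),
      ((Finset.univ.filter (fun i => T ⊆ e i)).card : ℝ) < n * (D + (s + 2)) := by
    intro T hT
    have hTc := (Finset.mem_powersetCard.1 hT).2
    have := graph_bound_s3 (Finset.univ.filter (fun i => T ⊆ e i)) (fun i => e i \ T) (s := s) (q := q)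
      (by
        intro i hi
        rw [Finset.card_sdiff_of_subset (by simpa using hi), he, hTc]
        omega)
      (by
        intro J hJ hJ0 hJc
        have h1 := hcode J hJ0 hJc
        have h2 : J.biUnion e ⊆ J.biUnion (fun i => e i \ T) ∪ T := by
          intro v hv
          obtain ⟨i, hi, hv⟩ := Finset.mem_biUnion.1 hv
          by_cases hvT : v ∈ T
          · exact Finset.mem_union_right _ hvT
          · exact Finset.mem_union_left _ (Finset.mem_biUnion.2 ⟨i, hi, by simp [hv, hvT]⟩)
        have h3 := Finset.card_le_card h2
        have h4 := Finset.card_union_le (J.biUnion (fun i => e i \ T)) T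
        omega)
      (by simp; omega) D hD (by simpa using hDn)
    simpa using this
  have hne : (Finset.powersetCard s (Finset.univ : Finset (Fin n))).Nonempty := by
    rw [Finset.powersetCard_nonempty]
    simp; omega
  have hs := Finset.sum_lt_sum_of_nonempty hne hT
  have hdc : ∑ T ∈ Finset.powersetCard s (Finset.univ : Finset (Fin n)),
      (Finset.univ.filter (fun i => T ⊆ e i)).card = Fintype.card ι * (s + 2).choose 2 := by
    have := Finset.sum_card_bipartiteAbove_eq_sum_card_bipartiteBelow
      (s := Finset.powersetCard s (Finset.univ : Finset (Fin n))) (t := (Finset.univ : Finset ι))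
      (fun T i => T ⊆ e i)
    simp only [Finset.bipartiteAbove, Finset.bipartiteBelow] at this
    rw [this]
    rw [Finset.sum_congr rfl (g := fun _ => (s + 2).choose 2)]
    · simp
    · intro i _
      have : (Finset.powersetCard s (Finset.univ : Finset (Fin n))).filter (fun T => T ⊆ e i) =
          Finset.powersetCard s (e i) := by
        ext T
        simp [Finset.mem_powersetCard, and_comm]
      rw [this, Finset.card_powersetCard, he]
      exact Nat.choose_symm_of_eq_add rfl
  have hdc' : ∑ T ∈ Finset.powersetCard s (Finset.univ : Finset (Fin n)),
      ((Finset.univ.filter (fun i => T ⊆ e i)).card : ℝ) =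
      (Fintype.card ι : ℝ) * ((s + 2).choose 2 : ℝ) := by exact_mod_cast hdc
  rw [hdc'] at hs
  simpa using hs


/-- Upper bound on the maximum size `m(n,r,k)` of an `r`-uniform combinatorial batch
code with parameters `(n,k)`: any multiset `E` of `r`-element subsets of an `n`-element
vertex set in which, for every `1 ≤ i ≤ k`, every sub-multiset of `i` edges (counted
with multiplicity) covers at least `i` vertices, has fewer than
`(2C''/r!)·n^{r-1+1/⌊k/(r+1)⌋} + (2/(r-1)!)·n^{r-1}` edges, where `C'' = r^{1/⌊k/(r+1)⌋}`. -/
theorem statement3 (n k r : ℕ) (C'' : ℝ)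
    (hr : 2 ≤ r) (hk : 2 * r + 2 ≤ k) (hn : k ≤ n)
    (hC : C'' = (r : ℝ) ^ ((1 : ℝ) / ((k / (r + 1) : ℕ) : ℝ)))
    (E : Multiset (Finset (Fin n))) (hunif : ∀ e ∈ E, e.card = r)
    (hcode : ∀ i : ℕ, 1 ≤ i → i ≤ k → ∀ E' ≤ E, Multiset.card E' = i →
      i ≤ (E'.toFinset.biUnion id).card) :
    (Multiset.card E : ℝ) <
      (2 * C'' / (r.factorial : ℝ)) * (n : ℝ) ^ ((r : ℝ) - 1 + 1 / ((k / (r + 1) : ℕ) : ℝ)) +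
        (2 / ((r - 1).factorial : ℝ)) * (n : ℝ) ^ ((r : ℝ) - 1) := by
  obtain ⟨s, rfl⟩ : ∃ s, r = s + 2 := ⟨r - 2, by omega⟩
  obtain ⟨q, hq⟩ : ∃ q, k / (s + 2 + 1) = q + 1 := by
    have : 1 ≤ k / (s + 2 + 1) := (Nat.one_le_div_iff (by omega)).2 (by omega)
    exact ⟨k / (s + 2 + 1) - 1, by omega⟩
  have hqk : (s + 3) * (q + 1) ≤ k := by
    rw [← hq]
    exact Nat.mul_div_le k (s + 3)
  rw [hq] at hC ⊢
  have hn0 : (0 : ℝ) < n := by exact_mod_cast (by omega : 0 < n)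
  set D : ℝ := C'' * (n : ℝ) ^ ((1 : ℝ) / ((q + 1 : ℕ) : ℝ)) with hDdef
  have hC0 : 0 ≤ C'' := by rw [hC]; positivity
  have hD0 : 0 ≤ D := by positivity
  have hDn : D ^ (q + 1) = ((s : ℝ) + 2) * n := by
    rw [hDdef, mul_pow, hC, one_div, Real.rpow_inv_natCast_pow (by positivity) (by omega),
      Real.rpow_inv_natCast_pow (by positivity) (by omega)]
    push_cast
    ring
  have hfam := family_bound (fun i : Fin E.toList.length => E.toList.get i) (s := s) (q := q)
    (by omega) (fun i => hunif _ (Multiset.mem_toList.1 (List.get_mem _ _)))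
    (by
      intro J hJ hJc
      have h1 := hcode J.card hJ.card_pos (hJc.trans hqk)
        (J.val.map (fun i => E.toList.get i)) (by
          have h2 : (Finset.univ : Finset (Fin E.toList.length)).val.map
              (fun i => E.toList.get i) = E := by
            rw [Fin.univ_val_map, List.ofFn_get, Multiset.coe_toList]
          calc J.val.map (fun i => E.toList.get i)
              ≤ (Finset.univ : Finset (Fin E.toList.length)).val.map (fun i => E.toList.get i) :=
                Multiset.map_le_map (Finset.val_le_iff.2 (Finset.subset_univ J))
            _ = E := h2) (by simp)
      refine h1.trans (Finset.card_le_card ?_)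
      intro v hv
      simp only [Finset.mem_biUnion, Multiset.mem_toFinset, Multiset.mem_map, id] at hv ⊢
      obtain ⟨_, ⟨i, hi, rfl⟩, hv⟩ := hv
      exact ⟨i, hi, hv⟩)
    D hD0 hDn
  simp only [Fintype.card_fin, Multiset.length_toList] at hfam
  have hch : (n.choose s : ℝ) ≤ (n : ℝ) ^ s / (s.factorial : ℝ) := Nat.choose_le_pow_div s n
  have hc2 : ((s + 2).choose 2 : ℝ) = ((s : ℝ) + 2) * (s + 1) / 2 := by
    rw [Nat.cast_choose_two]
    push_cast
    ring
  rw [hc2] at hfam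
  have hpow1 : (n : ℝ) ^ (((s + 2 : ℕ) : ℝ) - 1) = (n : ℝ) ^ (s + 1) := by
    rw [← Real.rpow_natCast]
    congr 1
    push_cast
    ring
  rw [Real.rpow_add hn0, hpow1]
  have hf1 : (((s + 2).factorial : ℕ) : ℝ) = ((s : ℝ) + 2) * ((s + 1) * s.factorial) := by
    rw [Nat.factorial_succ, Nat.factorial_succ]
    push_cast
    ring
  have hf2 : (((s + 2 - 1).factorial : ℕ) : ℝ) = ((s : ℝ) + 1) * s.factorial := by
    rw [show s + 2 - 1 = s + 1 from rfl, Nat.factorial_succ]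
    push_cast
    ring
  rw [hf1, hf2]
  have hs0 : (0 : ℝ) < s.factorial := by exact_mod_cast Nat.factorial_pos s
  have hmul : (n.choose s : ℝ) * (n * (D + (s + 2))) ≤
      (n : ℝ) ^ s / (s.factorial : ℝ) * (n * (D + (s + 2))) := by
    gcongr
  have hlt := hfam.trans_le hmul
  have hrw : 2 * C'' / (((s : ℝ) + 2) * ((s + 1) * s.factorial)) *
        ((n : ℝ) ^ (s + 1) * (n : ℝ) ^ ((1 : ℝ) / ((q + 1 : ℕ) : ℝ))) +
      2 / (((s : ℝ) + 1) * s.factorial) * (n : ℝ) ^ (s + 1) =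
      ((n : ℝ) ^ s / (s.factorial : ℝ) * (n * (D + (s + 2)))) / (((s : ℝ) + 2) * (s + 1) / 2) := by
    rw [hDdef]
    generalize (n : ℝ) ^ ((1 : ℝ) / ((q + 1 : ℕ) : ℝ)) = X
    have a1 : (s : ℝ) + 2 ≠ 0 := by positivity
    have a2 : (s : ℝ) + 1 ≠ 0 := by positivity
    field_simp
    try ring
  rw [hrw, lt_div_iff₀ (by positivity)]
  exact hlt
end

section
/- Let q ≥ −1 and k ≥ q+3 be integers. Then there exists a constant d = d(k,q) (depending only on k and q) such that for every integer n ≥ k−q−1, f^{(2)}(n,k−q−1,k) − ex(n, H^{(2)}(k,q)) ≤ d. -/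
/-- `ex(n, H^{(r)}(k,q))`: the maximum number of edges of an `H^{(r)}(k,q)`-free
`r`-uniform hypergraph on `n` vertices. -/
noncomputable def exH (n r k : ℕ) (q : ℤ) : ℕ :=
  sSup {m | ∃ E : Finset (Finset (Fin n)),
    (∀ e ∈ E, e.card = r) ∧ HFree r k q E ∧ E.card = m}

/-- `f^{(r)}(n,v,k)`: one plus the maximum number of edges of an `r`-uniform hypergraph
on `n` vertices in which every `k` pairwise distinct edges cover at least `v + 1`
vertices. -/
noncomputable def fBES (n r k : ℕ) (v : ℤ) : ℕ :=
  sSup {m | ∃ E : Finset (Finset (Fin n)),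
    (∀ e ∈ E, e.card = r) ∧
    (∀ E' ⊆ E, E'.card = k → v + 1 ≤ ((E'.biUnion id).card : ℤ)) ∧ E.card = m} + 1

open Finset in
/-- iterated neighbourhoods -/
def gball {V : Type*} [DecidableEq V] (F : Finset (Finset V)) (u : V) : ℕ → Finset V
  | 0 => {u}
  | j + 1 => gball F u j ∪ (F.filter (fun e => ¬ Disjoint e (gball F u j))).biUnion id

/-- locally a forest -/
def LFor {V : Type*} [DecidableEq V] (k : ℕ) (F : Finset (Finset V)) : Prop :=
  ∀ T ⊆ F, T.card ≤ k → T.Nonempty → T.card + 1 ≤ (T.biUnion id).card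

theorem gball_succ {V : Type*} [DecidableEq V] (F : Finset (Finset V)) (u : V) (j : ℕ) :
    gball F u j ⊆ gball F u (j+1) := by
  rw [gball]; exact Finset.subset_union_left

theorem gball_mono {V : Type*} [DecidableEq V] (F : Finset (Finset V)) (u : V) {i j : ℕ}
    (h : i ≤ j) : gball F u i ⊆ gball F u j := by
  induction h with
  | refl => exact Finset.Subset.refl _
  | step _ ih => exact ih.trans (gball_succ F u _)

theorem mem_gball {V : Type*} [DecidableEq V] (F : Finset (Finset V)) (u : V) (j : ℕ) :
    u ∈ gball F u j := gball_mono F u (Nat.zero_le j) (by simp [gball])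

theorem gball_edge {V : Type*} [DecidableEq V] (F : Finset (Finset V)) (u : V) (j : ℕ)
    (e : Finset V) (he : e ∈ F) (h : ¬ Disjoint e (gball F u j)) : e ⊆ gball F u (j+1) := by
  rw [gball]
  intro x hx
  refine Finset.mem_union_right _ ?_
  rw [Finset.mem_biUnion]
  exact ⟨e, Finset.mem_filter.2 ⟨he, h⟩, hx⟩

theorem gball_card {V : Type*} [DecidableEq V] (F : Finset (Finset V)) (u : V) (D : ℕ)
    (h2 : ∀ e ∈ F, e.card = 2) (hD : ∀ w, (F.filter (fun e => w ∈ e)).card ≤ D) (j : ℕ) :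
    (gball F u j).card ≤ (1 + D * 2) ^ j := by
  induction j with
  | zero => simp [gball]
  | succ j ih =>
    rw [gball]
    have h1 : F.filter (fun e => ¬ Disjoint e (gball F u j)) ⊆
        (gball F u j).biUnion (fun w => F.filter (fun e => w ∈ e)) := by
      intro e he
      rw [Finset.mem_filter, Finset.not_disjoint_iff] at he
      obtain ⟨he, w, hw, hw'⟩ := he
      rw [Finset.mem_biUnion]
      exact ⟨w, hw', Finset.mem_filter.2 ⟨he, hw⟩⟩
    have h3 := (Finset.card_le_card h1).trans
      (Finset.card_biUnion_le_card_mul _ _ D (fun w _ => hD w))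
    have h4 : ((F.filter (fun e => ¬ Disjoint e (gball F u j))).biUnion id).card ≤
        (F.filter (fun e => ¬ Disjoint e (gball F u j))).card * 2 :=
      Finset.card_biUnion_le_card_mul _ _ 2
        (fun e he => (h2 e (Finset.mem_filter.1 he).1).le)
    have h5 := Finset.card_union_le (gball F u j)
      ((F.filter (fun e => ¬ Disjoint e (gball F u j))).biUnion id)
    rw [pow_succ]
    have : (gball F u j).card * (1 + D * 2) ≤ (1 + D * 2) ^ j * (1 + D * 2) :=
      Nat.mul_le_mul_right _ ih
    nlinarith

theorem comp_exists {V : Type*} [DecidableEq V] (F T : Finset (Finset V)) (hT : T ⊆ F) (u : V) :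
    ∃ A ⊆ T, A.biUnion id ⊆ gball F u A.card ∧
      ∀ f ∈ T \ A, Disjoint f (insert u (A.biUnion id)) := by
  classical
  obtain ⟨A, hA, hmax⟩ := Finset.exists_max_image
    (T.powerset.filter (fun A => A.biUnion id ⊆ gball F u A.card)) Finset.card
    ⟨∅, by simp⟩
  rw [Finset.mem_filter, Finset.mem_powerset] at hA
  refine ⟨A, hA.1, hA.2, ?_⟩
  intro f hf
  rw [Finset.mem_sdiff] at hf
  by_contra hd
  have hsub : insert u (A.biUnion id) ⊆ gball F u A.card :=
    Finset.insert_subset (mem_gball F u _) hA.2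
  have hfe := gball_edge F u A.card f (hT hf.1) (fun h => hd (Finset.disjoint_of_subset_right hsub h))
  have := hmax (insert f A) (by
    rw [Finset.mem_filter, Finset.mem_powerset, Finset.card_insert_of_notMem hf.2,
      Finset.biUnion_insert]
    exact ⟨Finset.insert_subset hf.1 hA.1,
      Finset.union_subset hfe (hA.2.trans (gball_succ F u _))⟩)
  rw [Finset.card_insert_of_notMem hf.2] at this
  omega

theorem LFor_insert {V : Type*} [DecidableEq V] (k : ℕ) (F : Finset (Finset V)) (hF : LFor k F)
    (u v : V) (huv : u ≠ v) (hv : v ∉ gball F u k) :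
    LFor k (insert {u, v} F) := by
  have aux : ∀ A ⊆ F, A.card ≤ k → ∀ x, A.card + 1 ≤ (insert x (A.biUnion id)).card := by
    intro A hA hk x
    rcases A.eq_empty_or_nonempty with rfl | hne
    · simp
    · exact (hF A hA hk hne).trans (Finset.card_le_card (Finset.subset_insert _ _))
  intro T hT hTk hTn
  by_cases he : ({u, v} : Finset V) ∈ T
  · have hT' : T.erase {u, v} ⊆ F := by
      intro x hx
      rw [Finset.mem_erase] at hx
      exact (Finset.mem_insert.1 (hT hx.2)).resolve_left hx.1
    have hc := Finset.card_erase_add_one he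
    obtain ⟨A, hA, hAb, hAd⟩ := comp_exists F _ hT' u
    have hAc := Finset.card_le_card hA
    have hBc := Finset.card_sdiff_add_card_eq_card hA
    have h1 := aux A (hA.trans hT') (by omega) u
    have h2 := aux (T.erase {u, v} \ A) (Finset.sdiff_subset.trans hT') (by omega) v
    have hvA : v ∉ insert u (A.biUnion id) := by
      rw [Finset.mem_insert]
      rintro (h | h)
      · exact huv h.symm
      · exact hv (gball_mono F u (by omega) (hAb h))
    have hdisj : Disjoint (insert u (A.biUnion id))
        (insert v ((T.erase {u, v} \ A).biUnion id)) := by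
      rw [Finset.disjoint_insert_right]
      refine ⟨hvA, ?_⟩
      rw [Finset.disjoint_biUnion_right]
      intro f hf
      exact (hAd f hf).symm
    have hsub : insert u (A.biUnion id) ∪ insert v ((T.erase {u, v} \ A).biUnion id) ⊆
        T.biUnion id := by
      have huT : ({u, v} : Finset V) ⊆ T.biUnion id :=
        Finset.subset_biUnion_of_mem id he
      refine Finset.union_subset (Finset.insert_subset (huT (by simp)) ?_)
        (Finset.insert_subset (huT (by simp)) ?_)
      · exact Finset.biUnion_subset_biUnion_of_subset_left _
          (hA.trans (Finset.erase_subset _ _))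
      · exact Finset.biUnion_subset_biUnion_of_subset_left _
          (Finset.sdiff_subset.trans (Finset.erase_subset _ _))
    have := Finset.card_le_card hsub
    rw [Finset.card_union_of_disjoint hdisj] at this
    omega
  · refine hF T ?_ hTk hTn
    intro x hx
    refine (Finset.mem_insert.1 (hT hx)).resolve_left ?_
    rintro rfl
    exact he hx

theorem sparse_exists {V : Type*} [DecidableEq V] (k : ℕ) (W : Finset V) :
    ∃ F : Finset (Finset V), (∀ e ∈ F, e.card = 2 ∧ e ⊆ W) ∧ LFor k F ∧
      k * W.card ≤ F.card + k * (1 + 2 * k * 2) ^ (k + 1) := by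
  classical
  obtain ⟨F, hF, hmax⟩ := Finset.exists_max_image
    ((W.powersetCard 2).powerset.filter (fun F => LFor k F ∧
      ∀ w, (F.filter (fun e => w ∈ e)).card ≤ 2 * k)) Finset.card
    ⟨∅, by
      simp only [Finset.mem_filter, Finset.mem_powerset, Finset.empty_subset, true_and]
      refine ⟨?_, by simp⟩
      intro T hT _ hn
      rw [Finset.subset_empty.1 hT] at hn
      simp at hn⟩
  rw [Finset.mem_filter, Finset.mem_powerset] at hF
  obtain ⟨hFW, hL, hD⟩ := hF
  have h2 : ∀ e ∈ F, e.card = 2 ∧ e ⊆ W := fun e he =>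
    ⟨(Finset.mem_powersetCard.1 (hFW he)).2, (Finset.mem_powersetCard.1 (hFW he)).1⟩
  refine ⟨F, h2, hL, ?_⟩
  set U := W.filter (fun w => (F.filter (fun e => w ∈ e)).card < 2 * k) with hU
  have hUc : U.card ≤ (1 + 2 * k * 2) ^ (k + 1) := by
    rcases U.eq_empty_or_nonempty with h | ⟨u, hu⟩
    · rw [h]; simp
    · refine (Finset.card_le_card ?_).trans
        (gball_card F u (2 * k) (fun e he => (h2 e he).1) hD (k + 1))
      intro v hv
      by_contra hvb
      have huv : u ≠ v := by rintro rfl; exact hvb (mem_gball F u _)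
      have hne : ({u, v} : Finset V) ∉ F := by
        intro he
        apply hvb
        refine gball_mono F u (show 1 ≤ k + 1 by omega) (gball_edge F u 0 _ he ?_ ?_)
        · simp [gball]
        · simp
      have hvk : v ∉ gball F u k := fun h => hvb (gball_succ F u k h)
      rw [hU, Finset.mem_filter] at hu hv
      have := hmax (insert {u, v} F) (by
        rw [Finset.mem_filter, Finset.mem_powerset]
        refine ⟨Finset.insert_subset ?_ hFW, LFor_insert k F hL u v huv hvk, ?_⟩
        · rw [Finset.mem_powersetCard]
          refine ⟨?_, Finset.card_pair huv⟩
          intro x hx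
          rcases Finset.mem_insert.1 hx with rfl | hx
          · exact hu.1
          · rw [Finset.mem_singleton.1 hx]; exact hv.1
        · intro w
          rw [Finset.filter_insert]
          split_ifs with hw
          · have hc := Finset.card_insert_le ({u, v} : Finset V) (F.filter (fun e => w ∈ e))
            rcases Finset.mem_insert.1 hw with rfl | hw
            · omega
            · rw [Finset.mem_singleton.1 hw] at hc ⊢
              omega
          · exact hD w)
      rw [Finset.card_insert_of_notMem hne] at this
      omega
  have hsum : ∑ w ∈ W, (F.filter (fun e => w ∈ e)).card = F.card * 2 := by
    have h := Finset.sum_card_bipartiteAbove_eq_sum_card_bipartiteBelow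
      (s := W) (t := F) (fun w e => w ∈ e)
    simp only [Finset.bipartiteAbove, Finset.bipartiteBelow] at h
    rw [h]
    rw [Finset.sum_const_nat (m := 2)]
    intro e he
    rw [Finset.filter_mem_eq_inter, Finset.inter_eq_right.2 (h2 e he).2]
    exact (h2 e he).1
  have hge : ∑ w ∈ W \ U, 2 * k ≤ ∑ w ∈ W, (F.filter (fun e => w ∈ e)).card := by
    refine (Finset.sum_le_sum (fun w hw => ?_)).trans
      (Finset.sum_le_sum_of_subset (Finset.sdiff_subset (s := W) (t := U)))
    rw [Finset.mem_sdiff, hU, Finset.mem_filter] at hw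
    by_contra hlt
    exact hw.2 ⟨hw.1, by omega⟩
  rw [hsum, Finset.sum_const, smul_eq_mul] at hge
  have hc := Finset.card_sdiff_add_card_eq_card (Finset.filter_subset
    (fun w => (F.filter (fun e => w ∈ e)).card < 2 * k) W)
  rw [← hU] at hc
  have := Nat.mul_le_mul_left k hUc
  rw [← hc]
  nlinarith

theorem main_aux {V : Type*} [DecidableEq V] (k : ℕ) (q : ℤ) (hq : -1 ≤ q)
    (E : Finset (Finset V)) (h2 : ∀ e ∈ E, e.card = 2)
    (hE : ∀ E' ⊆ E, E'.card = k → (k : ℤ) - q - 1 + 1 ≤ ((E'.biUnion id).card : ℤ)) :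
    ∃ F : Finset (Finset V), (∀ e ∈ F, e.card = 2) ∧ HFree 2 k q F ∧
      E.card ≤ F.card + k * (1 + 2 * k * 2) ^ (k + 1) := by
  classical
  set E1 := (E.powerset.filter (fun S => S.card < k ∧
    ∀ e ∈ E \ S, Disjoint e (S.biUnion id))).biUnion id with hE1
  have memE1 : ∀ e, e ∈ E1 → ∃ S ⊆ E, S.card < k ∧
      (∀ e ∈ E \ S, Disjoint e (S.biUnion id)) ∧ e ∈ S := by
    intro e he
    rw [hE1, Finset.mem_biUnion] at he
    obtain ⟨S, hS, heS⟩ := he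
    rw [Finset.mem_filter, Finset.mem_powerset] at hS
    exact ⟨S, hS.1, hS.2.1, hS.2.2, heS⟩
  have hE1E : E1 ⊆ E := by
    intro e he
    obtain ⟨S, hS, _, _, h⟩ := memE1 e he
    exact hS h
  set W := E1.biUnion id with hW
  have hdisj : ∀ e ∈ E \ E1, Disjoint e W := by
    intro e he
    rw [hW, Finset.disjoint_biUnion_right]
    intro f hf
    obtain ⟨S, hS, hSk, hSd, h⟩ := memE1 f hf
    rw [Finset.mem_sdiff] at he
    refine Finset.disjoint_of_subset_right (Finset.subset_biUnion_of_mem id h)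
      (hSd e (Finset.mem_sdiff.2 ⟨he.1, fun heS => he.2 ?_⟩))
    rw [hE1, Finset.mem_biUnion]
    exact ⟨S, by rw [Finset.mem_filter, Finset.mem_powerset]; exact ⟨hS, hSk, hSd⟩, heS⟩
  have hE1c : E1.card ≤ W.card * k := by
    have hs : E1 ⊆ W.biUnion (fun w => E1.filter (fun e => w ∈ e)) := by
      intro e he
      have h0 := h2 e (hE1E he)
      obtain ⟨w, hw⟩ := Finset.card_pos.1 (by omega : 0 < e.card)
      rw [Finset.mem_biUnion]
      exact ⟨w, Finset.subset_biUnion_of_mem id he hw, Finset.mem_filter.2 ⟨he, hw⟩⟩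
    refine (Finset.card_le_card hs).trans (Finset.card_biUnion_le_card_mul _ _ k ?_)
    intro w hw
    rw [hW, Finset.mem_biUnion] at hw
    obtain ⟨f, hf, hwf⟩ := hw
    obtain ⟨S, hS, hSk, hSd, h⟩ := memE1 f hf
    refine (Finset.card_le_card ?_).trans hSk.le
    intro e he
    rw [Finset.mem_filter] at he
    by_contra heS
    have := hSd e (Finset.mem_sdiff.2 ⟨hE1E he.1, heS⟩)
    exact Finset.disjoint_left.1 this he.2 (Finset.subset_biUnion_of_mem id h hwf)
  have hgood : ∀ S ⊆ E \ E1, S.Nonempty → S.card ≤ k →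
      (S.card : ℤ) - q ≤ ((S.biUnion id).card : ℤ) := by
    intro S hS hSn hSk
    by_contra hbad
    obtain ⟨T, hT, hmax⟩ := Finset.exists_max_image
      (E.powerset.filter (fun T => S ⊆ T ∧ T.card ≤ k ∧
        ((T.biUnion id).card : ℤ) < (T.card : ℤ) - q)) Finset.card
      ⟨S, by
        rw [Finset.mem_filter, Finset.mem_powerset]
        exact ⟨hS.trans Finset.sdiff_subset, Finset.Subset.refl _, hSk, by omega⟩⟩
    rw [Finset.mem_filter, Finset.mem_powerset] at hT
    obtain ⟨hTE, hST, hTk, hTb⟩ := hT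
    have hTk' : T.card < k := by
      refine lt_of_le_of_ne hTk (fun h => ?_)
      have := hE T hTE h
      omega
    obtain ⟨s, hs⟩ := hSn
    have hs1 : s ∈ E1 := by
      rw [hE1, Finset.mem_biUnion]
      refine ⟨T, ?_, hST hs⟩
      rw [Finset.mem_filter, Finset.mem_powerset]
      refine ⟨hTE, hTk', ?_⟩
      intro e he
      rw [Finset.mem_sdiff] at he
      by_contra hd
      have hci := Finset.card_insert_of_notMem he.2
      have hu := Finset.card_union_add_card_inter e (T.biUnion id)
      have hpos : 0 < (e ∩ T.biUnion id).card := by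
        rw [Finset.card_pos, ← Finset.not_disjoint_iff_nonempty_inter]
        exact hd
      have he2 := h2 e he.1
      have := hmax (insert e T) (by
        rw [Finset.mem_filter, Finset.mem_powerset]
        refine ⟨Finset.insert_subset he.1 hTE, hST.trans (Finset.subset_insert _ _),
          by omega, ?_⟩
        rw [Finset.biUnion_insert, hci]
        have hle : ((id e ∪ T.biUnion id).card) ≤ (T.biUnion id).card + 1 := by
          change (e ∪ T.biUnion id).card ≤ _
          omega
        push_cast
        omega)
      omega
    exact (Finset.mem_sdiff.1 (hS hs)).2 hs1
  obtain ⟨F, hF2, hFL, hFc⟩ := sparse_exists k W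
  have hEF : Disjoint (E \ E1) F := by
    rw [Finset.disjoint_left]
    intro e he heF
    have h1 := hdisj e he
    have h3 := (hF2 e heF)
    have : e = ∅ := by
      rw [← Finset.bot_eq_empty, ← disjoint_self]
      exact Finset.disjoint_of_subset_right h3.2 h1
    rw [this] at h3
    simp at h3
  refine ⟨(E \ E1) ∪ F, ?_, ?_, ?_⟩
  · intro e he
    rcases Finset.mem_union.1 he with he | he
    · exact h2 e (Finset.mem_sdiff.1 he).1
    · exact (hF2 e he).1
  · intro i hi hik T hT hTi
    set T0 := T ∩ (E \ E1) with hT0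
    set T1 := T ∩ F with hT1
    have hTT : T = T0 ∪ T1 := by
      rw [hT0, hT1, ← Finset.inter_union_distrib_left, Finset.inter_eq_left.2 hT]
    have hd : Disjoint T0 T1 :=
      Finset.disjoint_of_subset_left Finset.inter_subset_right
        (Finset.disjoint_of_subset_right Finset.inter_subset_right hEF)
    have hc : T.card = T0.card + T1.card := by
      conv_lhs => rw [hTT]
      exact Finset.card_union_of_disjoint hd
    have hd2 : Disjoint (T0.biUnion id) (T1.biUnion id) := by
      rw [Finset.disjoint_biUnion_left]
      intro e he
      refine Finset.disjoint_of_subset_right ?_ (hdisj e (Finset.mem_inter.1 he).2)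
      rw [Finset.biUnion_subset]
      intro f hf
      exact (hF2 f (Finset.mem_inter.1 hf).2).2
    have hc2 : (T.biUnion id).card = (T0.biUnion id).card + (T1.biUnion id).card := by
      conv_lhs => rw [hTT]
      rw [Finset.union_biUnion]
      exact Finset.card_union_of_disjoint hd2
    have k1 : T1.card ≤ (T1.biUnion id).card ∧
        (T1.Nonempty → T1.card + 1 ≤ (T1.biUnion id).card) := by
      have := hFL T1 Finset.inter_subset_right (by omega)
      refine ⟨?_, this⟩
      rcases T1.eq_empty_or_nonempty with h | h
      · rw [h]; simp
      · have := this h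
        omega
    rcases T0.eq_empty_or_nonempty with h | h
    · have h0 : T0.card = 0 := by rw [h]; simp
      have := k1.2 (Finset.card_pos.1 (by push_cast at hi; omega))
      omega
    · have := hgood T0 Finset.inter_subset_right h (by omega)
      have := k1.1
      omega
  · rw [Finset.card_union_of_disjoint hEF]
    have := Finset.card_sdiff_add_card_eq_card hE1E
    have h3 := mul_comm k W.card
    omega


/-- For `q ≥ -1` and `k ≥ q+3` there is a constant `d = d(k,q)` such that for every
`n ≥ k-q-1` we have `f^{(2)}(n,k-q-1,k) - ex(n, H^{(2)}(k,q)) ≤ d`. -/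
theorem statement4 (k : ℕ) (q : ℤ) (hq : -1 ≤ q) (hk : q + 3 ≤ (k : ℤ)) :
    ∃ d : ℤ, ∀ n : ℕ, (k : ℤ) - q - 1 ≤ (n : ℤ) →
      (fBES n 2 k ((k : ℤ) - q - 1) : ℤ) - (exH n 2 k q : ℤ) ≤ d := by
  refine ⟨((k * (1 + 2 * k * 2) ^ (k + 1) + 1 : ℕ) : ℤ), fun n _ => ?_⟩
  have hmem := Nat.sSup_mem (s := {m | ∃ E : Finset (Finset (Fin n)),
    (∀ e ∈ E, e.card = 2) ∧
    (∀ E' ⊆ E, E'.card = k → (k : ℤ) - q - 1 + 1 ≤ ((E'.biUnion id).card : ℤ)) ∧ E.card = m})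
    ⟨0, ∅, by simp, by
      intro E' h1 h2
      rw [Finset.subset_empty.1 h1] at h2
      simp at h2
      omega, by simp⟩
    ⟨Fintype.card (Finset (Fin n)), by
      rintro m ⟨E, _, _, rfl⟩
      exact Finset.card_le_univ E⟩
  obtain ⟨E, h2, hE, hc⟩ := hmem
  obtain ⟨F, hF2, hFH, hFc⟩ := main_aux k q hq E h2 hE
  have hle : F.card ≤ exH n 2 k q := by
    refine le_csSup ⟨Fintype.card (Finset (Fin n)), ?_⟩ ⟨F, hF2, hFH, rfl⟩
    rintro m ⟨E, _, _, rfl⟩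
    exact Finset.card_le_univ E
  have hf : fBES n 2 k ((k : ℤ) - q - 1) = E.card + 1 := by
    rw [fBES, hc]
  rw [hf]
  generalize k * (1 + 2 * k * 2) ^ (k + 1) = M at *
  push_cast
  omega
end

section
/- Let r, k, q be fixed integers satisfying r ≥ 2, q ≥ −r+1 and q+r+1 ≤ k, with k ≥ 2. Then f^{(r)}(n,k−q−1,k) = (1+o(1))·ex(n, H^{(r)}(k,q)) as n → ∞; that is, the ratio f^{(r)}(n,k−q−1,k) / ex(n, H^{(r)}(k,q)) tends to 1 as n tends to infinity. -/
open Finset in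
lemma aux_removal (n r k : ℕ) (q : ℤ) (hr : 2 ≤ r) (hq : -(r : ℤ) + 1 ≤ q)
    (E : Finset (Finset (Fin n))) (hE : ∀ e ∈ E, e.card = r)
    (hk : ∀ E' ⊆ E, E'.card = k → (k : ℤ) - q ≤ ((E'.biUnion id).card : ℤ)) :
    ∃ F ⊆ E, HFree r k q F ∧ E.card ≤ F.card + k * n ^ (r - 1) := by
  classical
  let bad : Finset (Finset (Fin n)) → Prop := fun T =>
    T ⊆ E ∧ q + r + 1 ≤ (T.card : ℤ) ∧ T.card ≤ k ∧ ((T.biUnion id).card : ℤ) ≤ T.card - q - 1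
  let D := E.filter (fun e => ∃ T, bad T ∧ e ∈ T)
  refine ⟨E \ D, sdiff_subset, ?_, ?_⟩
  · intro i hi hik T hT hTi
    by_contra hcon
    push Not at hcon
    have hb : bad T := ⟨hT.trans sdiff_subset, by omega, by omega, by omega⟩
    have hne : T.Nonempty := by
      by_contra h
      rw [not_nonempty_iff_eq_empty] at h
      rw [h, card_empty] at hTi
      omega
    obtain ⟨e, he⟩ := hne
    have h1 := hT he
    simp only [mem_sdiff, D, mem_filter, not_and] at h1
    exact h1.2 h1.1 ⟨T, hb, he⟩
  · have hD : D ⊆ E := filter_subset _ _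
    have hcard := card_sdiff_add_card_eq_card hD
    suffices h : D.card ≤ k * n ^ (r - 1) by omega
    have key : ∀ e ∈ D, ∃ T : Finset (Finset (Fin n)), T.card ≤ k ∧
        ∀ g ⊆ e, g.card = r - 1 → ∀ e' ∈ E, g ⊆ e' → e' ∈ T := by
      intro e he
      obtain ⟨heE, T0, hT0⟩ := mem_filter.1 he
      let C := E.powerset.filter (fun T => bad T ∧ e ∈ T)
      have hC : C.Nonempty := ⟨T0, mem_filter.2 ⟨mem_powerset.2 hT0.1.1, hT0⟩⟩
      obtain ⟨T, hTC, hmax⟩ := exists_max_image C card hC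
      obtain ⟨-, ⟨hTE, hT1, hT2, hT3⟩, heT⟩ := mem_filter.1 hTC
      refine ⟨T, hT2, ?_⟩
      intro g hge hg e' he' hge'
      by_contra hnot
      have hlt : T.card ≠ k := by
        intro h
        have := hk T hTE h
        omega
      have hc := card_insert_of_notMem hnot
      have hsub : g ⊆ T.biUnion id := hge.trans (subset_biUnion_of_mem id heT)
      have hun : ((insert e' T).biUnion id).card ≤ (T.biUnion id).card + 1 := by
        rw [biUnion_insert]
        have h1 : id e' ∪ T.biUnion id = (e' \ g) ∪ T.biUnion id := by
          ext x
          simp only [mem_union, mem_sdiff, id]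
          have := @hsub x
          tauto
        rw [h1]
        have h2 := card_union_le (e' \ g) (T.biUnion id)
        have h3 := card_sdiff_of_subset hge'
        rw [hE e' he', hg] at h3
        omega
      have hb : bad (insert e' T) := by
        refine ⟨insert_subset he' hTE, ?_, ?_, ?_⟩ <;> rw [hc] <;> push_cast <;> omega
      have := hmax (insert e' T) (mem_filter.2 ⟨mem_powerset.2 hb.1, hb, mem_insert_of_mem heT⟩)
      omega
    have hg : ∀ e : Finset (Fin n), ∃ g : Finset (Fin n), e ∈ E → g ⊆ e ∧ g.card = r - 1 := by
      intro e
      by_cases he : e ∈ E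
      · obtain ⟨g, h⟩ := exists_subset_card_eq (s := e) (n := r - 1) (by rw [hE e he]; omega)
        exact ⟨g, fun _ => h⟩
      · exact ⟨∅, fun h => absurd h he⟩
    choose g hg using hg
    have := card_le_mul_card_image_of_maps_to (f := g) (s := D)
      (t := powersetCard (r - 1) univ) (fun e he => by
        rw [mem_powersetCard]; exact ⟨subset_univ _, (hg e (hD he)).2⟩) k (by
        intro b hb
        by_cases hne : (D.filter (fun e => g e = b)).Nonempty
        · obtain ⟨e, he⟩ := hne
          obtain ⟨he1, he2⟩ := mem_filter.1 he
          obtain ⟨T, hT, hT'⟩ := key e he1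
          refine (card_le_card ?_).trans hT
          intro e' he'
          obtain ⟨h1, h2⟩ := mem_filter.1 he'
          refine hT' (g e) (hg e (hD he1)).1 (hg e (hD he1)).2 e' (hD h1) ?_
          rw [he2, ← h2]
          exact (hg e' (hD h1)).1
        · rw [not_nonempty_iff_eq_empty] at hne
          rw [hne]; simp)
    refine this.trans (Nat.mul_le_mul_left _ ?_)
    rw [card_powersetCard, card_univ, Fintype.card_fin]
    exact Nat.choose_le_pow n (r - 1)

open Finset in
lemma aux_indep {X : Type*} [DecidableEq X] (U : Finset X) (B : Finset (Finset X)) (k : ℕ)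
    (hk : 1 ≤ k) (hB : ∀ b ∈ B, b ⊆ U ∧ b.card = k) (p : ℝ) (h0 : 0 ≤ p) (h1 : p ≤ 1) :
    ∃ S ⊆ U, (∀ b ∈ B, ¬ b ⊆ S) ∧ p * U.card - p ^ k * B.card ≤ (S.card : ℝ) := by
  classical
  let w : Finset X → ℝ := fun S => (∏ _i ∈ S, p) * ∏ _i ∈ U \ S, (1 - p)
  have hw : ∀ S, 0 ≤ w S := fun S =>
    mul_nonneg (prod_nonneg fun _ _ => h0) (prod_nonneg fun _ _ => by linarith)
  have hw1 : ∑ S ∈ U.powerset, w S = 1 := by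
    have := prod_add (fun _ : X => p) (fun _ => 1 - p) U
    simp only [add_sub_cancel, prod_const_one] at this
    exact this.symm
  have hb : ∀ b ⊆ U, ∑ S ∈ U.powerset, w S * (if b ⊆ S then 1 else 0) = p ^ b.card := by
    intro b hbU
    have := prod_add (fun _ : X => p) (fun i => if i ∈ b then 0 else 1 - p) U
    have hl : ∏ i ∈ U, (p + if i ∈ b then 0 else 1 - p) = p ^ b.card := by
      have : ∀ i ∈ U, (p + if i ∈ b then 0 else 1 - p) = if i ∈ b then p else 1 := by
        intro i _; split_ifs <;> ring
      rw [prod_congr rfl this, prod_ite_mem, inter_eq_right.2 hbU, prod_const]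
    rw [← hl, this]
    refine sum_congr rfl fun S hS => ?_
    by_cases h : b ⊆ S
    · simp only [h, if_true, mul_one, w]
      congr 1
      refine prod_congr rfl fun i hi => ?_
      rw [if_neg]
      exact fun hib => (mem_sdiff.1 hi).2 (h hib)
    · simp only [h, if_false, mul_zero]
      obtain ⟨x, hx, hxS⟩ := not_subset.1 h
      rw [prod_eq_zero (i := x) (s := U \ S) (mem_sdiff.2 ⟨hbU hx, hxS⟩) (by simp [hx]), mul_zero]
  let F : Finset X → ℝ := fun S => ∑ x ∈ U, (if {x} ⊆ S then 1 else 0)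
    - ∑ b ∈ B, (if b ⊆ S then 1 else 0)
  have hF : ∑ S ∈ U.powerset, w S * F S = p * U.card - p ^ k * B.card := by
    simp only [F, mul_sub, sum_sub_distrib, mul_sum]
    rw [sum_comm, sum_comm (s := U.powerset) (t := B)]
    rw [sum_congr rfl fun x hx => hb {x} (singleton_subset_iff.2 hx)]
    rw [sum_congr rfl fun b hx => hb b (hB b hx).1]
    rw [sum_congr (s₁ := B) rfl fun b hx => by rw [(hB b hx).2]]
    simp [mul_comm]
  obtain ⟨S, hS, hSF⟩ : ∃ S ∈ U.powerset, p * U.card - p ^ k * B.card ≤ F S := by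
    by_contra hcon
    push Not at hcon
    have h2 : ∑ S ∈ U.powerset, w S * F S < ∑ S ∈ U.powerset,
        w S * (p * U.card - p ^ k * B.card) := by
      refine sum_lt_sum (fun S hS => mul_le_mul_of_nonneg_left (hcon S hS).le (hw S)) ?_
      by_contra hh
      push Not at hh
      have : ∑ S ∈ U.powerset, w S ≤ 0 := by
        refine sum_nonpos fun S hS => ?_
        by_contra hpos
        push Not at hpos
        exact absurd (hh S hS) (not_le.2 (mul_lt_mul_of_pos_left (hcon S hS) hpos))
      linarith
    rw [← sum_mul, hw1, hF, one_mul] at h2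
    exact lt_irrefl _ h2
  have hSU := mem_powerset.1 hS
  have hsel : ∀ b : Finset X, ∃ x : Finset X, x.card ≤ 1 ∧ (b ∈ B → ∃ y ∈ b, y ∈ x) := by
    intro b
    by_cases hbB : b ∈ B
    · obtain ⟨y, hy⟩ := card_pos.1 (by rw [(hB b hbB).2]; omega : 0 < b.card)
      exact ⟨{y}, by simp, fun _ => ⟨y, hy, by simp⟩⟩
    · exact ⟨∅, by simp, fun h => absurd h hbB⟩
  choose x hx1 hx2 using hsel
  let R := (B.filter (fun b => b ⊆ S)).biUnion x
  refine ⟨S \ R, sdiff_subset.trans hSU, ?_, ?_⟩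
  · intro b hbB hbS
    obtain ⟨y, hyb, hyx⟩ := hx2 b hbB
    have := (mem_sdiff.1 (hbS hyb)).2
    exact this (mem_biUnion.2 ⟨b, mem_filter.2 ⟨hbB, hbS.trans sdiff_subset⟩, hyx⟩)
  · refine hSF.trans ?_
    have hR : R.card ≤ (B.filter (fun b => b ⊆ S)).card := by
      have := card_biUnion_le_card_mul (B.filter (fun b => b ⊆ S)) x 1 (fun b _ => hx1 b)
      simpa using this
    have hd : S.card ≤ (S \ R).card + R.card := by
      have := le_card_sdiff R S
      omega
    have e1 : (∑ x ∈ U, (if {x} ⊆ S then (1:ℝ) else 0)) = S.card := by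
      simp only [singleton_subset_iff]
      rw [sum_ite_mem, inter_eq_right.2 hSU]; simp
    have e2 : (∑ b ∈ B, (if b ⊆ S then (1:ℝ) else 0)) = (B.filter (fun b => b ⊆ S)).card := by
      simp
    simp only [F]
    rw [e1, e2]
    have : (S.card : ℝ) ≤ (S \ R).card + (B.filter (fun b => b ⊆ S)).card := by
      exact_mod_cast hd.trans (by omega)
    linarith

open Finset in
lemma aux_count (n r k w : ℕ) (hw : w ≤ n) :
    ((powersetCard k (powersetCard r (univ : Finset (Fin n)))).filter
      (fun b => (b.biUnion id).card ≤ w)).card ≤ 2 ^ 2 ^ w * n ^ w := by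
  classical
  have hsub : ((powersetCard k (powersetCard r (univ : Finset (Fin n)))).filter
      (fun b => (b.biUnion id).card ≤ w)) ⊆
      (powersetCard w (univ : Finset (Fin n))).biUnion (fun W => W.powerset.powerset) := by
    intro b hb
    obtain ⟨h1, h2⟩ := mem_filter.1 hb
    obtain ⟨W, hW1, hW2⟩ := exists_superset_card_eq h2 (by simpa using hw)
    refine mem_biUnion.2 ⟨W, mem_powersetCard.2 ⟨subset_univ _, hW2⟩, ?_⟩
    rw [mem_powerset]
    intro e he
    rw [mem_powerset]
    exact (subset_biUnion_of_mem id he).trans hW1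
  refine (card_le_card hsub).trans ((card_biUnion_le_card_mul _ _ (2 ^ 2 ^ w) ?_).trans ?_)
  · intro W hW
    rw [card_powerset, card_powerset, (mem_powersetCard.1 hW).2]
  · rw [mul_comm]
    refine Nat.mul_le_mul_left _ ?_
    rw [card_powersetCard, card_univ, Fintype.card_fin]
    exact Nat.choose_le_pow n w

open Finset in
lemma aux_lower (r k : ℕ) (hr : 2 ≤ r) (hk2 : 2 ≤ k) (A : ℝ) (hA : 0 ≤ A) :
    ∀ᶠ n : ℕ in Filter.atTop, ∃ E : Finset (Finset (Fin n)), (∀ e ∈ E, e.card = r) ∧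
      (∀ E' ⊆ E, E'.card = k → k + r - 1 ≤ (E'.biUnion id).card) ∧
      A * (n : ℝ) ^ (r - 1) ≤ E.card := by
  classical
  set w := k + r - 2 with hwdef
  set c : ℝ := 2 ^ r * (r.factorial : ℝ) with hc
  have hcpos : 0 < c := by positivity
  set L : ℝ := (A + 1) * c with hL
  have hLpos : 0 < L := by positivity
  set C : ℝ := 2 ^ 2 ^ w with hC
  filter_upwards [Filter.eventually_ge_atTop (2 * r), Filter.eventually_ge_atTop w,
    Filter.eventually_ge_atTop 1, Filter.eventually_ge_atTop ⌈L⌉₊,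
    Filter.eventually_ge_atTop ⌈L ^ k * C⌉₊] with n hn1 hn2 hn3 hn4 hn5
  have hn4 := Nat.ceil_le.1 hn4
  have hn5 := Nat.ceil_le.1 hn5
  have hnpos : (0 : ℝ) < n := by exact_mod_cast hn3
  set U := powersetCard r (univ : Finset (Fin n)) with hU
  set B := (powersetCard k U).filter (fun b => (b.biUnion id).card ≤ w) with hB
  obtain ⟨S, hSU, hSB, hS⟩ := aux_indep U B k (by omega)
    (fun b hb => mem_powersetCard.1 (mem_filter.1 hb).1) (L / n) (by positivity)
    ((div_le_one hnpos).2 hn4)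
  refine ⟨S, fun e he => (mem_powersetCard.1 (hSU he)).2, ?_, le_trans ?_ hS⟩
  · intro E' hE' hE'k
    by_contra hcon
    refine hSB E' (mem_filter.2 ⟨mem_powersetCard.2 ⟨hE'.trans hSU, hE'k⟩, by omega⟩) hE'
  · have hBc : (B.card : ℝ) ≤ C * n ^ w := by
      have := aux_count n r k w hn2
      rw [hC]; exact_mod_cast this
    have hUc : (n : ℝ) ^ r ≤ c * U.card := by
      have h1 : (n + 1 - r) ^ r ≤ r.factorial * n.choose r := by
        rw [← Nat.descFactorial_eq_factorial_mul_choose]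
        exact Nat.pow_sub_le_descFactorial n r
      have h2 : n ^ r ≤ 2 ^ r * (n + 1 - r) ^ r := by
        rw [← mul_pow]
        exact Nat.pow_le_pow_left (by omega) r
      have h3 : U.card = n.choose r := by
        rw [hU, card_powersetCard, card_univ, Fintype.card_fin]
      have h4 : n ^ r ≤ 2 ^ r * r.factorial * U.card := by
        rw [h3, mul_assoc]; exact h2.trans (Nat.mul_le_mul_left _ h1)
      rw [hc]; exact_mod_cast h4
    have e1 : (A + 1) * (n : ℝ) ^ (r - 1) ≤ L / n * U.card := by
      rw [div_mul_eq_mul_div, le_div_iff₀ hnpos, mul_assoc, ← pow_succ,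
        show r - 1 + 1 = r by omega, hL, mul_assoc]
      exact mul_le_mul_of_nonneg_left hUc (by linarith)
    have e2 : (L / n) ^ k * B.card ≤ (n : ℝ) ^ (r - 1) := by
      calc (L / n) ^ k * B.card ≤ (L / n) ^ k * (C * n ^ w) :=
            mul_le_mul_of_nonneg_left hBc (by positivity)
        _ = L ^ k * C * n ^ w / n ^ k := by rw [div_pow]; ring
        _ ≤ n * n ^ w / n ^ k := by gcongr
        _ = (n : ℝ) ^ (r - 1) := by
            rw [div_eq_iff (by positivity), ← pow_succ', ← pow_add]
            congr 1; omega
    linarith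

lemma aux_bdd (n : ℕ) (P : Finset (Finset (Fin n)) → Prop) :
    BddAbove {m | ∃ E : Finset (Finset (Fin n)), P E ∧ E.card = m} := by
  refine ⟨Fintype.card (Finset (Fin n)), ?_⟩
  rintro m ⟨E, -, rfl⟩
  exact Finset.card_le_univ E

/-- For fixed `r ≥ 2`, `q ≥ -r+1`, `q+r+1 ≤ k` and `k ≥ 2`, the ratio
`f^{(r)}(n,k-q-1,k) / ex(n, H^{(r)}(k,q))` tends to `1` as `n → ∞`. -/
theorem statement6 (r k : ℕ) (q : ℤ)
    (hr : 2 ≤ r) (hq : -(r : ℤ) + 1 ≤ q) (hqk : q + r + 1 ≤ (k : ℤ)) (hk2 : 2 ≤ k) :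
    Filter.Tendsto
      (fun n : ℕ => (fBES n r k ((k : ℤ) - q - 1) : ℝ) / (exH n r k q : ℝ))
      Filter.atTop (nhds 1) := by
  have bd1 : ∀ n, BddAbove {m | ∃ E : Finset (Finset (Fin n)),
      (∀ e ∈ E, e.card = r) ∧ HFree r k q E ∧ E.card = m} := by
    intro n
    have := aux_bdd n (fun E => (∀ e ∈ E, e.card = r) ∧ HFree r k q E)
    simpa only [and_assoc] using this
  have bd2 : ∀ n, BddAbove {m | ∃ E : Finset (Finset (Fin n)),
      (∀ e ∈ E, e.card = r) ∧
      (∀ E' ⊆ E, E'.card = k → (k : ℤ) - q - 1 + 1 ≤ ((E'.biUnion id).card : ℤ)) ∧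
      E.card = m} := by
    intro n
    have := aux_bdd n (fun E => (∀ e ∈ E, e.card = r) ∧
      (∀ E' ⊆ E, E'.card = k → (k : ℤ) - q - 1 + 1 ≤ ((E'.biUnion id).card : ℤ)))
    simpa only [and_assoc] using this
  have ne1 : ∀ n, {m | ∃ E : Finset (Finset (Fin n)),
      (∀ e ∈ E, e.card = r) ∧ HFree r k q E ∧ E.card = m}.Nonempty := by
    intro n
    refine ⟨0, ∅, by simp, ?_, by simp⟩
    intro i hi _ E' hE' hc
    rw [Finset.subset_empty.1 hE'] at hc
    simp at hc
    omega
  have ne2 : ∀ n, {m | ∃ E : Finset (Finset (Fin n)),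
      (∀ e ∈ E, e.card = r) ∧
      (∀ E' ⊆ E, E'.card = k → (k : ℤ) - q - 1 + 1 ≤ ((E'.biUnion id).card : ℤ)) ∧
      E.card = m}.Nonempty := by
    intro n
    refine ⟨0, ∅, by simp, ?_, by simp⟩
    intro E' hE' hc
    rw [Finset.subset_empty.1 hE'] at hc
    simp at hc
    omega
  have hle : ∀ n, exH n r k q + 1 ≤ fBES n r k ((k : ℤ) - q - 1) := by
    intro n
    obtain ⟨E, h1, h2, h3⟩ := Nat.sSup_mem (ne1 n) (bd1 n)
    have : exH n r k q = E.card := h3.symm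
    rw [this]
    unfold fBES
    refine Nat.succ_le_succ (le_csSup (bd2 n) ⟨E, h1, ?_, rfl⟩)
    intro E' hE' hc
    have := h2 k hqk le_rfl E' hE' hc
    omega
  have hge : ∀ n, fBES n r k ((k : ℤ) - q - 1) ≤ exH n r k q + k * n ^ (r - 1) + 1 := by
    intro n
    obtain ⟨E, h1, h2, h3⟩ := Nat.sSup_mem (ne2 n) (bd2 n)
    have : fBES n r k ((k : ℤ) - q - 1) = E.card + 1 := by
      unfold fBES; rw [h3]
    rw [this]
    obtain ⟨F, hFE, hF, hc⟩ := aux_removal n r k q hr hq E h1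
      (fun E' a b => by have := h2 E' a b; omega)
    have : F.card ≤ exH n r k q :=
      le_csSup (bd1 n) ⟨F, fun e he => h1 e (hFE he), hF, rfl⟩
    omega
  have hlow : ∀ A : ℝ, 0 ≤ A → ∀ᶠ n : ℕ in Filter.atTop,
      A * (n : ℝ) ^ (r - 1) ≤ fBES n r k ((k : ℤ) - q - 1) := by
    intro A hA
    filter_upwards [aux_lower r k hr hk2 A hA] with n ⟨E, h1, h2, h3⟩
    refine h3.trans ?_
    have : E.card ≤ sSup {m | ∃ E : Finset (Finset (Fin n)),
      (∀ e ∈ E, e.card = r) ∧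
      (∀ E' ⊆ E, E'.card = k → (k : ℤ) - q - 1 + 1 ≤ ((E'.biUnion id).card : ℤ)) ∧
      E.card = m} := le_csSup (bd2 n) ⟨E, h1, fun E' a b => by
        have := h2 E' a b
        omega, rfl⟩
    unfold fBES
    exact_mod_cast this.trans (Nat.le_succ _)
  rw [Metric.tendsto_nhds]
  intro ε hε
  have hK : (0 : ℝ) < (k : ℝ) + 1 := by positivity
  filter_upwards [hlow ((k + 1) + (k + 1) / ε + 1) (by positivity),
    Filter.eventually_ge_atTop 1] with n hn hn1
  have hx : (1 : ℝ) ≤ (n : ℝ) ^ (r - 1) := one_le_pow₀ (by exact_mod_cast hn1)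
  have h1 : (exH n r k q : ℝ) + 1 ≤ fBES n r k ((k : ℤ) - q - 1) := by exact_mod_cast hle n
  have h2 : (fBES n r k ((k : ℤ) - q - 1) : ℝ) ≤ exH n r k q + k * (n : ℝ) ^ (r - 1) + 1 := by
    exact_mod_cast hge n
  generalize (fBES n r k ((k : ℤ) - q - 1) : ℝ) = a at *
  generalize (exH n r k q : ℝ) = b at *
  generalize (n : ℝ) ^ (r - 1) = x at *
  have h3 : ((k + 1) / ε + 1) * x ≤ b := by nlinarith
  have hb : 0 < b := lt_of_lt_of_le (by positivity) h3
  have h4 : ((k + 1) + ε) * x ≤ ε * b := by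
    have := mul_le_mul_of_nonneg_left h3 hε.le
    have e : ε * (((k + 1) / ε + 1) * x) = ((k + 1) + ε) * x := by field_simp
    linarith
  rw [Real.dist_eq, div_sub_one hb.ne', abs_of_nonneg (div_nonneg (by linarith) hb.le),
    div_lt_iff₀ hb]
  nlinarith [mul_pos hε (by linarith : 0 < x)]
end

section
/- Let v and k be integers with 2 ≤ v ≤ k, and let C = (k−v+1)^{1/⌊k/(k−v+2)⌋} (a real number). Then there exists a constant D such that for every positive integer n, f^{(2)}(n,v,k) < C·n^{1+1/⌊k/(k−v+2)⌋} + (k−v+1)·n + D. -/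
open Finset in
lemma bes_extend {V : Type*} [Fintype V] [DecidableEq V] (G : SimpleGraph V) [DecidableRel G.Adj]
    (k s : ℕ)
    (hfree : ∀ F ⊆ G.edgeFinset, F.card = k → ∀ W : Finset V, (∀ e ∈ F, ∀ a ∈ e, a ∈ W) →
      k + 2 ≤ W.card + s) (u : V) (hu : k ≤ G.degree u) :
    ∀ (m : ℕ) (F : Finset (Sym2 V)) (W : Finset V), F ⊆ G.edgeFinset → (∀ e ∈ F, ∀ a ∈ e, a ∈ W) →
      u ∈ W → F.card + m = k → W.card + s ≤ F.card + 1 → False := by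
  intro m
  induction m with
  | zero =>
    intro F W hF hW _ hc hb
    have := hfree F hF (by omega) W hW
    omega
  | succ m ih =>
    intro F W hF hW huW hc hb
    have hex : ∃ e ∈ G.incidenceFinset u, e ∉ F := by
      apply Finset.exists_mem_notMem_of_card_lt_card
      rw [G.card_incidenceFinset_eq_degree]
      omega
    obtain ⟨e, he, heF⟩ := hex
    rw [SimpleGraph.mem_incidenceFinset] at he
    obtain ⟨he1, he2⟩ := he
    obtain ⟨w, rfl⟩ := Sym2.mem_iff_exists.1 he2
    refine ih (insert s(u, w) F) (insert w W) ?_ ?_ (by simp [huW]) ?_ ?_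
    · intro e he
      rcases Finset.mem_insert.1 he with rfl | he
      · simpa using he1
      · exact hF he
    · intro e he a ha
      rcases Finset.mem_insert.1 he with rfl | he
      · rcases Sym2.mem_iff.1 ha with rfl | rfl <;> simp [huW]
      · exact Finset.mem_insert_of_mem (hW e he a ha)
    · rw [Finset.card_insert_of_notMem heF]; omega
    · rw [Finset.card_insert_of_notMem heF]
      have := Finset.card_insert_le w W
      omega

def BGood {V : Type*} [Fintype V] [DecidableEq V] (G : SimpleGraph V) [DecidableRel G.Adj]
    (l : V → ℕ) (x : V) (i : ℕ) (W : Finset V) (F : Finset (Sym2 V)) : Prop :=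
  x ∈ W ∧ F ⊆ G.edgeFinset ∧ (∀ e ∈ F, ∀ a ∈ e, a ∈ W) ∧ (∀ a b, s(a, b) ∈ F → l a ≠ l b) ∧
    (∀ w ∈ W, l w ≤ i) ∧ W.card ≤ F.card + 1

lemma bes_close_one {V : Type*} [Fintype V] [DecidableEq V] (G : SimpleGraph V)
    [DecidableRel G.Adj] (l : V → ℕ) (x : V) (i t : ℕ) (hit : i ≤ t)
    (h0 : ∀ u, l u = 0 → u = x)
    (hp : ∀ u j, l u = j + 1 → j < t → ∃ p, G.Adj p u ∧ l p = j)
    (W : Finset V) (F : Finset (Sym2 V)) (hg : BGood G l x i W F) :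
    ∀ (j : ℕ) (u : V), l u = j → j ≤ i → ∃ W' F', BGood G l x i W' F' ∧ W ⊆ W' ∧ u ∈ W' ∧
      F'.card ≤ F.card + j := by
  intro j
  induction j with
  | zero =>
    intro u hu _
    exact ⟨W, F, hg, subset_rfl, by rw [h0 u hu]; exact hg.1, le_rfl⟩
  | succ j ih =>
    intro u hu hj
    obtain ⟨p, hpu, hpl⟩ := hp u j hu (by omega)
    obtain ⟨W', F', hg', hWW, hpW, hc⟩ := ih p hpl (by omega)
    by_cases huW : u ∈ W'
    · exact ⟨W', F', hg', hWW, huW, by omega⟩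
    obtain ⟨g1, g2, g3, g4, g5, g6⟩ := hg'
    have hnF : s(p, u) ∉ F' := fun h => huW (g3 _ h u (by simp))
    refine ⟨insert u W', insert s(p, u) F', ⟨by simp [g1], ?_, ?_, ?_, ?_, ?_⟩, ?_, by simp, ?_⟩
    · intro e he
      rcases Finset.mem_insert.1 he with rfl | he
      · simpa using hpu
      · exact g2 he
    · intro e he a ha
      rcases Finset.mem_insert.1 he with rfl | he
      · rcases Sym2.mem_iff.1 ha with rfl | rfl <;> simp [hpW]
      · exact Finset.mem_insert_of_mem (g3 e he a ha)
    · intro a b hab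
      rcases Finset.mem_insert.1 hab with h | h
      · rcases Sym2.eq_iff.1 h with ⟨rfl, rfl⟩ | ⟨rfl, rfl⟩ <;> omega
      · exact g4 a b h
    · intro w hw
      rcases Finset.mem_insert.1 hw with rfl | hw
      · omega
      · exact g5 w hw
    · rw [Finset.card_insert_of_notMem hnF, Finset.card_insert_of_notMem huW]; omega
    · exact hWW.trans (Finset.subset_insert _ _)
    · rw [Finset.card_insert_of_notMem hnF]; omega

lemma bes_close {V : Type*} [Fintype V] [DecidableEq V] (G : SimpleGraph V)
    [DecidableRel G.Adj] (l : V → ℕ) (x : V) (i t : ℕ) (hit : i ≤ t)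
    (h0 : ∀ u, l u = 0 ↔ u = x)
    (hp : ∀ u j, l u = j + 1 → j < t → ∃ p, G.Adj p u ∧ l p = j)
    (U : Finset V) : (∀ u ∈ U, l u = i) → ∃ W F, BGood G l x i W F ∧ U ⊆ W ∧
      F.card ≤ i * U.card := by
  induction U using Finset.induction_on with
  | empty =>
    intro _
    refine ⟨{x}, ∅, ⟨by simp, by simp, by simp, by simp, ?_, by simp⟩, by simp, by simp⟩
    intro w hw
    rw [(h0 w).2 (by simpa using hw)]
    omega
  | insert u U hu ih =>
    intro hU
    obtain ⟨W, F, hg, hUW, hc⟩ := ih (fun w hw => hU w (by simp [hw]))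
    obtain ⟨W', F', hg', hWW, huW, hc'⟩ :=
      bes_close_one G l x i t hit (fun u => (h0 u).1) hp W F hg i u (hU u (by simp)) le_rfl
    refine ⟨W', F', hg', ?_, ?_⟩
    · intro w hw
      rcases Finset.mem_insert.1 hw with rfl | hw
      · exact huW
      · exact hWW (hUW hw)
    · rw [Finset.card_insert_of_notMem hu]
      nlinarith

lemma bes_indeg {V : Type*} [Fintype V] [DecidableEq V] (G : SimpleGraph V)
    [DecidableRel G.Adj] (l : V → ℕ) (x : V) (i t k s : ℕ) (hit : i + 1 ≤ t)
    (h0 : ∀ u, l u = 0 ↔ u = x)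
    (hp : ∀ u j, l u = j + 1 → j < t → ∃ p, G.Adj p u ∧ l p = j)
    (hk : (s + 1) * t ≤ k) (hx : k ≤ G.degree x)
    (hfree : ∀ F ⊆ G.edgeFinset, F.card = k → ∀ W : Finset V, (∀ e ∈ F, ∀ a ∈ e, a ∈ W) →
      k + 2 ≤ W.card + s)
    (y : V) (hy : l y = i + 1) (P : Finset V) (hP : ∀ p ∈ P, G.Adj p y ∧ l p = i) :
    P.card ≤ s := by
  by_contra hcon
  obtain ⟨P', hP'P, hP'c⟩ := Finset.exists_subset_card_eq (show s + 1 ≤ P.card by omega)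
  obtain ⟨W, F, ⟨g1, g2, g3, g4, g5, g6⟩, hUW, hc⟩ :=
    bes_close G l x i t (by omega) h0 hp P' (fun u hu => (hP u (hP'P hu)).2)
  have hyW : y ∉ W := fun h => by have := g5 y h; omega
  set F1 := P'.image (fun p => s(p, y)) with hF1
  have hF1c : F1.card = s + 1 := by
    rw [hF1, Finset.card_image_of_injOn, hP'c]
    intro a _ b _ hab
    rcases Sym2.eq_iff.1 hab with h | h <;> grind
  have hdis : Disjoint F F1 := by
    rw [Finset.disjoint_left]
    intro e he he1
    obtain ⟨p, hp, rfl⟩ := Finset.mem_image.1 he1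
    exact hyW (g3 _ he y (by simp))
  have hcard : (F ∪ F1).card = F.card + (s + 1) := by
    rw [Finset.card_union_of_disjoint hdis, hF1c]
  have hle : (F ∪ F1).card ≤ k := by
    rw [hcard]; rw [hP'c] at hc
    have : (s + 1) * (i + 1) ≤ (s + 1) * t := Nat.mul_le_mul_left _ hit
    nlinarith
  refine bes_extend G k s hfree x hx (k - (F ∪ F1).card) (F ∪ F1) (insert y W) ?_ ?_
    (by simp [g1]) (by omega) ?_
  · refine Finset.union_subset g2 ?_
    intro e he
    obtain ⟨p, hp, rfl⟩ := Finset.mem_image.1 he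
    simpa using (hP p (hP'P hp)).1
  · intro e he a ha
    rcases Finset.mem_union.1 he with he | he
    · exact Finset.mem_insert_of_mem (g3 e he a ha)
    · obtain ⟨p, hp, rfl⟩ := Finset.mem_image.1 he
      rcases Sym2.mem_iff.1 ha with rfl | rfl
      · simp [hUW hp]
      · simp
  · rw [hcard, Finset.card_insert_of_notMem hyW]; omega

lemma bes_excess_eq {V : Type*} [Fintype V] [DecidableEq V] (G : SimpleGraph V)
    [DecidableRel G.Adj] (l : V → ℕ) (x : V) (i t k s : ℕ) (hit : i + 1 ≤ t)
    (h0 : ∀ u, l u = 0 ↔ u = x)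
    (hp : ∀ u j, l u = j + 1 → j < t → ∃ p, G.Adj p u ∧ l p = j)
    (hk : (s + 1) * t ≤ k) (hx : k ≤ G.degree x)
    (hfree : ∀ F ⊆ G.edgeFinset, F.card = k → ∀ W : Finset V, (∀ e ∈ F, ∀ a ∈ e, a ∈ W) →
      k + 2 ≤ W.card + s)
    (u : V) (hu : l u = i) (J Q : Finset V) (hJ : ∀ w ∈ J, G.Adj u w ∧ l w = i)
    (f : V → V)
    (hQ : ∀ w ∈ Q, G.Adj u w ∧ l w = i + 1 ∧ f w ≠ u ∧ G.Adj (f w) w ∧ l (f w) = i)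
    (hQt : Q.Nonempty → i + 2 ≤ t) (hs : J.card + Q.card = s) : False := by
  obtain ⟨W, F, ⟨g1, g2, g3, g4, g5, g6⟩, hUW, hc⟩ :=
    bes_close G l x i t (by omega) h0 hp (insert u (J ∪ Q.image f)) (by
      intro w hw
      rcases Finset.mem_insert.1 hw with rfl | hw
      · exact hu
      rcases Finset.mem_union.1 hw with hw | hw
      · exact (hJ w hw).2
      · obtain ⟨q, hq, rfl⟩ := Finset.mem_image.1 hw
        exact (hQ q hq).2.2.2.2)
  have hUc : (insert u (J ∪ Q.image f)).card ≤ s + 1 := by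
    have h1 := Finset.card_insert_le u (J ∪ Q.image f)
    have h2 := Finset.card_union_le J (Q.image f)
    have h3 : (Q.image f).card ≤ Q.card := Finset.card_image_le
    omega
  have huW : u ∈ W := hUW (by simp)
  have hJW : ∀ w ∈ J, w ∈ W := fun w hw => hUW (by simp [hw])
  have hfW : ∀ w ∈ Q, f w ∈ W := fun w hw => hUW (by
    apply Finset.mem_insert_of_mem
    apply Finset.mem_union_right
    exact Finset.mem_image_of_mem _ hw)
  have hQW : ∀ w ∈ Q, w ∉ W := fun w hw h => by have := g5 w h; have := (hQ w hw).2.1; omega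
  set F1 := J.image (fun w => s(u, w)) with hF1
  set F2 := Q.image (fun w => s(u, w)) with hF2
  set F3 := Q.image (fun w => s(f w, w)) with hF3
  have c1 : F1.card = J.card := by
    rw [hF1, Finset.card_image_of_injOn]
    intro a _ b _ hab
    rcases Sym2.eq_iff.1 hab with h | h <;> grind
  have c2 : F2.card = Q.card := by
    rw [hF2, Finset.card_image_of_injOn]
    intro a _ b _ hab
    rcases Sym2.eq_iff.1 hab with h | h <;> grind
  have c3 : F3.card = Q.card := by
    rw [hF3, Finset.card_image_of_injOn]
    intro a ha b hb hab
    have hab' : s(f a, a) = s(f b, b) := hab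
    rcases Sym2.eq_iff.1 hab' with ⟨_, h⟩ | ⟨h, _⟩
    · exact h
    · exact absurd (h ▸ hfW a ha) (hQW b hb)
  have d1 : Disjoint F F1 := by
    rw [Finset.disjoint_left]
    intro e he he1
    obtain ⟨w, hw, rfl⟩ := Finset.mem_image.1 he1
    exact g4 _ _ he (by rw [hu, (hJ w hw).2])
  have d2 : Disjoint (F ∪ F1) F2 := by
    rw [Finset.disjoint_left]
    intro e he he1
    obtain ⟨w, hw, rfl⟩ := Finset.mem_image.1 he1
    rcases Finset.mem_union.1 he with he | he
    · exact hQW w hw (g3 _ he w (by simp))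
    · obtain ⟨w', hw', h⟩ := Finset.mem_image.1 he
      have : w' = w := by rcases Sym2.eq_iff.1 h with h | h <;> grind
      exact hQW w hw (this ▸ hJW w' hw')
  have d3 : Disjoint (F ∪ F1 ∪ F2) F3 := by
    rw [Finset.disjoint_left]
    intro e he he1
    obtain ⟨w, hw, rfl⟩ := Finset.mem_image.1 he1
    rcases Finset.mem_union.1 he with he | he
    · rcases Finset.mem_union.1 he with he | he
      · exact hQW w hw (g3 _ he w (by simp))
      · obtain ⟨w', hw', h⟩ := Finset.mem_image.1 he
        have h' : s(u, w') = s(f w, w) := h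
        rcases Sym2.eq_iff.1 h' with ⟨_, h⟩ | ⟨h, _⟩
        · exact hQW w hw (h ▸ hJW w' hw')
        · exact hQW w hw (h ▸ huW)
    · obtain ⟨w', hw', h⟩ := Finset.mem_image.1 he
      have h' : s(u, w') = s(f w, w) := h
      rcases Sym2.eq_iff.1 h' with ⟨h, _⟩ | ⟨h, _⟩
      · exact (hQ w hw).2.2.1 h.symm
      · exact hQW w hw (h ▸ huW)
  have hcard : (F ∪ F1 ∪ F2 ∪ F3).card = F.card + J.card + Q.card + Q.card := by
    rw [Finset.card_union_of_disjoint d3, Finset.card_union_of_disjoint d2,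
      Finset.card_union_of_disjoint d1, c1, c2, c3]
  have hFi : F.card ≤ i * (s + 1) := hc.trans (Nat.mul_le_mul_left _ hUc)
  have hle : (F ∪ F1 ∪ F2 ∪ F3).card ≤ k := by
    rw [hcard]
    rcases Q.eq_empty_or_nonempty with hQe | hQe
    · have : (s + 1) * (i + 1) ≤ (s + 1) * t := Nat.mul_le_mul_left _ hit
      simp only [hQe, Finset.card_empty] at hs ⊢
      nlinarith
    · have : (s + 1) * (i + 2) ≤ (s + 1) * t := Nat.mul_le_mul_left _ (hQt hQe)
      nlinarith
  refine bes_extend G k s hfree x hx (k - (F ∪ F1 ∪ F2 ∪ F3).card) (F ∪ F1 ∪ F2 ∪ F3) (W ∪ Q) ?_ ?_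
    (by simp [g1]) (by omega) ?_
  · refine Finset.union_subset (Finset.union_subset (Finset.union_subset g2 ?_) ?_) ?_
    · intro e he
      obtain ⟨p, hp, rfl⟩ := Finset.mem_image.1 he
      simpa using (hJ p hp).1
    · intro e he
      obtain ⟨p, hp, rfl⟩ := Finset.mem_image.1 he
      simpa using (hQ p hp).1
    · intro e he
      obtain ⟨p, hp, rfl⟩ := Finset.mem_image.1 he
      simpa using (hQ p hp).2.2.2.1
  · intro e he a ha
    simp only [Finset.mem_union] at he
    rcases he with ((he | he) | he) | he
    · exact Finset.mem_union_left _ (g3 e he a ha)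
    · obtain ⟨p, hp, rfl⟩ := Finset.mem_image.1 he
      rcases Sym2.mem_iff.1 ha with rfl | rfl
      · simp [huW]
      · simp [hJW _ hp]
    · obtain ⟨p, hp, rfl⟩ := Finset.mem_image.1 he
      rcases Sym2.mem_iff.1 ha with rfl | rfl
      · simp [huW]
      · simp [hp]
    · obtain ⟨p, hp, rfl⟩ := Finset.mem_image.1 he
      rcases Sym2.mem_iff.1 ha with rfl | rfl
      · simp [hfW _ hp]
      · simp [hp]
  · have := Finset.card_union_le W Q
    rw [hcard]; omega

lemma bes_excess {V : Type*} [Fintype V] [DecidableEq V] (G : SimpleGraph V)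
    [DecidableRel G.Adj] (l : V → ℕ) (x : V) (i t k s : ℕ) (hit : i + 1 ≤ t)
    (h0 : ∀ u, l u = 0 ↔ u = x)
    (hp : ∀ u j, l u = j + 1 → j < t → ∃ p, G.Adj p u ∧ l p = j)
    (hk : (s + 1) * t ≤ k) (hx : k ≤ G.degree x)
    (hfree : ∀ F ⊆ G.edgeFinset, F.card = k → ∀ W : Finset V, (∀ e ∈ F, ∀ a ∈ e, a ∈ W) →
      k + 2 ≤ W.card + s)
    (u : V) (hu : l u = i) (J Q : Finset V) (hJ : ∀ w ∈ J, G.Adj u w ∧ l w = i)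
    (hQ : ∀ w ∈ Q, G.Adj u w ∧ l w = i + 1 ∧ ∃ p, p ≠ u ∧ G.Adj p w ∧ l p = i)
    (hQt : Q.Nonempty → i + 2 ≤ t) : J.card + Q.card < s := by
  by_contra hcon
  have : ∀ w, ∃ p, w ∈ Q → p ≠ u ∧ G.Adj p w ∧ l p = i := by
    intro w
    by_cases hw : w ∈ Q
    · obtain ⟨p, hp⟩ := (hQ w hw).2.2
      exact ⟨p, fun _ => hp⟩
    · exact ⟨u, fun h => absurd h hw⟩
  choose f hf using this
  obtain ⟨J', hJ', hJc⟩ := Finset.exists_subset_card_eq (show min s J.card ≤ J.card by omega)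
  obtain ⟨Q', hQ', hQc⟩ := Finset.exists_subset_card_eq
    (show s - min s J.card ≤ Q.card by omega)
  exact bes_excess_eq G l x i t k s hit h0 hp hk hx hfree u hu J' Q' (fun w hw => hJ w (hJ' hw)) f
    (fun w hw => ⟨(hQ w (hQ' hw)).1, (hQ w (hQ' hw)).2.1, hf w (hQ' hw)⟩)
    (fun h => hQt (h.mono hQ')) (by omega)

lemma bes_core {V : Type*} [Fintype V] [DecidableEq V] (G : SimpleGraph V)
    [DecidableRel G.Adj] (l : V → ℕ) (x : V) (t k s δ : ℕ) (ht : 1 ≤ t)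
    (h0 : ∀ u, l u = 0 ↔ u = x)
    (hadj : ∀ a b, G.Adj a b → l b ≤ l a + 1)
    (hp : ∀ u j, l u = j + 1 → j < t → ∃ p, G.Adj p u ∧ l p = j)
    (hk : (s + 1) * t ≤ k) (hkδ : k ≤ δ) (hx : δ ≤ G.degree x)
    (hdeg : ∀ a b, G.Adj a b → δ ≤ G.degree a)
    (hfree : ∀ F ⊆ G.edgeFinset, F.card = k → ∀ W : Finset V, (∀ e ∈ F, ∀ a ∈ e, a ∈ W) →
      k + 2 ≤ W.card + s) :
    (δ - s) ^ t ≤ s * Fintype.card V := by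
  classical
  have hxk : k ≤ G.degree x := hkδ.trans hx
  let B : ℕ → V → Finset V := fun i w => (G.neighborFinset w).filter (fun p => l p + 1 = i)
  let M : ℕ → Finset V := fun i => Finset.univ.filter (fun w => l w = i ∧ (B i w).card ≤ 1)
  let L : ℕ → Finset V := fun i => Finset.univ.filter (fun w => l w = i)
  have hdegl : ∀ u i, l u = i → i ≤ t → δ ≤ G.degree u := by
    intro u i hu hi
    cases i with
    | zero => rw [(h0 u).1 hu]; exact hx
    | succ j =>
      obtain ⟨p, h1, _⟩ := hp u j hu (by omega)
      exact hdeg _ _ h1.symm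
  -- forward count
  have hfwd : ∀ i, i + 1 ≤ t → ∀ u ∈ M i, ∀ Q : Finset V,
      (∀ w ∈ Q, G.Adj u w ∧ l w = i + 1 ∧ ∃ p, p ≠ u ∧ G.Adj p w ∧ l p = i) →
      (Q.Nonempty → i + 2 ≤ t) →
      δ - s ≤ (((G.neighborFinset u).filter (fun w => l w = i + 1)) \ Q).card := by
    intro i hi u hu Q hQ hQt
    obtain ⟨hul, hub⟩ : l u = i ∧ (B i u).card ≤ 1 := by simpa [M] using hu
    have h1 := bes_excess G l x i t k s hi h0 hp hk hxk hfree u hul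
      ((G.neighborFinset u).filter (fun w => l w = i)) Q (by simp) hQ hQt
    have h2 := hdegl u i hul (by omega)
    have h3 : G.neighborFinset u ⊆ B i u ∪ (G.neighborFinset u).filter (fun w => l w = i) ∪
        Q ∪ (((G.neighborFinset u).filter (fun w => l w = i + 1)) \ Q) := by
      intro w hw
      have ha : G.Adj u w := by simpa using hw
      have := hadj _ _ ha
      have := hadj _ _ ha.symm
      simp only [Finset.mem_union, Finset.mem_sdiff, Finset.mem_filter, B, hw, true_and]
      by_cases hwQ : w ∈ Q
      · simp [hwQ]
      · simp only [hwQ, not_false_eq_true, and_true, or_false]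
        omega
    have h4 := Finset.card_le_card h3
    rw [G.card_neighborFinset_eq_degree] at h4
    have h5 := Finset.card_union_le (B i u ∪ (G.neighborFinset u).filter (fun w => l w = i) ∪ Q)
      (((G.neighborFinset u).filter (fun w => l w = i + 1)) \ Q)
    have h6 := Finset.card_union_le (B i u ∪ (G.neighborFinset u).filter (fun w => l w = i)) Q
    have h7 := Finset.card_union_le (B i u) ((G.neighborFinset u).filter (fun w => l w = i))
    omega
  have hM : ∀ i, i + 1 ≤ t → (δ - s) ^ i ≤ (M i).card := by
    intro i
    induction i with
    | zero =>
      intro _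
      have : x ∈ M 0 := by simp [M, B, (h0 x).2 rfl]
      simpa using Finset.card_pos.2 ⟨x, this⟩
    | succ i ih =>
      intro hi
      have h := Finset.card_mul_le_card_mul (s := M i) (t := M (i + 1)) (m := δ - s) (n := 1)
        G.Adj ?_ ?_
      · have := Nat.mul_le_mul_right (δ - s) (ih (by omega))
        rw [pow_succ]; omega
      · intro u hu
        have hul : l u = i := by
          have : l u = i ∧ (B i u).card ≤ 1 := by simpa [M] using hu
          exact this.1
        refine (hfwd i (by omega) u hu (((G.neighborFinset u).filter (fun w => l w = i + 1 ∧
          ∃ p, p ≠ u ∧ G.Adj p w ∧ l p = i))) (by simp) (by omega)).trans ?_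
        apply Finset.card_le_card
        intro w hw
        simp only [Finset.mem_sdiff, Finset.mem_filter, SimpleGraph.mem_neighborFinset,
          not_and, not_exists] at hw
        obtain ⟨⟨ha, hl⟩, hn⟩ := hw
        simp only [Finset.bipartiteAbove, Finset.mem_filter, M, Finset.mem_univ, true_and]
        refine ⟨⟨hl, ?_⟩, ha⟩
        rw [Finset.card_le_one]
        have key : ∀ p ∈ B (i + 1) w, p = u := by
          intro p hpB
          simp only [B, Finset.mem_filter, SimpleGraph.mem_neighborFinset] at hpB
          by_contra hpu
          exact hn ha hl p hpu hpB.1.symm (by omega)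
        intro a ha b hb
        rw [key a ha, key b hb]
      · intro w hw
        have hw' : l w = i + 1 ∧ (B (i + 1) w).card ≤ 1 := by simpa [M] using hw
        refine le_trans (Finset.card_le_card ?_) hw'.2
        intro p hp
        simp only [Finset.bipartiteBelow, Finset.mem_filter, M, Finset.mem_univ, true_and] at hp
        simp only [B, Finset.mem_filter, SimpleGraph.mem_neighborFinset]
        exact ⟨hp.2.symm, by omega⟩
  obtain ⟨i, rfl⟩ : ∃ i, t = i + 1 := ⟨t - 1, by omega⟩
  have h := Finset.card_mul_le_card_mul (s := M i) (t := L (i + 1)) (m := δ - s) (n := s)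
    G.Adj ?_ ?_
  · have h1 := Nat.mul_le_mul_right (δ - s) (hM i le_rfl)
    have h2 : (L (i + 1)).card ≤ Fintype.card V := Finset.card_le_univ _
    have h3 := Nat.mul_le_mul_right s h2
    rw [pow_succ, mul_comm s]; omega
  · intro u hu
    refine (hfwd i le_rfl u hu ∅ (by simp) (by simp)).trans ?_
    apply Finset.card_le_card
    intro w hw
    simp only [Finset.mem_sdiff, Finset.mem_filter, SimpleGraph.mem_neighborFinset] at hw
    simp [Finset.bipartiteAbove, L, hw.1.1, hw.1.2]
  · intro y hy
    refine bes_indeg G l x i (i + 1) k s le_rfl h0 hp hk hxk hfree y (by simpa [L] using hy) _ ?_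
    intro p hp
    simp only [Finset.bipartiteBelow, Finset.mem_filter, M, Finset.mem_univ, true_and] at hp
    exact ⟨hp.2, hp.1.1⟩

lemma bes_core' {V : Type*} [Fintype V] [DecidableEq V] (G : SimpleGraph V)
    [DecidableRel G.Adj] (x : V) (t k s δ : ℕ) (ht : 1 ≤ t)
    (hk : (s + 1) * t ≤ k) (hkδ : k ≤ δ) (hx : δ ≤ G.degree x)
    (hdeg : ∀ a b, G.Adj a b → δ ≤ G.degree a)
    (hfree : ∀ F ⊆ G.edgeFinset, F.card = k → ∀ W : Finset V, (∀ e ∈ F, ∀ a ∈ e, a ∈ W) →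
      k + 2 ≤ W.card + s) :
    (δ - s) ^ t ≤ s * Fintype.card V := by
  classical
  refine bes_core G (fun u => if G.Reachable x u then G.dist x u else t + 1) x t k s δ ht ?_ ?_ ?_
    hk hkδ hx hdeg hfree
  · intro u
    by_cases h : G.Reachable x u
    · simp only [h, if_true]
      rw [h.dist_eq_zero_iff, eq_comm]
    · simp only [h, if_false]
      constructor
      · intro h; omega
      · rintro rfl; exact absurd (SimpleGraph.Reachable.refl _) h
  · intro a b hab
    by_cases h : G.Reachable x a
    · have h' : G.Reachable x b := h.trans hab.reachable
      simp only [h, h', if_true]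
      obtain ⟨w, hw⟩ := h.exists_walk_length_eq_dist
      have := SimpleGraph.dist_le (w.concat hab)
      rw [SimpleGraph.Walk.length_concat] at this
      omega
    · have h' : ¬ G.Reachable x b := fun h' => h (h'.trans hab.symm.reachable)
      simp only [h, h', if_false]; omega
  · intro u j hu hj
    by_cases h : G.Reachable x u
    · simp only [h, if_true] at hu
      obtain ⟨w, hw⟩ := h.symm.exists_walk_length_eq_dist
      rw [SimpleGraph.dist_comm, hu] at hw
      cases w with
      | nil => simp at hw
      | cons hadj w =>
        rename_i p
        simp only [SimpleGraph.Walk.length_cons] at hw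
        have hr : G.Reachable x p := w.reachable.symm
        refine ⟨p, hadj.symm, ?_⟩
        simp only [hr, if_true]
        have h1 := SimpleGraph.dist_le w.reverse
        rw [SimpleGraph.Walk.length_reverse] at h1
        obtain ⟨w', hw'⟩ := hr.exists_walk_length_eq_dist
        have := SimpleGraph.dist_le (w'.concat hadj.symm)
        rw [SimpleGraph.Walk.length_concat] at this
        omega
    · simp only [h, if_false] at hu
      omega

lemma bes_mindeg {V : Type*} [Fintype V] [DecidableEq V] (G : SimpleGraph V)
    [DecidableRel G.Adj] (d : ℕ) (hE : d * Fintype.card V < G.edgeFinset.card) :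
    ∃ W : Finset V, W.Nonempty ∧ ∀ u ∈ W, d < ((G.neighborFinset u).filter (· ∈ W)).card := by
  classical
  let EE : Finset V → Finset (Sym2 V) := fun W => G.edgeFinset.filter (fun e => ∀ a ∈ e, a ∈ W)
  obtain ⟨W, hW, hmin⟩ := Finset.exists_min_image
    ((Finset.univ : Finset (Finset V)).filter (fun W => d * W.card < (EE W).card)) Finset.card
    ⟨Finset.univ, by simpa [EE] using hE⟩
  simp only [Finset.mem_filter, Finset.mem_univ, true_and] at hW hmin
  refine ⟨W, ?_, ?_⟩
  · obtain ⟨e, he⟩ := Finset.card_pos.1 (lt_of_le_of_lt (Nat.zero_le _) hW)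
    induction e with | _ a b
    simp only [EE, Finset.mem_filter] at he
    exact ⟨a, he.2 a (by simp)⟩
  · intro u hu
    by_contra hcon
    have hlt : (W.erase u).card < W.card := Finset.card_erase_lt_of_mem hu
    have h1 : ¬ d * (W.erase u).card < (EE (W.erase u)).card := fun h => by
      have := hmin _ h; omega
    have h2 : EE W ⊆ EE (W.erase u) ∪
        ((G.neighborFinset u).filter (· ∈ W)).image (fun w => s(u, w)) := by
      intro e he
      simp only [EE, Finset.mem_filter] at he
      by_cases hue : u ∈ e
      · obtain ⟨w, rfl⟩ := Sym2.mem_iff_exists.1 hue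
        apply Finset.mem_union_right
        apply Finset.mem_image_of_mem
        simp only [Finset.mem_filter, SimpleGraph.mem_neighborFinset]
        exact ⟨by simpa using he.1, he.2 w (by simp)⟩
      · apply Finset.mem_union_left
        simp only [EE, Finset.mem_filter]
        refine ⟨he.1, fun a ha => Finset.mem_erase.2 ⟨?_, he.2 a ha⟩⟩
        rintro rfl; exact hue ha
    have h3 := (Finset.card_le_card h2).trans (Finset.card_union_le _ _)
    have h4 := (Finset.card_image_le (s := (G.neighborFinset u).filter (· ∈ W))
      (f := fun w => s(u, w)))
    have h5 := Finset.card_erase_add_one hu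
    rw [← h5] at hW
    rw [mul_add, mul_one] at hW
    omega

lemma bes_graph {V : Type*} [Fintype V] [DecidableEq V] (G : SimpleGraph V)
    [DecidableRel G.Adj] (t k s d : ℕ) (ht : 1 ≤ t)
    (hk : (s + 1) * t ≤ k) (hkd : k ≤ d + 1)
    (hfree : ∀ F ⊆ G.edgeFinset, F.card = k → ∀ W : Finset V, (∀ e ∈ F, ∀ a ∈ e, a ∈ W) →
      k + 2 ≤ W.card + s) (hE : d * Fintype.card V < G.edgeFinset.card) :
    (d + 1 - s) ^ t ≤ s * Fintype.card V := by
  classical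
  obtain ⟨W, ⟨x, hx⟩, hW⟩ := bes_mindeg G d hE
  let H : SimpleGraph V :=
    { Adj := fun a b => a ∈ W ∧ b ∈ W ∧ G.Adj a b
      symm := ⟨fun a b h => ⟨h.2.1, h.1, h.2.2.symm⟩⟩
      loopless := ⟨fun a h => G.loopless.irrefl a h.2.2⟩ }
  have hdeg : ∀ a ∈ W, d + 1 ≤ H.degree a := by
    intro a ha
    refine le_trans (Nat.succ_le_of_lt (hW a ha)) ?_
    rw [← H.card_neighborFinset_eq_degree]
    apply Finset.card_le_card
    intro b hb
    simp only [Finset.mem_filter, SimpleGraph.mem_neighborFinset] at hb ⊢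
    exact ⟨ha, hb.2, hb.1⟩
  refine bes_core' H x t k s (d + 1) ht hk hkd (hdeg x hx) (fun a b h => hdeg a h.1) ?_
  intro F hF
  refine hfree F (hF.trans ?_)
  apply SimpleGraph.edgeFinset_mono
  intro a b h
  exact h.2.2

lemma bes_main (n v k t s d : ℕ) (ht : 1 ≤ t) (hsv : v + s = k + 1)
    (hk : (s + 1) * t ≤ k) (hkd : k ≤ d + 1) (E : Finset (Finset (Fin n)))
    (h2 : ∀ e ∈ E, e.card = 2)
    (hfree : ∀ E' ⊆ E, E'.card = k → (v : ℤ) + 1 ≤ ((E'.biUnion id).card : ℤ))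
    (hE : d * n < E.card) : (d + 1 - s) ^ t ≤ s * n := by
  classical
  let G : SimpleGraph (Fin n) :=
    { Adj := fun a b => a ≠ b ∧ ({a, b} : Finset (Fin n)) ∈ E
      symm := ⟨fun a b h => ⟨h.1.symm, by rw [Finset.pair_comm]; exact h.2⟩⟩
      loopless := ⟨fun a h => h.1 rfl⟩ }
  have htf : ∀ a b : Fin n, (s(a, b)).toFinset = {a, b} := by
    intro a b; ext c; simp
  have hinj : Function.Injective (Sym2.toFinset : Sym2 (Fin n) → Finset (Fin n)) := by
    intro e f h
    apply Sym2.ext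
    intro c
    rw [← Sym2.mem_toFinset, h, Sym2.mem_toFinset]
  have key := bes_graph G t k s d ht hk hkd ?_ ?_
  · simpa using key
  · intro F hF hFc W hW
    have h := hfree (F.image Sym2.toFinset) ?_ ?_
    · have hle : ((F.image Sym2.toFinset).biUnion id).card ≤ W.card := by
        apply Finset.card_le_card
        intro c hc
        simp only [Finset.mem_biUnion, Finset.mem_image, id] at hc
        obtain ⟨_, ⟨e, he, rfl⟩, hc⟩ := hc
        exact hW e he c (Sym2.mem_toFinset.1 hc)
      omega
    · intro e he
      obtain ⟨f, hf, rfl⟩ := Finset.mem_image.1 he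
      have := hF hf
      induction f with | _ a b
      rw [htf]
      have h' : G.Adj a b := by simpa using this
      exact h'.2
    · rw [Finset.card_image_of_injective _ hinj, hFc]
  · rw [Fintype.card_fin]
    refine lt_of_lt_of_le hE ?_
    rw [← Finset.card_image_of_injective G.edgeFinset hinj]
    apply Finset.card_le_card
    intro e he
    obtain ⟨a, b, hab, rfl⟩ := Finset.card_eq_two.1 (h2 e he)
    refine Finset.mem_image.2 ⟨s(a, b), ?_, htf a b⟩
    have : G.Adj a b := ⟨hab, he⟩
    simpa using this

/-- For `2 ≤ v ≤ k` and `C = (k-v+1)^{1/⌊k/(k-v+2)⌋}`, there is a constant `D` such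
that for every positive integer `n`,
`f^{(2)}(n,v,k) < C·n^{1+1/⌊k/(k-v+2)⌋} + (k-v+1)·n + D`. -/
theorem statement7 (v k : ℕ) (C : ℝ)
    (hv : 2 ≤ v) (hvk : v ≤ k)
    (hC : C = ((k - v + 1 : ℕ) : ℝ) ^ ((1 : ℝ) / ((k / (k - v + 2) : ℕ) : ℝ))) :
    ∃ D : ℝ, ∀ n : ℕ, 0 < n →
      (fBES n 2 k (v : ℤ) : ℝ) <
        C * (n : ℝ) ^ ((1 : ℝ) + 1 / ((k / (k - v + 2) : ℕ) : ℝ)) +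
          ((k - v + 1 : ℕ) : ℝ) * (n : ℝ) + D := by
  obtain ⟨s, hs⟩ : ∃ s, s = k - v + 1 := ⟨_, rfl⟩
  obtain ⟨t, ht⟩ : ∃ t, t = k / (k - v + 2) := ⟨_, rfl⟩
  have hs2 : k - v + 2 = s + 1 := by omega
  rw [← ht, ← hs] at hC ⊢
  rw [hs2] at ht
  have ht1 : 1 ≤ t := by
    rw [ht]; exact (Nat.one_le_div_iff (by omega)).2 (by omega)
  have hk : (s + 1) * t ≤ k := by rw [ht]; exact Nat.mul_div_le k (s + 1)
  have hs1 : 1 ≤ s := by omega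
  have ht0 : (t : ℝ) ≠ 0 := by positivity
  refine ⟨2 ^ (k ^ t) + 2, fun n hn => ?_⟩
  have hnR : (0 : ℝ) < n := by exact_mod_cast hn
  set r : ℝ := ((s : ℝ) * n) ^ ((1 : ℝ) / t) with hr
  have hr0 : 0 ≤ r := by positivity
  have hrt : r ^ t = (s : ℝ) * n := by
    rw [hr, one_div]; exact Real.rpow_inv_natCast_pow (by positivity) (by omega)
  have hCn : C * (n : ℝ) ^ ((1 : ℝ) + 1 / (t : ℝ)) = r * n := by
    rw [hC, hr, Real.mul_rpow (by positivity) (by positivity), Real.rpow_add hnR, Real.rpow_one]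
    ring
  rw [hCn]
  have hmem : ∀ m ∈ {m | ∃ E : Finset (Finset (Fin n)),
    (∀ e ∈ E, e.card = 2) ∧
    (∀ E' ⊆ E, E'.card = k → (v : ℤ) + 1 ≤ ((E'.biUnion id).card : ℤ)) ∧ E.card = m},
      (m : ℝ) ≤ r * n + s * n + 2 ^ (k ^ t) := by
    rintro m ⟨E, h2, hfree, rfl⟩
    by_contra hcon
    push Not at hcon
    have hpos : (0 : ℝ) < 2 ^ (k ^ t) := by positivity
    have hrn : 0 ≤ r * n := by positivity
    have hsn : (0 : ℝ) ≤ s * n := by positivity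
    by_cases hnk : n ≤ k ^ t
    · have h1 : E.card ≤ 2 ^ n := by
        have := Finset.card_le_univ E
        simpa using this
      have h3 : (E.card : ℝ) ≤ 2 ^ (k ^ t) := by
        exact_mod_cast h1.trans (Nat.pow_le_pow_right (by norm_num) hnk)
      linarith
    · push Not at hnk
      have hkr : (k : ℝ) ≤ r := by
        by_contra hlt
        push Not at hlt
        have h1 : r ^ t ≤ (k : ℝ) ^ t := pow_le_pow_left₀ hr0 hlt.le t
        have h3 : ((k : ℝ) ^ t) < n := by exact_mod_cast hnk
        have h4 : (n : ℝ) ≤ s * n := by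
          have : (1 : ℝ) ≤ s := by exact_mod_cast hs1
          nlinarith
        linarith
      set d : ℕ := ⌊r⌋₊ + s with hd
      have hd1 : (d : ℝ) ≤ r + s := by
        rw [hd]; push_cast; have := Nat.floor_le hr0; linarith
      have hdk : k ≤ d + 1 := by
        have := Nat.le_floor hkr
        omega
      have hE : d * n < E.card := by
        have : (d : ℝ) * n < E.card := by nlinarith
        exact_mod_cast this
      have key := bes_main n v k t s d ht1 (by omega) hk hdk E h2 hfree hE
      have e1 : d + 1 - s = ⌊r⌋₊ + 1 := by omega
      rw [e1] at key
      have key' : ((⌊r⌋₊ : ℝ) + 1) ^ t ≤ s * n := by exact_mod_cast key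
      have hlt : r ^ t < ((⌊r⌋₊ : ℝ) + 1) ^ t :=
        pow_lt_pow_left₀ (Nat.lt_floor_add_one r) hr0 (by omega)
      linarith
  have hne : {m | ∃ E : Finset (Finset (Fin n)),
    (∀ e ∈ E, e.card = 2) ∧
    (∀ E' ⊆ E, E'.card = k → (v : ℤ) + 1 ≤ ((E'.biUnion id).card : ℤ)) ∧ E.card = m}.Nonempty := by
    refine ⟨0, ∅, by simp, ?_, by simp⟩
    intro E' hE' hc
    rw [Finset.subset_empty.1 hE'] at hc
    simp at hc
    omega
  have hbdd : BddAbove {m | ∃ E : Finset (Finset (Fin n)),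
    (∀ e ∈ E, e.card = 2) ∧
    (∀ E' ⊆ E, E'.card = k → (v : ℤ) + 1 ≤ ((E'.biUnion id).card : ℤ)) ∧ E.card = m} := by
    refine ⟨Fintype.card (Finset (Fin n)), ?_⟩
    rintro m ⟨E, _, _, rfl⟩
    exact Finset.card_le_univ E
  have hfin := hmem _ (Nat.sSup_mem hne hbdd)
  unfold fBES
  push_cast
  linarith
end
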